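/- arXiv:2101.08080 — 7 statements merged into one kernel-verified Lean document; each statement's English description precedes it below -/
import Mathlib

section
/- Assume G satisfies (Reg), (Mono) and (Twist), and let φ : Ω → ℝ be a G-convex function. Let Y₀ ⊆ Y be the set of all y ∈ Y such that G(·,y,λ) supports φ at some point of Ω for some λ ∈ ℝ. Then there exists a function ψ : Y₀ → ℝ such that for all x ∈ Ω, φ(x) = max_{y ∈ Y₀} G(x, y, ψ(y)). In particular, for each y ∈ Y₀ the value λ ∈ ℝ for which G(·,y,λ) supports φ at some point is unique. -/
set_option autoImplicit false

open MeasureTheory Set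

noncomputable section

variable {d N : ℕ}

/-- Proposition 2.8 (dual formulation): a `G`-convex function is, on the set `Y₀` of
indices that support it somewhere, the `G`-transform of a function `ψ`; the supporting
value `λ` of each `y ∈ Y₀` is unique. -/
theorem gconvex_is_Gtransform_on_supporting_set
    (hd : 1 ≤ d) (hN : 1 ≤ N)
    {Ω : Set (EuclideanSpace ℝ (Fin d))} (hΩo : IsOpen Ω) (hΩb : Bornology.IsBounded Ω)
    (y : Fin N → EuclideanSpace ℝ (Fin d)) (hy : Function.Injective y)
    (G : EuclideanSpace ℝ (Fin d) → Fin N → ℝ → ℝ)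
    (Gx : EuclideanSpace ℝ (Fin d) → Fin N → ℝ → EuclideanSpace ℝ (Fin d))
    (Gv : EuclideanSpace ℝ (Fin d) → Fin N → ℝ → ℝ)
    (hGx : ∀ x ∈ Ω, ∀ (i : Fin N) (v : ℝ), HasGradientAt (fun x' => G x' i v) (Gx x i v) x)
    (hGv : ∀ x ∈ Ω, ∀ (i : Fin N) (v : ℝ), HasDerivAt (fun v' => G x i v') (Gv x i v) v)
    (hGxc : ∀ i : Fin N, ContinuousOn (fun q : EuclideanSpace ℝ (Fin d) × ℝ => Gx q.1 i q.2) (Ω ×ˢ Set.univ))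
    (hGvc : ∀ i : Fin N, ContinuousOn (fun q : EuclideanSpace ℝ (Fin d) × ℝ => Gv q.1 i q.2) (Ω ×ˢ Set.univ))
    (hReg : ∀ α β : ℝ, α < β → ∃ C : ℝ, ∀ x ∈ Ω, ∀ i : Fin N, ∀ v ∈ Set.Icc α β, ‖Gx x i v‖ ≤ C)
    (hMono : ∀ x ∈ Ω, ∀ (i : Fin N) (v : ℝ), Gv x i v < 0)
    (hTwist : ∀ x ∈ Ω, Function.Injective fun q : Fin N × ℝ => (G x q.1 q.2, Gx x q.1 q.2))
    (φ : EuclideanSpace ℝ (Fin d) → ℝ)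
    (hφ : ∀ x₀ ∈ Ω, ∃ (i : Fin N) (lam : ℝ),
      (∀ x ∈ Ω, G x i lam ≤ φ x) ∧ φ x₀ = G x₀ i lam)
    (Y₀ : Set (Fin N))
    (hY₀ : Y₀ = {i : Fin N | ∃ lam : ℝ, ∃ x₀ ∈ Ω,
      (∀ x ∈ Ω, G x i lam ≤ φ x) ∧ φ x₀ = G x₀ i lam}) :
    (∃ ψ : Fin N → ℝ, ∀ x ∈ Ω,
      IsGreatest ((fun i => G x i (ψ i)) '' Y₀) (φ x)) ∧
    (∀ i ∈ Y₀, ∀ lam₁ lam₂ : ℝ,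
      (∃ x₀ ∈ Ω, (∀ x ∈ Ω, G x i lam₁ ≤ φ x) ∧ φ x₀ = G x₀ i lam₁) →
      (∃ x₀ ∈ Ω, (∀ x ∈ Ω, G x i lam₂ ≤ φ x) ∧ φ x₀ = G x₀ i lam₂) →
      lam₁ = lam₂) := by
  have anti : ∀ x ∈ Ω, ∀ i : Fin N, StrictAnti (fun v => G x i v) := by
    intro x hx i
    apply strictAnti_of_deriv_neg
    intro v
    rw [(hGv x hx i v).deriv]
    exact hMono x hx i v
  have uniq : ∀ i : Fin N, ∀ lam₁ lam₂ : ℝ,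
      (∃ x₀ ∈ Ω, (∀ x ∈ Ω, G x i lam₁ ≤ φ x) ∧ φ x₀ = G x₀ i lam₁) →
      (∃ x₀ ∈ Ω, (∀ x ∈ Ω, G x i lam₂ ≤ φ x) ∧ φ x₀ = G x₀ i lam₂) →
      lam₁ = lam₂ := by
    rintro i a b ⟨x, hx, h1, h2⟩ ⟨z, hz, h3, h4⟩
    apply le_antisymm
    · apply (anti x hx i).le_iff_ge.mp
      have := h3 x hx
      rw [h2] at this
      exact this
    · apply (anti z hz i).le_iff_ge.mp
      have := h1 z hz
      rw [h4] at this
      exact this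
  refine ⟨?_, fun i _ => uniq i⟩
  subst hY₀
  have hc : ∀ i : Fin N, ∃ c : ℝ, (∃ lam : ℝ, ∃ x₀ ∈ Ω,
      (∀ x ∈ Ω, G x i lam ≤ φ x) ∧ φ x₀ = G x₀ i lam) →
      ∃ x₀ ∈ Ω, (∀ x ∈ Ω, G x i c ≤ φ x) ∧ φ x₀ = G x₀ i c := by
    intro i
    by_cases h : ∃ lam : ℝ, ∃ x₀ ∈ Ω, (∀ x ∈ Ω, G x i lam ≤ φ x) ∧ φ x₀ = G x₀ i lam
    · obtain ⟨c, hc⟩ := h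
      exact ⟨c, fun _ => hc⟩
    · exact ⟨0, fun h' => absurd h' h⟩
  choose ψ hψ using hc
  refine ⟨ψ, fun x hx => ⟨?_, ?_⟩⟩
  · obtain ⟨i, lam, h1, h2⟩ := hφ x hx
    refine ⟨i, ⟨lam, x, hx, h1, h2⟩, ?_⟩
    have e := uniq i _ _ (hψ i ⟨lam, x, hx, h1, h2⟩) ⟨x, hx, h1, h2⟩
    simp only [e, h2]
  · rintro _ ⟨i, hi, rfl⟩
    obtain ⟨z, hz, h, _⟩ := hψ i hi
    exact h x hx
end
end

section
/- Assume G satisfies (Reg), (Mono) and (Twist), and let φ : Ω → ℝ be a G-convex function such that every y ∈ Y supports φ at some point of Ω (i.e., for each y ∈ Y there exist x₀ ∈ Ω and λ ∈ ℝ such that G(·,y,λ) supports φ at x₀). Then there exists ψ : Y → ℝ such that φ = ψ^G, where ψ^G(x) = max_{y ∈ Y} G(x, y, ψ(y)). -/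
set_option autoImplicit false

open MeasureTheory Set

noncomputable section

variable {d N : ℕ}

/-- Corollary 2.9: a `G`-convex function supported by every `y ∈ Y` is the
`G`-transform `ψ^G` of some `ψ : Y → ℝ`. -/
theorem gconvex_is_Gtransform
    (hd : 1 ≤ d) (hN : 1 ≤ N)
    {Ω : Set (EuclideanSpace ℝ (Fin d))} (hΩo : IsOpen Ω) (hΩb : Bornology.IsBounded Ω)
    (y : Fin N → EuclideanSpace ℝ (Fin d)) (hy : Function.Injective y)
    (G : EuclideanSpace ℝ (Fin d) → Fin N → ℝ → ℝ)
    (Gx : EuclideanSpace ℝ (Fin d) → Fin N → ℝ → EuclideanSpace ℝ (Fin d))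
    (Gv : EuclideanSpace ℝ (Fin d) → Fin N → ℝ → ℝ)
    (hGx : ∀ x ∈ Ω, ∀ (i : Fin N) (v : ℝ), HasGradientAt (fun x' => G x' i v) (Gx x i v) x)
    (hGv : ∀ x ∈ Ω, ∀ (i : Fin N) (v : ℝ), HasDerivAt (fun v' => G x i v') (Gv x i v) v)
    (hGxc : ∀ i : Fin N, ContinuousOn (fun q : EuclideanSpace ℝ (Fin d) × ℝ => Gx q.1 i q.2) (Ω ×ˢ Set.univ))
    (hGvc : ∀ i : Fin N, ContinuousOn (fun q : EuclideanSpace ℝ (Fin d) × ℝ => Gv q.1 i q.2) (Ω ×ˢ Set.univ))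
    (hReg : ∀ α β : ℝ, α < β → ∃ C : ℝ, ∀ x ∈ Ω, ∀ i : Fin N, ∀ v ∈ Set.Icc α β, ‖Gx x i v‖ ≤ C)
    (hMono : ∀ x ∈ Ω, ∀ (i : Fin N) (v : ℝ), Gv x i v < 0)
    (hTwist : ∀ x ∈ Ω, Function.Injective fun q : Fin N × ℝ => (G x q.1 q.2, Gx x q.1 q.2))
    (φ : EuclideanSpace ℝ (Fin d) → ℝ)
    (hφ : ∀ x₀ ∈ Ω, ∃ (i : Fin N) (lam : ℝ),
      (∀ x ∈ Ω, G x i lam ≤ φ x) ∧ φ x₀ = G x₀ i lam)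
    (hall : ∀ i : Fin N, ∃ lam : ℝ, ∃ x₀ ∈ Ω,
      (∀ x ∈ Ω, G x i lam ≤ φ x) ∧ φ x₀ = G x₀ i lam) :
    ∃ ψ : Fin N → ℝ, ∀ x ∈ Ω,
      IsGreatest (Set.range fun i => G x i (ψ i)) (φ x) := by
  have hanti : ∀ x ∈ Ω, ∀ i : Fin N, StrictAnti (fun v => G x i v) := by
    intro x hx i
    apply strictAnti_of_deriv_neg
    intro v
    rw [(hGv x hx i v).deriv]
    exact hMono x hx i v
  choose ψ x₀ hx₀ hle heq using hall
  refine ⟨ψ, fun x hx => ⟨?_, ?_⟩⟩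
  · obtain ⟨i, lam, h1, h2⟩ := hφ x hx
    have ha : ψ i ≤ lam := by
      have h := h1 (x₀ i) (hx₀ i)
      rw [heq i] at h
      exact (hanti _ (hx₀ i) i).le_iff_ge.mp h
    have hb : lam ≤ ψ i := by
      have h := hle i x hx
      rw [h2] at h
      exact (hanti _ hx i).le_iff_ge.mp h
    refine ⟨i, ?_⟩
    have hc : ψ i = lam := le_antisymm ha hb
    simp only [hc, h2]
  · rintro _ ⟨i, rfl⟩
    exact hle i x hx
end
end

section
/- Assume G is continuously differentiable in x and satisfies (Mono) and (Twist). Then for every ψ ∈ ℝ^N and all distinct indices i ≠ j, the intersection Lagᵢ(ψ) ∩ Lag_j(ψ) of two generalized Laguerre cells has d-dimensional Lebesgue measure zero. In particular the generalized Laguerre cells (Lagᵢ(ψ))_{1 ≤ i ≤ N} partition Ω up to a Lebesgue-negligible set. -/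
set_option autoImplicit false

open MeasureTheory Set

noncomputable section

variable {d N : ℕ}

/-- Generalized Laguerre cell associated to `ψ` and index `i`. -/
def Lag (Ω : Set (EuclideanSpace ℝ (Fin d))) (G : EuclideanSpace ℝ (Fin d) → Fin N → ℝ → ℝ)
    (ψ : Fin N → ℝ) (i : Fin N) : Set (EuclideanSpace ℝ (Fin d)) :=
  {x ∈ Ω | ∀ j, G x j (ψ j) ≤ G x i (ψ i)}

/-- Interface `Γᵢⱼ(ψ)` between two cells. -/
def Gam (Ω : Set (EuclideanSpace ℝ (Fin d))) (G : EuclideanSpace ℝ (Fin d) → Fin N → ℝ → ℝ)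
    (ψ : Fin N → ℝ) (i j : Fin N) : Set (EuclideanSpace ℝ (Fin d)) :=
  {x ∈ Ω | G x i (ψ i) = G x j (ψ j)}

/-- The mass function `H(ψ) = (μ(Lagᵢ(ψ)))ᵢ` where `μ` has density `ρ`. -/
def Hfun (Ω : Set (EuclideanSpace ℝ (Fin d))) (G : EuclideanSpace ℝ (Fin d) → Fin N → ℝ → ℝ)
    (ρ : EuclideanSpace ℝ (Fin d) → ℝ) (ψ : Fin N → ℝ) : Fin N → ℝ :=
  fun i => ((volume.withDensity fun x => ENNReal.ofReal (ρ x)) (Lag Ω G ψ i)).toReal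

theorem null_aux (S : Set (EuclideanSpace ℝ (Fin d))) (f : EuclideanSpace ℝ (Fin d) → ℝ)
    (g : EuclideanSpace ℝ (Fin d) → EuclideanSpace ℝ (Fin d))
    (hf : ∀ x ∈ S, HasGradientAt f (g x) x) (h0 : ∀ x ∈ S, f x = 0)
    (hg : ∀ x ∈ S, g x ≠ 0) : volume S = 0 := by
  let A : EuclideanSpace ℝ (Fin d) → (EuclideanSpace ℝ (Fin d) →L[ℝ] EuclideanSpace ℝ (Fin d)) :=
    fun x => ContinuousLinearMap.id ℝ _ -
      ((InnerProductSpace.toDual ℝ _ (g x)).smulRight ((inner ℝ (g x) (g x))⁻¹ • g x))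
  have hA : ∀ x ∈ S, HasFDerivWithinAt (fun z => z) (A x) S x := by
    intro x hx
    have h1 : HasFDerivAt (fun z => z - f z • ((inner ℝ (g x) (g x))⁻¹ • g x)) (A x) x :=
      (hasFDerivAt_id x).sub ((hf x hx).hasFDerivAt.smul_const _)
    refine h1.hasFDerivWithinAt.congr (fun z hz => ?_) ?_
    · simp [h0 z hz]
    · simp [h0 x hx]
  have hdet : ∀ x ∈ S, (A x).det = 0 := by
    intro x hx
    have hne : inner ℝ (g x) (g x) ≠ 0 := inner_self_ne_zero.mpr (hg x hx)
    by_contra hd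
    have hk : (A x) (g x) = 0 := by
      simp only [A, ContinuousLinearMap.sub_apply, ContinuousLinearMap.smulRight_apply,
        InnerProductSpace.toDual_apply_apply, ContinuousLinearMap.id_apply, smul_smul]
      rw [mul_inv_cancel₀ hne, one_smul, sub_self]
    let e := LinearMap.equivOfDetNeZero (A x : EuclideanSpace ℝ (Fin d) →ₗ[ℝ] _) hd
    exact hg x hx (e.injective (show e (g x) = e 0 by rw [map_zero]; exact hk))
  have := addHaar_image_eq_zero_of_det_fderivWithin_eq_zero volume hA hdet
  simpa using this

/-- Two distinct generalized Laguerre cells intersect in a Lebesgue-negligible set;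
in particular the Laguerre cells partition `Ω` up to a negligible set. -/
theorem laguerre_cells_ae_disjoint
    (hd : 1 ≤ d) (hN : 1 ≤ N)
    {Ω : Set (EuclideanSpace ℝ (Fin d))} (hΩo : IsOpen Ω) (hΩb : Bornology.IsBounded Ω)
    (y : Fin N → EuclideanSpace ℝ (Fin d)) (hy : Function.Injective y)
    (G : EuclideanSpace ℝ (Fin d) → Fin N → ℝ → ℝ)
    (Gx : EuclideanSpace ℝ (Fin d) → Fin N → ℝ → EuclideanSpace ℝ (Fin d))
    (Gv : EuclideanSpace ℝ (Fin d) → Fin N → ℝ → ℝ)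
    (hGx : ∀ x ∈ Ω, ∀ (i : Fin N) (v : ℝ), HasGradientAt (fun x' => G x' i v) (Gx x i v) x)
    (hGv : ∀ x ∈ Ω, ∀ (i : Fin N) (v : ℝ), HasDerivAt (fun v' => G x i v') (Gv x i v) v)
    (hGxc : ∀ i : Fin N, ContinuousOn (fun q : EuclideanSpace ℝ (Fin d) × ℝ => Gx q.1 i q.2) (Ω ×ˢ Set.univ))
    (hGvc : ∀ i : Fin N, ContinuousOn (fun q : EuclideanSpace ℝ (Fin d) × ℝ => Gv q.1 i q.2) (Ω ×ˢ Set.univ))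
    (hMono : ∀ x ∈ Ω, ∀ (i : Fin N) (v : ℝ), Gv x i v < 0)
    (hTwist : ∀ x ∈ Ω, Function.Injective fun q : Fin N × ℝ => (G x q.1 q.2, Gx x q.1 q.2))
    (ψ : Fin N → ℝ) :
    (∀ i j : Fin N, i ≠ j → volume (Lag Ω G ψ i ∩ Lag Ω G ψ j) = 0) ∧
    (⋃ i : Fin N, Lag Ω G ψ i) = Ω := by
  constructor
  · intro i j hij
    apply null_aux _ (fun x => G x i (ψ i) - G x j (ψ j))
      (fun x => Gx x i (ψ i) - Gx x j (ψ j))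
    · rintro x ⟨hx, -⟩
      have := (hGx x hx.1 i (ψ i)).hasFDerivAt.sub (hGx x hx.1 j (ψ j)).hasFDerivAt
      rw [← map_sub] at this
      exact this
    · rintro x ⟨hx, hx'⟩
      exact sub_eq_zero.mpr (le_antisymm (hx'.2 i) (hx.2 j))
    · rintro x ⟨hx, hx'⟩ h
      have := @hTwist x hx.1 (i, ψ i) (j, ψ j)
        (Prod.ext (le_antisymm (hx'.2 i) (hx.2 j)) (sub_eq_zero.mp h))
      exact hij (congrArg Prod.fst this)
  · ext x
    simp only [mem_iUnion]
    constructor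
    · rintro ⟨i, hi⟩
      exact hi.1
    · intro hx
      haveI : Nonempty (Fin N) := ⟨⟨0, hN⟩⟩
      obtain ⟨i, hi⟩ := Finite.exists_max (fun i : Fin N => G x i (ψ i))
      exact ⟨i, hx, hi⟩
end
end

section
/- Assume G ∈ C²(Ω × Y × ℝ) satisfies (Reg), (Mono), (Twist), (Gen_Ω) and (Gen_∂X), that X ⊆ Ω is compact and ρ is a continuous probability density supported in X. Then for all i ≠ j in {1,…,N}, the function Hᵢⱼ : ℝ^N → ℝ defined by Hᵢⱼ(ψ) = ∫_{Lagᵢ(ψ) ∩ Lag_j(ψ)} ρ(x) · |∂ᵥG(x,yᵢ,ψᵢ)| / ‖∇ₓG(x,y_j,ψ_j) − ∇ₓG(x,yᵢ,ψᵢ)‖ dℋ^{d−1}(x) is continuous on ℝ^N. -/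
set_option autoImplicit false

open MeasureTheory Set

noncomputable section

variable {d N : ℕ}

open Filter Topology ENNReal NNReal

theorem haus_le_of_expand {E F : Type*} [MetricSpace E] [MeasurableSpace E] [BorelSpace E]
    [MetricSpace F] [MeasurableSpace F] [BorelSpace F]
    (T : E → F) (S : Set E) (K : ℝ≥0) (p : ℝ) (hp : 0 ≤ p)
    (h : ∀ x ∈ S, ∀ y ∈ S, dist x y ≤ K * dist (T x) (T y)) :
    μH[p] S ≤ (K : ℝ≥0∞) ^ p * μH[p] (T '' S) := by
  classical
  rcases S.eq_empty_or_nonempty with rfl | ⟨x0, hx0⟩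
  · simp
  have : Nonempty E := ⟨x0⟩
  have hinj : InjOn T S := by
    intro x hx y hy hxy
    have := h x hx y hy
    rw [hxy, dist_self, mul_zero] at this
    exact dist_le_zero.1 this
  have hl : LipschitzOnWith K (Function.invFunOn T S) (T '' S) := by
    apply LipschitzOnWith.of_dist_le_mul
    rintro _ ⟨x, hx, rfl⟩ _ ⟨y, hy, rfl⟩
    rw [hinj.leftInvOn_invFunOn hx, hinj.leftInvOn_invFunOn hy]
    exact h x hx y hy
  have h2 := hl.hausdorffMeasure_image_le hp
  rwa [hinj.invFunOn_image Subset.rfl] at h2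

theorem transport_le {E : Type*} [MetricSpace E] [MeasurableSpace E] [BorelSpace E]
    (T : E → E) (A : Set E) (hA : MeasurableSet A) (K : ℝ≥0) (p : ℝ) (hp : 0 ≤ p)
    (h1 : ∀ x ∈ A, ∀ y ∈ A, dist (T x) (T y) ≤ K * dist x y)
    (h2 : ∀ x ∈ A, ∀ y ∈ A, dist x y ≤ K * dist (T x) (T y))
    (h : E → ℝ≥0∞) (hm : Measurable h) (hs : Function.support h ⊆ T '' A) :
    ∫⁻ x, h x ∂μH[p] ≤ (K : ℝ≥0∞) ^ p * ∫⁻ x in A, h (T x) ∂μH[p] ∧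
    ∫⁻ x in A, h (T x) ∂μH[p] ≤ (K : ℝ≥0∞) ^ p * ∫⁻ x, h x ∂μH[p] := by
  have hl : LipschitzOnWith K T A := LipschitzOnWith.of_dist_le_mul h1
  have hTm : AEMeasurable T ((μH[p] : Measure E).restrict A) := hl.continuousOn.aemeasurable hA
  have hmap : ∫⁻ x in A, h (T x) ∂μH[p] = ∫⁻ x, h x ∂(Measure.map T ((μH[p] : Measure E).restrict A)) :=
    (lintegral_map' hm.aemeasurable hTm).symm
  have key : ∀ B, MeasurableSet B → Measure.map T ((μH[p] : Measure E).restrict A) B = μH[p] (A ∩ T ⁻¹' B) := by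
    intro B hB
    rw [Measure.map_apply_of_aemeasurable hTm hB, Measure.restrict_apply' hA, inter_comm]
  rw [hmap]
  constructor
  · have hle : (μH[p] : Measure E).restrict (T '' A) ≤
        ((K : ℝ≥0∞) ^ p) • Measure.map T ((μH[p] : Measure E).restrict A) := by
      refine Measure.le_iff.2 fun B hB => ?_
      rw [Measure.restrict_apply hB, Measure.smul_apply, key B hB, inter_comm, image_inter_preimage .. |>.symm]
      exact (hl.mono inter_subset_left).hausdorffMeasure_image_le hp
    have hsm : MeasurableSet (Function.support h) := measurableSet_support hm
    calc ∫⁻ x, h x ∂μH[p] = ∫⁻ x in Function.support h, h x ∂μH[p] := by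
          rw [← lintegral_indicator hsm, indicator_support]
      _ ≤ ∫⁻ x in T '' A, h x ∂μH[p] := lintegral_mono' (Measure.restrict_mono hs le_rfl) le_rfl
      _ ≤ _ := lintegral_mono' hle le_rfl
      _ = _ := by rw [lintegral_smul_measure, smul_eq_mul]
  · have hle : Measure.map T ((μH[p] : Measure E).restrict A) ≤ ((K : ℝ≥0∞) ^ p) • (μH[p] : Measure E) := by
      refine Measure.le_iff.2 fun B hB => ?_
      rw [Measure.smul_apply, key B hB, smul_eq_mul]
      refine (haus_le_of_expand T _ K p hp fun x hx y hy => h2 x hx.1 y hy.1).trans ?_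
      gcongr
      rw [image_inter_preimage]
      exact inter_subset_right
    calc _ ≤ _ := lintegral_mono' hle le_rfl
      _ = _ := by rw [lintegral_smul_measure, smul_eq_mul]

theorem tendsto_of_ratio {P : Type*} {l : Filter P} (J L : P → ℝ≥0∞) (L0 : ℝ≥0∞) (p : ℝ) 
    (hL : Tendsto L l (𝓝 L0))
    (h : ∀ K : ℝ≥0, 1 < K → ∀ᶠ q in l, J q ≤ (K : ℝ≥0∞) ^ p * L q ∧ L q ≤ (K : ℝ≥0∞) ^ p * J q) :
    Tendsto J l (𝓝 L0) := by
  have hc : Tendsto (fun K : ℝ≥0 => (K : ℝ≥0∞) ^ p) (𝓝[>] 1) (𝓝 1) := by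
    have : Tendsto (fun K : ℝ≥0 => (K : ℝ≥0∞) ^ p) (𝓝 1) (𝓝 (((1 : ℝ≥0) : ℝ≥0∞) ^ p)) :=
      ((ENNReal.continuous_rpow_const (y := p)).comp ENNReal.continuous_coe).tendsto 1
    simp only [ENNReal.coe_one, ENNReal.one_rpow] at this
    exact this.mono_left nhdsWithin_le_nhds
  have hgt : ∀ᶠ K : ℝ≥0 in 𝓝[>] 1, 1 < K := self_mem_nhdsWithin
  refine tendsto_order.2 ⟨fun a ha => ?_, fun a ha => ?_⟩
  · have h1 : Tendsto (fun K : ℝ≥0 => (K : ℝ≥0∞) ^ p * a) (𝓝[>] 1) (𝓝 (1 * a)) :=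
      ENNReal.Tendsto.mul_const hc (Or.inl one_ne_zero)
    rw [one_mul] at h1
    obtain ⟨K, hK, hK1⟩ := ((h1.eventually (gt_mem_nhds ha)).and hgt).exists
    filter_upwards [h K hK1, hL.eventually (lt_mem_nhds hK)] with q hq hq2
    by_contra hcon
    exact absurd (hq2.trans_le (hq.2.trans (mul_le_mul_right (not_lt.1 hcon) _))) (lt_irrefl _)
  · obtain ⟨b, hb1, hb2⟩ := exists_between ha
    have h1 : Tendsto (fun K : ℝ≥0 => (K : ℝ≥0∞) ^ p * b) (𝓝[>] 1) (𝓝 (1 * b)) :=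
      ENNReal.Tendsto.mul_const hc (Or.inl one_ne_zero)
    rw [one_mul] at h1
    obtain ⟨K, hK, hK1⟩ := ((h1.eventually (gt_mem_nhds hb2)).and hgt).exists
    filter_upwards [h K hK1, hL.eventually (gt_mem_nhds hb1)] with q hq hq2
    exact (hq.1.trans (mul_le_mul_right hq2.le _)).trans_lt hK

theorem haus_finite {E : Type*} [NormedAddCommGroup E] [InnerProductSpace ℝ E] [FiniteDimensional ℝ E]
    [MeasurableSpace E] [BorelSpace E] (hd : 1 ≤ Module.finrank ℝ E) (e : E) (he : ‖e‖ = 1) (A : Set E)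
    (hA : Bornology.IsBounded A)
    (h : ∀ x ∈ A, ∀ y ∈ A, |inner ℝ e (x - y)| ≤ (1/2) * ‖x - y‖) :
    μH[(Module.finrank ℝ E : ℝ) - 1] A < ∞ := by
  have he0 : e ≠ 0 := by rintro rfl; simp at he
  obtain ⟨n, hn⟩ : ∃ n, Module.finrank ℝ E = n + 1 := ⟨_, (Nat.sub_add_cancel hd).symm⟩
  have : Fact (Module.finrank ℝ E = n + 1) := ⟨hn⟩
  have hf : Module.finrank ℝ (ℝ ∙ e)ᗮ = n := Submodule.finrank_orthogonal_span_singleton he0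
  have hp : (Module.finrank ℝ E : ℝ) - 1 = n := by rw [hn]; push_cast; ring
  rw [hp]
  let Q : E →L[ℝ] (ℝ ∙ e)ᗮ := (ℝ ∙ e)ᗮ.orthogonalProjectionOnto
  have hQ : ∀ x ∈ A, ∀ y ∈ A, dist x y ≤ (2 : ℝ≥0) * dist (Q x) (Q y) := by
    intro x hx y hy
    have h1 := h x hx y hy
    rw [dist_eq_norm, dist_eq_norm, ← map_sub]
    set v := x - y
    have hv : v = inner ℝ e v • e + (Q v : E) := by
      have := Submodule.starProjection_add_starProjection_orthogonal (K := ℝ ∙ e) v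
      rw [Submodule.starProjection_unit_singleton ℝ he] at this
      exact this.symm
    have h2 : ‖v‖ ≤ |inner ℝ e v| + ‖Q v‖ := by
      calc ‖v‖ = ‖inner ℝ e v • e + (Q v : E)‖ := by rw [← hv]
        _ ≤ _ := norm_add_le _ _
        _ = _ := by rw [norm_smul, he, mul_one, Real.norm_eq_abs]; rfl
    push_cast
    linarith
  refine (haus_le_of_expand Q A 2 n (Nat.cast_nonneg n) hQ).trans_lt ?_
  have : Measure.IsAddHaarMeasure (μH[(n : ℝ)] : Measure (ℝ ∙ e)ᗮ) := by
    have := MeasureTheory.isAddHaarMeasure_hausdorffMeasure (E := (ℝ ∙ e)ᗮ)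
    rwa [hf] at this
  refine ENNReal.mul_lt_top (ENNReal.rpow_lt_top_of_nonneg (Nat.cast_nonneg n) (by simp)) ?_
  exact (Q.lipschitz.isBounded_image hA).measure_lt_top

theorem ivt_line {E : Type*} [NormedAddCommGroup E] [InnerProductSpace ℝ E]
    (F : E → ℝ) (x0 e : E) (he : ‖e‖ = 1) (R a δ : ℝ) (_ha : 0 < a) (hδ : 0 < δ) (hδR : δ ≤ R)
    (hc : ContinuousOn F (Metric.ball x0 (4 * R)))
    (hF : ∀ x ∈ Metric.ball x0 (4 * R), ∀ y ∈ Metric.ball x0 (4 * R),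
      |F x - F y - a * inner ℝ e (x - y)| ≤ a / 2 * ‖x - y‖)
    (x : E) (hx : x ∈ Metric.ball x0 (2 * R)) (hFx : |F x| < a * δ / 2) :
    ∃ s : ℝ, |s| ≤ δ ∧ F (x + s • e) = 0 := by
  have hmem : ∀ s : ℝ, |s| ≤ δ → x + s • e ∈ Metric.ball x0 (4 * R) := by
    intro s hs
    rw [Metric.mem_ball, dist_eq_norm] at hx ⊢
    have : ‖x + s • e - x0‖ ≤ ‖x - x0‖ + |s| := by
      calc ‖x + s • e - x0‖ = ‖(x - x0) + s • e‖ := by congr 1; abel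
        _ ≤ _ := norm_add_le _ _
        _ = _ := by rw [norm_smul, he, mul_one, Real.norm_eq_abs]
    linarith
  have hx0 : x ∈ Metric.ball x0 (4 * R) := by simpa using hmem 0 (by simpa using hδ.le)
  have hval : ∀ s : ℝ, |s| ≤ δ → |F (x + s • e) - F x - a * s| ≤ a / 2 * |s| := by
    intro s hs
    have := hF _ (hmem s hs) x hx0
    rw [add_sub_cancel_left, inner_smul_right, real_inner_self_eq_norm_sq, he, norm_smul, he, one_pow,
      mul_one, mul_one, Real.norm_eq_abs] at this
    exact this
  have hcont : ContinuousOn (fun s : ℝ => F (x + s • e)) (Icc (-δ) δ) := by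
    apply hc.comp (by fun_prop)
    intro s hs
    exact hmem s (abs_le.2 hs)
  have h1 := abs_le.1 (hval δ (by rw [abs_of_pos hδ]))
  have h2 := abs_le.1 (hval (-δ) (by rw [abs_neg, abs_of_pos hδ]))
  rw [abs_neg] at h2
  rw [abs_of_pos hδ] at h1 h2
  have h3 := abs_lt.1 hFx
  obtain ⟨s, hs, hs0⟩ := intermediate_value_Icc (by linarith) hcont
    (show (0 : ℝ) ∈ Icc (F (x + (-δ) • e)) (F (x + δ • e)) from ⟨by linarith, by linarith⟩)
  exact ⟨s, abs_le.2 hs, hs0⟩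

theorem transport_exists {E P : Type*} [NormedAddCommGroup E] [InnerProductSpace ℝ E] [FiniteDimensional ℝ E]
    [MeasurableSpace E] [BorelSpace E] (hd : 1 ≤ Module.finrank ℝ E) [TopologicalSpace P]
    (Ω : Set E) (hΩ : IsOpen Ω) (f : P → E → ℝ) (g : P → E → E)
    (hf : ∀ p, ∀ x ∈ Ω, HasGradientAt (f p) (g p x) x)
    (hfc : ∀ p, ∀ x ∈ Ω, ContinuousAt (fun q : P × E => f q.1 q.2) (p, x))
    (hgc : ∀ p, ∀ x ∈ Ω, ContinuousAt (fun q : P × E => g q.1 q.2) (p, x))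
    (p0 : P) (x0 : E) (hx0 : x0 ∈ Ω) (hg0 : g p0 x0 ≠ 0) :
    ∃ R : ℝ, 0 < R ∧ ∃ A : Set E, A ⊆ {x ∈ Ω | f p0 x = 0} ∧ MeasurableSet A ∧
      μH[(Module.finrank ℝ E : ℝ) - 1] A < ∞ ∧
      (∀ z ∈ Metric.ball x0 R, f p0 z = 0 → z ∈ A) ∧
      ∃ T : P → E → E, (∀ x ∈ A, Tendsto (fun p => T p x) (𝓝 p0) (𝓝 x)) ∧
      (∀ ε > 0, ∀ᶠ p in 𝓝 p0, ∀ x ∈ A, ∀ y ∈ A, ‖(T p x - T p y) - (x - y)‖ ≤ ε * ‖x - y‖) ∧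
      (∀ᶠ p in 𝓝 p0, ∀ x ∈ A, T p x ∈ Ω ∧ f p (T p x) = 0) ∧
      (∀ᶠ p in 𝓝 p0, ∀ z ∈ Metric.ball x0 R, f p z = 0 → z ∈ T p '' A) := by
  classical
  set g0 := g p0 x0 with hg0d
  set a := ‖g0‖ with had
  have ha : 0 < a := norm_pos_iff.2 hg0
  set e : E := a⁻¹ • g0 with hed
  have he : ‖e‖ = 1 := by rw [hed, norm_smul, norm_inv, Real.norm_of_nonneg ha.le]; exact inv_mul_cancel₀ ha.ne'
  have hge : g0 = a • e := by rw [hed, smul_smul, mul_inv_cancel₀ ha.ne', one_smul]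
  -- step 1
  obtain ⟨R, hR, hU⟩ : ∃ R : ℝ, 0 < R ∧ ∀ᶠ p in 𝓝 p0, ∀ x ∈ Metric.ball x0 (4 * R),
      x ∈ Ω ∧ ‖g p x - g0‖ ≤ a / 2 := by
    have h1 : ∀ᶠ q : P × E in 𝓝 (p0, x0), q.2 ∈ Ω ∧ ‖g q.1 q.2 - g0‖ ≤ a / 2 := by
      refine Filter.Eventually.and (continuousAt_snd.eventually (hΩ.mem_nhds hx0)) ?_
      have := (hgc p0 x0 hx0).eventually (Metric.ball_mem_nhds _ (half_pos ha))
      filter_upwards [this] with q hq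
      have hq' : dist (g q.1 q.2) (g p0 x0) < a / 2 := hq
      rw [dist_eq_norm] at hq'
      exact hq'.le
    rw [nhds_prod_eq, Filter.eventually_prod_iff] at h1
    obtain ⟨pa, hpa, pb, hpb, h⟩ := h1
    obtain ⟨r, hr, hrb⟩ := Metric.eventually_nhds_iff_ball.1 hpb
    refine ⟨r / 4, by positivity, ?_⟩
    filter_upwards [hpa] with p hp x hx
    exact h hp (hrb x (by convert hx using 2; ring))
  have hBΩ : Metric.ball x0 (4 * R) ⊆ Ω := fun x hx => (hU.self_of_nhds x hx).1
  have hstar : ∀ᶠ p in 𝓝 p0, ∀ x ∈ Metric.ball x0 (4 * R), ∀ y ∈ Metric.ball x0 (4 * R),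
      |f p x - f p y - a * inner ℝ e (x - y)| ≤ a / 2 * ‖x - y‖ := by
    filter_upwards [hU] with p hp x hx y hy
    have := (convex_ball x0 (4 * R)).norm_image_sub_le_of_norm_hasFDerivWithin_le'
      (f := f p) (f' := fun z => (InnerProductSpace.toDual ℝ E (g p z) : E →L[ℝ] ℝ))
      (φ := (InnerProductSpace.toDual ℝ E g0 : E →L[ℝ] ℝ)) (C := a / 2)
      (fun z hz => (hf p z (hp z hz).1).hasFDerivAt.hasFDerivWithinAt)
      (fun z hz => by
        rw [← map_sub, LinearIsometryEquiv.norm_map]; exact (hp z hz).2) hy hx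
    rw [InnerProductSpace.toDual_apply_apply, hge, inner_smul_left] at this
    simpa using this
  have hcont : ∀ p, ContinuousOn (f p) (Metric.ball x0 (4 * R)) := fun p x hx =>
    (hf p x (hBΩ hx)).hasFDerivAt.continuousAt.continuousWithinAt
  have hmem : ∀ x ∈ Metric.ball x0 (2 * R), ∀ s : ℝ, |s| ≤ R → x + s • e ∈ Metric.ball x0 (4 * R) := by
    intro x hx s hs
    rw [Metric.mem_ball, dist_eq_norm] at hx ⊢
    have : ‖x + s • e - x0‖ ≤ ‖x - x0‖ + |s| := by
      calc ‖x + s • e - x0‖ = ‖(x - x0) + s • e‖ := by congr 1; abel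
        _ ≤ _ := norm_add_le _ _
        _ = _ := by rw [norm_smul, he, mul_one, Real.norm_eq_abs]
    linarith
  have h24 : Metric.ball x0 (2 * R) ⊆ Metric.ball x0 (4 * R) := Metric.ball_subset_ball (by linarith)
  have hcb : Metric.closedBall x0 (2 * R) ⊆ Metric.ball x0 (4 * R) := Metric.closedBall_subset_ball (by linarith)
  -- monotone estimate
  have hmono : ∀ᶠ p in 𝓝 p0, ∀ x ∈ Metric.ball x0 (2 * R), ∀ s t : ℝ, |s| ≤ R → |t| ≤ R →
      a / 2 * |s - t| ≤ |f p (x + s • e) - f p (x + t • e)| := by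
    filter_upwards [hstar] with p hp x hx s t hs ht
    have := hp _ (hmem x hx s hs) _ (hmem x hx t ht)
    have h2 : x + s • e - (x + t • e) = (s - t) • e := by rw [sub_smul]; abel
    rw [h2, inner_smul_right, real_inner_self_eq_norm_sq, he, norm_smul, he, one_pow,
      mul_one, mul_one, Real.norm_eq_abs] at this
    have h3 : |a * (s - t)| = a * |s - t| := by rw [abs_mul, abs_of_pos ha]
    have h4 := abs_sub_abs_le_abs_sub (a * (s - t)) (f p (x + s • e) - f p (x + t • e))
    rw [abs_sub_comm (a * (s - t))] at h4
    linarith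
  have hclose : ∀ ε > 0, ∀ᶠ p in 𝓝 p0, ∀ x ∈ Metric.closedBall x0 (2 * R), |f p x - f p0 x| < ε := by
    intro ε hε
    refine (isCompact_closedBall x0 (2 * R)).eventually_forall_of_forall_eventually
      (P := fun p x => |f p x - f p0 x| < ε) ?_
    intro x hx
    have h1 : ContinuousAt (fun q : P × E => f q.1 q.2 - f p0 q.2) (p0, x) := by
      refine (hfc p0 x (hBΩ (hcb hx))).sub ?_
      exact ContinuousAt.comp (f := Prod.snd) (g := f p0)
        (hf p0 x (hBΩ (hcb hx))).hasFDerivAt.continuousAt continuousAt_snd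
    have := h1.abs.tendsto.eventually_lt_const (u := ε) (by simpa using hε)
    exact this
  have hexist : ∀ δ > 0, δ ≤ R → ∀ᶠ p in 𝓝 p0, ∀ x ∈ Metric.ball x0 (2 * R),
      (f p0 x = 0 → ∃ s : ℝ, |s| ≤ δ ∧ f p (x + s • e) = 0) ∧
      (f p x = 0 → ∃ s : ℝ, |s| ≤ δ ∧ f p0 (x + s • e) = 0) := by
    intro δ hδ hδR
    filter_upwards [hstar, hclose (a * δ / 2) (by positivity)] with p hp hp2 x hx
    have hc := hp2 x (Metric.ball_subset_closedBall hx)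
    refine ⟨fun h0 => ?_, fun h0 => ?_⟩
    · exact ivt_line (f p) x0 e he R a δ ha hδ hδR (hcont p) hp x hx (by simpa [h0] using hc)
    · exact ivt_line (f p0) x0 e he R a δ ha hδ hδR (hcont p0) hstar.self_of_nhds x hx
        (by simpa [h0] using hc)
  -- gradient shift estimate
  have hshift : ∀ ε > 0, ∃ δ > 0, δ ≤ R ∧ ∀ᶠ p in 𝓝 p0, ∀ s : ℝ, |s| ≤ δ →
      ∀ x ∈ Metric.ball x0 (2 * R), ∀ y ∈ Metric.ball x0 (2 * R),
      |(f p (x + s • e) - f p (y + s • e)) - (f p0 x - f p0 y)| ≤ ε * ‖x - y‖ := by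
    intro ε hε
    have h1 : ∀ᶠ q : P × ℝ in 𝓝 (p0, 0), ∀ x ∈ Metric.closedBall x0 (2 * R),
        ‖g q.1 (x + q.2 • e) - g p0 x‖ < ε := by
      refine (isCompact_closedBall x0 (2 * R)).eventually_forall_of_forall_eventually
        (P := fun (q : P × ℝ) x => ‖g q.1 (x + q.2 • e) - g p0 x‖ < ε) ?_
      intro x hx
      have hxΩ := hBΩ (hcb hx)
      have h1 : ContinuousAt (fun z : (P × ℝ) × E => g z.1.1 (z.2 + z.1.2 • e) - g p0 z.2) ((p0, 0), x) := by
        refine ContinuousAt.sub ?_ ?_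
        · refine ContinuousAt.comp (f := fun z : (P × ℝ) × E => (z.1.1, z.2 + z.1.2 • e))
            (g := fun q : P × E => g q.1 q.2) ?_ (by fun_prop)
          simpa using hgc p0 x hxΩ
        · exact ContinuousAt.comp (f := fun z : (P × ℝ) × E => (p0, z.2))
            (g := fun q : P × E => g q.1 q.2) (hgc p0 x hxΩ) (by fun_prop)
      have := h1.norm.tendsto.eventually_lt_const (u := ε) (by simpa using hε)
      exact this
    rw [nhds_prod_eq, Filter.eventually_prod_iff] at h1
    obtain ⟨pa, hpa, pb, hpb, h⟩ := h1
    obtain ⟨r, hr, hrb⟩ := Metric.eventually_nhds_iff_ball.1 hpb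
    refine ⟨min (r / 2) R, by positivity, min_le_right _ _, ?_⟩
    filter_upwards [hpa] with p hp s hs x hx y hy
    have hsr : pb s := hrb s (by
      rw [mem_ball_zero_iff, Real.norm_eq_abs]
      have := min_le_left (r / 2) R
      linarith)
    have hsR : |s| ≤ R := hs.trans (min_le_right _ _)
    have := (convex_ball x0 (2 * R)).norm_image_sub_le_of_norm_hasFDerivWithin_le
      (f := fun z => f p (z + s • e) - f p0 z)
      (f' := fun z => (InnerProductSpace.toDual ℝ E (g p (z + s • e)) : E →L[ℝ] ℝ)
          - (InnerProductSpace.toDual ℝ E (g p0 z) : E →L[ℝ] ℝ)) (C := ε)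
      (fun z hz => by
        have h5 := (hf p _ (hBΩ (hmem z hz s hsR))).hasFDerivAt
        have h6 := (hf p0 _ (hBΩ (h24 hz))).hasFDerivAt
        exact (((hasFDerivAt_comp_add_right (s • e)).2 h5).sub h6).hasFDerivWithinAt)
      (fun z hz => by
        rw [← map_sub, LinearIsometryEquiv.norm_map]
        exact (h hp hsr z (Metric.ball_subset_closedBall hz)).le) hy hx
    rw [Real.norm_eq_abs] at this
    convert this using 2
    ring
  -- the set A
  let A : Set E := {x ∈ Metric.ball x0 (2 * R) | f p0 x = 0}
  have hAm : MeasurableSet A := by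
    have : A = Metric.ball x0 (2 * R) \ (Metric.ball x0 (2 * R) ∩ f p0 ⁻¹' {0}ᶜ) := by
      ext x; simp only [A, mem_ofPred_eq, Set.mem_sdiff, mem_inter_iff, mem_preimage, mem_compl_iff, mem_singleton_iff]; tauto
    rw [this]
    refine Metric.isOpen_ball.measurableSet.diff (IsOpen.measurableSet ?_)
    exact ((hcont p0).mono h24).isOpen_inter_preimage Metric.isOpen_ball isOpen_compl_singleton
  have hAfin : μH[(Module.finrank ℝ E : ℝ) - 1] A < ∞ := by
    refine haus_finite hd e he A (Metric.isBounded_ball.subset fun x hx => hx.1) ?_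
    intro x hx y hy
    have := hstar.self_of_nhds x (h24 hx.1) y (h24 hy.1)
    rw [hx.2, hy.2, sub_zero, zero_sub, abs_neg, abs_mul, abs_of_pos ha] at this
    have h2 : a * |inner ℝ e (x - y)| ≤ a * (1 / 2 * ‖x - y‖) := by linarith
    exact le_of_mul_le_mul_left h2 ha
  let σ : P → E → ℝ := fun p x => if h : ∃ s : ℝ, |s| ≤ R ∧ f p (x + s • e) = 0 then h.choose else 0
  have hσ : ∀ δ > 0, δ ≤ R → ∀ᶠ p in 𝓝 p0, ∀ x ∈ A, |σ p x| ≤ δ ∧ f p (x + σ p x • e) = 0 := by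
    intro δ hδ hδR
    filter_upwards [hexist δ hδ hδR, hmono] with p hp hp2 x hx
    obtain ⟨s, hs, hs0⟩ := (hp x hx.1).1 hx.2
    have hex : ∃ s : ℝ, |s| ≤ R ∧ f p (x + s • e) = 0 := ⟨s, hs.trans hδR, hs0⟩
    have hsp : |σ p x| ≤ R ∧ f p (x + σ p x • e) = 0 := by
      simp only [σ, dif_pos hex]; exact hex.choose_spec
    have h1 := hp2 x hx.1 (σ p x) s hsp.1 (hs.trans hδR)
    rw [hsp.2, hs0, sub_zero, abs_zero] at h1
    have h2 : σ p x = s := by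
      have : |σ p x - s| ≤ 0 := by
        by_contra hcon
        have : 0 < a / 2 * |σ p x - s| := mul_pos (half_pos ha) (not_le.1 hcon)
        linarith
      exact sub_eq_zero.1 (abs_nonpos_iff.1 this)
    exact ⟨h2 ▸ hs, hsp.2⟩
  refine ⟨R, hR, A, fun x hx => ⟨hBΩ (h24 hx.1), hx.2⟩, hAm, hAfin,
    fun z hz h0 => ⟨Metric.ball_subset_ball (by linarith) hz, h0⟩, fun p x => x + σ p x • e, ?_, ?_, ?_, ?_⟩
  · intro x hx
    rw [Metric.tendsto_nhds]
    intro ε hε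
    filter_upwards [hσ (min (ε / 2) R) (by positivity) (min_le_right _ _)] with p hp
    have := (hp x hx).1.trans (min_le_left _ _)
    rw [dist_eq_norm, add_sub_cancel_left, norm_smul, he, mul_one, Real.norm_eq_abs]
    linarith
  · intro ε hε
    obtain ⟨δ, hδ, hδR, hsh⟩ := hshift (a / 2 * ε) (by positivity)
    filter_upwards [hsh, hσ δ hδ hδR, hmono] with p h1 h2 h3 x hx y hy
    obtain ⟨hs, hs0⟩ := h2 x hx
    obtain ⟨ht, ht0⟩ := h2 y hy
    have e1 : x + σ p x • e - (y + σ p y • e) - (x - y) = (σ p x - σ p y) • e := by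
      rw [sub_smul]; abel
    rw [e1, norm_smul, he, mul_one, Real.norm_eq_abs]
    have e2 := h3 y hy.1 (σ p x) (σ p y) (hs.trans hδR) (ht.trans hδR)
    have e3 := h1 (σ p x) hs x hx.1 y hy.1
    rw [hs0, hx.2, hy.2, sub_zero, sub_zero, zero_sub, abs_neg] at e3
    rw [ht0, sub_zero] at e2
    have : a / 2 * |σ p x - σ p y| ≤ a / 2 * (ε * ‖x - y‖) := by linarith
    exact le_of_mul_le_mul_left this (half_pos ha)
  · filter_upwards [hσ R hR le_rfl] with p hp x hx
    exact ⟨hBΩ (hmem x hx.1 _ (hp x hx).1), (hp x hx).2⟩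
  · filter_upwards [hexist R hR le_rfl, hexist (R / 2) (by positivity) (by linarith), hσ R hR le_rfl, hmono] with p h0 h1 h2 h3 z hz hz0
    obtain ⟨s, hs, hs0⟩ := (h1 z (Metric.ball_subset_ball (by linarith) hz)).2 hz0
    have hxA : z + s • e ∈ A := by
      refine ⟨?_, hs0⟩
      rw [Metric.mem_ball, dist_eq_norm] at hz ⊢
      have : ‖z + s • e - x0‖ ≤ ‖z - x0‖ + |s| := by
        calc ‖z + s • e - x0‖ = ‖(z - x0) + s • e‖ := by congr 1; abel
          _ ≤ _ := norm_add_le _ _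
          _ = _ := by rw [norm_smul, he, mul_one, Real.norm_eq_abs]
      linarith
    refine ⟨z + s • e, hxA, ?_⟩
    obtain ⟨ht, ht0⟩ := h2 _ hxA
    have hz' : z + s • e + (-s) • e = z := by rw [neg_smul]; abel
    have e2 := h3 _ hxA.1 (σ p (z + s • e)) (-s) ht (by rw [abs_neg]; linarith)
    rw [ht0, hz', hz0, sub_zero, abs_zero] at e2
    have : σ p (z + s • e) = -s := by
      have : |σ p (z + s • e) - -s| ≤ 0 := by
        by_contra hcon
        have : 0 < a / 2 * |σ p (z + s • e) - -s| := mul_pos (half_pos ha) (not_le.1 hcon)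
        linarith
      exact sub_eq_zero.1 (abs_nonpos_iff.1 this)
    show z + s • e + σ p (z + s • e) • e = z
    rw [this, hz']

theorem local_tendsto {E P : Type*} [NormedAddCommGroup E] [InnerProductSpace ℝ E] [FiniteDimensional ℝ E]
    [MeasurableSpace E] [BorelSpace E] (hd : 1 ≤ Module.finrank ℝ E) [TopologicalSpace P] [FirstCountableTopology P]
    (Ω : Set E) (hΩ : IsOpen Ω) (f : P → E → ℝ) (g : P → E → E)
    (hf : ∀ p, ∀ x ∈ Ω, HasGradientAt (f p) (g p x) x)
    (hfc : ∀ p, ∀ x ∈ Ω, ContinuousAt (fun q : P × E => f q.1 q.2) (p, x))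
    (hgc : ∀ p, ∀ x ∈ Ω, ContinuousAt (fun q : P × E => g q.1 q.2) (p, x))
    (p0 : P) (x0 : E) (hx0 : x0 ∈ Ω) (hg0 : g p0 x0 ≠ 0) :
    ∃ R : ℝ, 0 < R ∧ ∀ h : P → E → ℝ≥0∞, (∀ p, Measurable (h p)) →
      (∀ p, Function.support (h p) ⊆ {x ∈ Metric.ball x0 R | f p x = 0}) →
      (∃ M : ℝ≥0∞, M ≠ ∞ ∧ ∀ᶠ p in 𝓝 p0, ∀ x, h p x ≤ M) →
      (∀ᵐ x ∂((μH[(Module.finrank ℝ E : ℝ) - 1] : Measure E)), x ∈ Ω → f p0 x = 0 →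
        ContinuousWithinAt (fun q : P × E => h q.1 q.2) {q | q.2 ∈ Ω ∧ f q.1 q.2 = 0} (p0, x)) →
      (∫⁻ x, h p0 x ∂μH[(Module.finrank ℝ E : ℝ) - 1]) ≠ ∞ ∧
      Tendsto (fun p => ∫⁻ x, h p x ∂μH[(Module.finrank ℝ E : ℝ) - 1]) (𝓝 p0)
        (𝓝 (∫⁻ x, h p0 x ∂μH[(Module.finrank ℝ E : ℝ) - 1])) := by
  obtain ⟨R, hR, A, hAs, hAm, hAfin, hA0, T, hT1, hT2, hT3, hT4⟩ :=
    transport_exists hd Ω hΩ f g hf hfc hgc p0 x0 hx0 hg0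
  refine ⟨R, hR, fun h hm hs ⟨M, hM, hb⟩ hc => ?_⟩
  set m := (Module.finrank ℝ E : ℝ) - 1 with hmd
  have hm0 : 0 ≤ m := by
    have : (1 : ℝ) ≤ Module.finrank ℝ E := by exact_mod_cast hd
    linarith
  have hA : ∫⁻ x, h p0 x ∂μH[m] = ∫⁻ x in A, h p0 x ∂μH[m] := by
    rw [← lintegral_indicator hAm]
    congr 1
    symm
    rw [indicator_eq_self]
    intro x hx
    obtain ⟨h1, h2⟩ := hs p0 hx
    exact hA0 x h1 h2
  have hfin : ∫⁻ x in A, M ∂μH[m] ≠ ∞ := by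
    rw [setLIntegral_const]
    exact ENNReal.mul_ne_top hM hAfin.ne
  constructor
  · rw [hA]
    exact ne_top_of_le_ne_top hfin (lintegral_mono (fun x => hb.self_of_nhds x))
  have hbi : ∀ K : ℝ≥0, 1 < K → ∀ᶠ p in 𝓝 p0,
      (∀ x ∈ A, ∀ y ∈ A, dist (T p x) (T p y) ≤ K * dist x y) ∧
      (∀ x ∈ A, ∀ y ∈ A, dist x y ≤ K * dist (T p x) (T p y)) := by
    intro K hK
    have hK' : (1 : ℝ) < K := by exact_mod_cast hK
    have hK0 : (0 : ℝ) < K := by linarith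
    have hε : (0 : ℝ) < 1 - 1 / K := by
      rw [sub_pos, div_lt_one hK0]; exact hK'
    filter_upwards [hT2 _ hε] with p hp
    refine ⟨fun x hx y hy => ?_, fun x hx y hy => ?_⟩
    · have h1 := hp x hx y hy
      rw [dist_eq_norm, dist_eq_norm]
      have h2 := norm_sub_norm_le (T p x - T p y) (x - y)
      have h3 : (1 - 1 / (K : ℝ)) + 1 ≤ K := by
        have : 0 ≤ ((K : ℝ) - 1) ^ 2 / K := by positivity
        have e : ((K : ℝ) - 1) ^ 2 / K = K - 2 + 1 / K := by field_simp; ring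
        linarith
      have h4 := mul_le_mul_of_nonneg_right h3 (norm_nonneg (x - y))
      linarith
    · have h1 := hp x hx y hy
      rw [dist_eq_norm, dist_eq_norm]
      have h2 := norm_sub_norm_le (x - y) (T p x - T p y)
      rw [norm_sub_rev (x - y)] at h2
      have h3 : 1 / (K : ℝ) * ‖x - y‖ ≤ ‖T p x - T p y‖ := by linarith
      rw [one_div, inv_mul_le_iff₀ hK0] at h3
      exact h3
  rw [hA]
  refine tendsto_of_ratio _ (fun p => ∫⁻ x in A, h p (T p x) ∂μH[m]) _ m ?_ ?_
  · refine tendsto_lintegral_filter_of_dominated_convergence' (fun _ => M) ?_ ?_ hfin ?_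
    · filter_upwards [hbi 2 (by norm_num)] with p hp
      exact (hm p).comp_aemeasurable
        ((LipschitzOnWith.of_dist_le_mul hp.1).continuousOn.aemeasurable hAm)
    · filter_upwards [hb] with p hp
      exact Eventually.of_forall fun x => hp _
    · filter_upwards [ae_restrict_of_ae hc, ae_restrict_mem hAm] with x hx hxA
      obtain ⟨hxΩ, hx0⟩ := hAs hxA
      have h1 := hx hxΩ hx0
      have h2 : Tendsto (fun p => (p, T p x)) (𝓝 p0) (𝓝[{q : P × E | q.2 ∈ Ω ∧ f q.1 q.2 = 0}] (p0, x)) := by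
        refine tendsto_nhdsWithin_iff.2 ⟨?_, ?_⟩
        · rw [nhds_prod_eq]; exact tendsto_id.prodMk (hT1 x hxA)
        · filter_upwards [hT3] with p hp
          exact hp x hxA
      exact h1.tendsto.comp h2
  · intro K hK
    filter_upwards [hbi K hK, hT4] with p hp hp4
    exact transport_le (T p) A hAm K m hm0 hp.1 hp.2 (h p) (hm p)
      (fun x hx => hp4 x (hs p hx).1 (hs p hx).2)

theorem measurable_le_set {E : Type*} [TopologicalSpace E] [MeasurableSpace E] [BorelSpace E]
    {Ω : Set E} (hΩ : IsOpen Ω) {u v : E → ℝ} (hu : ContinuousOn u Ω) (hv : ContinuousOn v Ω) :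
    MeasurableSet {x ∈ Ω | u x ≤ v x} := by
  have : {x ∈ Ω | u x ≤ v x} = Ω \ (Ω ∩ (fun x => u x - v x) ⁻¹' Ioi 0) := by
    ext x
    simp only [mem_ofPred_eq, Set.mem_sdiff, mem_inter_iff, mem_preimage, mem_Ioi, sub_pos, not_and, not_lt]
    tauto
  rw [this]
  exact hΩ.measurableSet.diff ((hu.sub hv).isOpen_inter_preimage hΩ isOpen_Ioi).measurableSet

/-- Proposition 3.3: the interface integrals `Hᵢⱼ` are continuous functions of `ψ`. -/
theorem Hij_continuous
    (hd : 1 ≤ d) (hN : 1 ≤ N)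
    {Ω : Set (EuclideanSpace ℝ (Fin d))} (hΩo : IsOpen Ω) (hΩb : Bornology.IsBounded Ω)
    (y : Fin N → EuclideanSpace ℝ (Fin d)) (hy : Function.Injective y)
    (G : EuclideanSpace ℝ (Fin d) → Fin N → ℝ → ℝ)
    (Gx : EuclideanSpace ℝ (Fin d) → Fin N → ℝ → EuclideanSpace ℝ (Fin d))
    (Gv : EuclideanSpace ℝ (Fin d) → Fin N → ℝ → ℝ)
    (hGx : ∀ x ∈ Ω, ∀ (i : Fin N) (v : ℝ), HasGradientAt (fun x' => G x' i v) (Gx x i v) x)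
    (hGv : ∀ x ∈ Ω, ∀ (i : Fin N) (v : ℝ), HasDerivAt (fun v' => G x i v') (Gv x i v) v)
    (hGxc : ∀ i : Fin N, ContinuousOn (fun q : EuclideanSpace ℝ (Fin d) × ℝ => Gx q.1 i q.2) (Ω ×ˢ Set.univ))
    (hGvc : ∀ i : Fin N, ContinuousOn (fun q : EuclideanSpace ℝ (Fin d) × ℝ => Gv q.1 i q.2) (Ω ×ˢ Set.univ))
    (hG2 : ∀ i : Fin N, ContDiffOn ℝ 2 (fun q : EuclideanSpace ℝ (Fin d) × ℝ => G q.1 i q.2) (Ω ×ˢ Set.univ))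
    (hReg : ∀ α β : ℝ, α < β → ∃ C : ℝ, ∀ x ∈ Ω, ∀ i : Fin N, ∀ v ∈ Set.Icc α β, ‖Gx x i v‖ ≤ C)
    (hMono : ∀ x ∈ Ω, ∀ (i : Fin N) (v : ℝ), Gv x i v < 0)
    (hTwist : ∀ x ∈ Ω, Function.Injective fun q : Fin N × ℝ => (G x q.1 q.2, Gx x q.1 q.2))
    {X : Set (EuclideanSpace ℝ (Fin d))} (hXc : IsCompact X) (hXΩ : X ⊆ Ω)
    (ρ : EuclideanSpace ℝ (Fin d) → ℝ) (hρc : Continuous ρ) (hρ0 : ∀ x, 0 ≤ ρ x)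
    (hρsupp : tsupport ρ ⊆ X) (hρ1 : (∫ x, ρ x) = 1)
    (hGenΩ : ∀ (ψ : Fin N → ℝ) (i j k : Fin N), i ≠ j → i ≠ k → j ≠ k →
      μH[(d : ℝ) - 1] (Gam Ω G ψ i j ∩ Gam Ω G ψ i k) = 0)
    (hGenX : ∀ (ψ : Fin N → ℝ) (i j : Fin N), i ≠ j →
      μH[(d : ℝ) - 1] (Gam Ω G ψ i j ∩ frontier X) = 0)
 :
    ∀ i j : Fin N, i ≠ j →
      Continuous fun ψ : Fin N → ℝ =>
        ∫ x in Lag Ω G ψ i ∩ Lag Ω G ψ j,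
          ρ x * |Gv x i (ψ i)| / ‖Gx x j (ψ j) - Gx x i (ψ i)‖ ∂μH[(d : ℝ) - 1] := by
  classical
  intro i j hij
  let E := EuclideanSpace ℝ (Fin d)
  -- joint continuity facts
  have hΩn : ∀ x ∈ Ω, ∀ v : ℝ, Ω ×ˢ (Set.univ : Set ℝ) ∈ 𝓝 (x, v) := fun x hx v =>
    (hΩo.prod isOpen_univ).mem_nhds ⟨hx, mem_univ _⟩
  have hpc : ∀ (k : Fin N) (p : Fin N → ℝ) (x : E), ContinuousAt
      (fun q : (Fin N → ℝ) × E => ((q.2, q.1 k) : E × ℝ)) (p, x) := by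
    intro k p x; fun_prop
  have cG : ∀ (k : Fin N) (p : Fin N → ℝ), ∀ x ∈ Ω,
      ContinuousAt (fun q : (Fin N → ℝ) × E => G q.2 k (q.1 k)) (p, x) := fun k p x hx =>
    ContinuousAt.comp (g := fun q : E × ℝ => G q.1 k q.2)
      (f := fun q : (Fin N → ℝ) × E => ((q.2, q.1 k) : E × ℝ))
      ((hG2 k).continuousOn.continuousAt (hΩn x hx _)) (hpc k p x)
  have cGx : ∀ (k : Fin N) (p : Fin N → ℝ), ∀ x ∈ Ω,
      ContinuousAt (fun q : (Fin N → ℝ) × E => Gx q.2 k (q.1 k)) (p, x) := fun k p x hx =>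
    ContinuousAt.comp (g := fun q : E × ℝ => Gx q.1 k q.2)
      (f := fun q : (Fin N → ℝ) × E => ((q.2, q.1 k) : E × ℝ))
      ((hGxc k).continuousAt (hΩn x hx _)) (hpc k p x)
  have cGv : ∀ (k : Fin N) (p : Fin N → ℝ), ∀ x ∈ Ω,
      ContinuousAt (fun q : (Fin N → ℝ) × E => Gv q.2 k (q.1 k)) (p, x) := fun k p x hx =>
    ContinuousAt.comp (g := fun q : E × ℝ => Gv q.1 k q.2)
      (f := fun q : (Fin N → ℝ) × E => ((q.2, q.1 k) : E × ℝ))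
      ((hGvc k).continuousAt (hΩn x hx _)) (hpc k p x)
  have hsec : ∀ (p : Fin N → ℝ) (x : E), ContinuousAt (fun z : E => ((p, z) : (Fin N → ℝ) × E)) x := by
    intro p x; fun_prop
  have cGs : ∀ (k : Fin N) (p : Fin N → ℝ), ContinuousOn (fun x => G x k (p k)) Ω := fun k p x hx =>
    (ContinuousAt.comp (g := fun q : (Fin N → ℝ) × E => G q.2 k (q.1 k)) (cG k p x hx)
      (hsec p x)).continuousWithinAt
  let f : (Fin N → ℝ) → E → ℝ := fun p x => G x j (p j) - G x i (p i)
  let g : (Fin N → ℝ) → E → E := fun p x => Gx x j (p j) - Gx x i (p i)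
  have hf : ∀ p, ∀ x ∈ Ω, HasGradientAt (f p) (g p x) x := by
    intro p x hx
    have h1 := (hGx x hx j (p j)).hasFDerivAt.sub (hGx x hx i (p i)).hasFDerivAt
    rw [← map_sub] at h1
    exact h1
  have hfc : ∀ p, ∀ x ∈ Ω, ContinuousAt (fun q : (Fin N → ℝ) × E => f q.1 q.2) (p, x) :=
    fun p x hx => (cG j p x hx).sub (cG i p x hx)
  have hgc : ∀ p, ∀ x ∈ Ω, ContinuousAt (fun q : (Fin N → ℝ) × E => g q.1 q.2) (p, x) :=
    fun p x hx => (cGx j p x hx).sub (cGx i p x hx)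
  have hg0 : ∀ p, ∀ x ∈ Ω, f p x = 0 → g p x ≠ 0 := by
    intro p x hx h0 h1
    have := hTwist x hx (a₁ := (j, p j)) (a₂ := (i, p i))
      (Prod.ext (sub_eq_zero.1 h0) (sub_eq_zero.1 h1))
    exact hij (Prod.ext_iff.1 this).1.symm
  let S : (Fin N → ℝ) → Set E := fun p => Lag Ω G p i ∩ Lag Ω G p j
  have hSf : ∀ p, ∀ x ∈ S p, x ∈ Ω ∧ f p x = 0 := fun p x hx =>
    ⟨hx.1.1, sub_eq_zero.2 (le_antisymm (hx.1.2 j) (hx.2.2 i))⟩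
  have hLm : ∀ p k, MeasurableSet (Lag Ω G p k) := by
    intro p k
    have : Lag Ω G p k = Ω ∩ ⋂ l, {x ∈ Ω | G x l (p l) ≤ G x k (p k)} := by
      ext x
      simp only [Lag, mem_ofPred_eq, mem_inter_iff, mem_iInter]
      exact ⟨fun h => ⟨h.1, fun l => ⟨h.1, h.2 l⟩⟩, fun h => ⟨h.1, fun l => (h.2 l).2⟩⟩
    rw [this]
    exact hΩo.measurableSet.inter (MeasurableSet.iInter fun l => measurable_le_set hΩo (cGs l p) (cGs k p))
  have hSm : ∀ p, MeasurableSet (S p) := fun p => (hLm p i).inter (hLm p j)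
  let φ : (Fin N → ℝ) × E → ℝ := fun q => |Gv q.2 i (q.1 i)| / ‖g q.1 q.2‖
  have hφ0 : ∀ q, 0 ≤ φ q := fun q => by positivity
  have cφ : ∀ p, ∀ x ∈ Ω, f p x = 0 → ContinuousAt φ (p, x) := fun p x hx h0 =>
    (cGv i p x hx).abs.div (hgc p x hx).norm (norm_ne_zero_iff.2 (hg0 p x hx h0))
  have cφS : ∀ p, ContinuousOn (fun x => φ (p, x)) (S p) := fun p x hx =>
    (ContinuousAt.comp (g := φ) (cφ p x (hSf p x hx).1 (hSf p x hx).2) (hsec p x)).continuousWithinAt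
  let h : (E → ℝ) → (Fin N → ℝ) → E → ℝ≥0∞ := fun χ p =>
    (S p).indicator fun x => ENNReal.ofReal (χ x * φ (p, x))
  have hhm : ∀ χ, Continuous χ → ∀ p, Measurable (h χ p) := by
    intro χ hχ p
    have := ContinuousOn.measurable_piecewise (s := S p) (f := fun x => ENNReal.ofReal (χ x * φ (p, x)))
      (g := fun _ => (0 : ℝ≥0∞))
      (ENNReal.continuous_ofReal.comp_continuousOn (hχ.continuousOn.mul (cφS p))) continuousOn_const (hSm p)
    rw [show h χ p = (S p).piecewise (fun x => ENNReal.ofReal (χ x * φ (p, x))) (fun _ => 0) from ?_]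
    · exact this
    · ext x
      by_cases hx : x ∈ S p
      · simp [h, hx]
      · simp [h, hx]
  rw [continuous_iff_continuousAt]
  intro p0
  have hfr : Module.finrank ℝ E = d := by simp [E]
  -- a.e. continuity
  have hae : ∀ χ : E → ℝ, Continuous χ → ∀ᵐ x ∂((μH[(d : ℝ) - 1] : Measure E)), x ∈ Ω → f p0 x = 0 →
        ContinuousWithinAt (fun q : (Fin N → ℝ) × E => h χ q.1 q.2) {q | q.2 ∈ Ω ∧ f q.1 q.2 = 0} (p0, x) := by
    intro χ hχ
    have h1 : ∀ᵐ x ∂((μH[(d : ℝ) - 1] : Measure E)), ∀ k, k ≠ i → k ≠ j → x ∈ Ω → f p0 x = 0 →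
        G x k (p0 k) ≠ G x i (p0 i) := by
      refine ae_all_iff.2 fun k => ?_
      by_cases hki : k = i
      · simp [hki]
      by_cases hkj : k = j
      · simp [hkj]
      rw [ae_iff]
      refine measure_mono_null ?_ (hGenΩ p0 i j k hij (Ne.symm hki) (Ne.symm hkj))
      intro x hx
      simp only [mem_ofPred_eq, Classical.not_imp, not_not] at hx
      obtain ⟨-, -, hxΩ, h0, he⟩ := hx
      exact ⟨⟨hxΩ, (sub_eq_zero.1 h0).symm⟩, ⟨hxΩ, he.symm⟩⟩
    filter_upwards [h1] with x hx hxΩ hx0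
    by_cases hlt : ∀ k, k ≠ i → k ≠ j → G x k (p0 k) < G x i (p0 i)
    · have hev : ∀ᶠ q in 𝓝 (p0, x), ∀ k, k ≠ i → k ≠ j → G q.2 k (q.1 k) < G q.2 i (q.1 i) := by
        refine eventually_all.2 fun k => ?_
        by_cases hki : k = i
        · simp [hki]
        by_cases hkj : k = j
        · simp [hkj]
        filter_upwards [(cG k p0 x hxΩ).eventually_lt (cG i p0 x hxΩ) (hlt k hki hkj)] with q hq _ _
        exact hq
      have hmS : ∀ q : (Fin N → ℝ) × E, (∀ k, k ≠ i → k ≠ j → G q.2 k (q.1 k) < G q.2 i (q.1 i)) →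
          q.2 ∈ Ω ∧ f q.1 q.2 = 0 → q.2 ∈ S q.1 := by
        intro q hq hq2
        have hji : G q.2 j (q.1 j) = G q.2 i (q.1 i) := sub_eq_zero.1 hq2.2
        have hle : ∀ k, G q.2 k (q.1 k) ≤ G q.2 i (q.1 i) := by
          intro k
          by_cases hki : k = i
          · rw [hki]
          by_cases hkj : k = j
          · rw [hkj, hji]
          exact (hq k hki hkj).le
        exact ⟨⟨hq2.1, hle⟩, ⟨hq2.1, fun k => (hle k).trans hji.ge⟩⟩
      have hct : ContinuousWithinAt (fun q : (Fin N → ℝ) × E => ENNReal.ofReal (χ q.2 * φ q))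
          {q | q.2 ∈ Ω ∧ f q.1 q.2 = 0} (p0, x) := by
        have c1 : ContinuousAt (fun q : (Fin N → ℝ) × E => χ q.2 * φ q) (p0, x) :=
          ((hχ.comp continuous_snd).continuousAt).mul (cφ p0 x hxΩ hx0)
        exact (ENNReal.continuous_ofReal.continuousAt.comp c1).continuousWithinAt
      refine hct.congr_of_eventuallyEq ?_ ?_
      · filter_upwards [self_mem_nhdsWithin, mem_nhdsWithin_of_mem_nhds hev] with q hq1 hq2
        exact indicator_of_mem (hmS q hq2 hq1) _
      · exact indicator_of_mem (hmS (p0, x) hev.self_of_nhds ⟨hxΩ, hx0⟩) _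
    · push Not at hlt
      obtain ⟨k, hki, hkj, hk⟩ := hlt
      have hk' : G x i (p0 i) < G x k (p0 k) := lt_of_le_of_ne hk (hx k hki hkj hxΩ hx0).symm
      have hev := (cG i p0 x hxΩ).eventually_lt (cG k p0 x hxΩ) hk'
      have hz : ∀ q : (Fin N → ℝ) × E, G q.2 i (q.1 i) < G q.2 k (q.1 k) → h χ q.1 q.2 = 0 := fun q hq =>
        indicator_of_notMem (fun hm => absurd (hm.1.2 k) (not_le.2 hq)) _
      refine (continuousWithinAt_const (b := (0 : ℝ≥0∞))).congr_of_eventuallyEq ?_ ?_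
      · filter_upwards [mem_nhdsWithin_of_mem_nhds hev] with q hq using hz q hq
      · exact hz (p0, x) hk'
  -- local statement
  have hloc : ∀ x0 ∈ Ω, ∃ r : ℝ, 0 < r ∧ ∀ χ : E → ℝ, Continuous χ → (∀ x, 0 ≤ χ x) →
      (∃ C, ∀ x, χ x ≤ C) → Function.support χ ⊆ Metric.ball x0 r →
      (∫⁻ x, h χ p0 x ∂μH[(d : ℝ) - 1]) ≠ ∞ ∧
      Tendsto (fun p => ∫⁻ x, h χ p x ∂μH[(d : ℝ) - 1]) (𝓝 p0) (𝓝 (∫⁻ x, h χ p0 x ∂μH[(d : ℝ) - 1])) := by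
    intro x0 hx0
    by_cases h0 : f p0 x0 = 0
    · obtain ⟨R, hR, hmain⟩ := local_tendsto (by rw [hfr]; exact hd) Ω hΩo f g hf hfc hgc p0 x0 hx0
        (hg0 p0 x0 hx0 h0)
      rw [hfr] at hmain
      have hbd : ∀ᶠ q in 𝓝 (p0, x0), φ q < φ (p0, x0) + 1 :=
        (cφ p0 x0 hx0 h0).tendsto.eventually_lt_const (by linarith)
      rw [nhds_prod_eq, Filter.eventually_prod_iff] at hbd
      obtain ⟨pa, hpa, pb, hpb, hab⟩ := hbd
      obtain ⟨r, hr, hrb⟩ := Metric.eventually_nhds_iff_ball.1 hpb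
      refine ⟨min R r, by positivity, fun χ hχ hχ0 ⟨C, hC⟩ hχs => ?_⟩
      have hsub : ∀ p x, h χ p x ≠ 0 → x ∈ S p ∧ x ∈ Metric.ball x0 (min R r) := by
        intro p x hx
        have hxS : x ∈ S p := by
          by_contra hcon
          exact hx (indicator_of_notMem hcon _)
        refine ⟨hxS, hχs ?_⟩
        intro hz
        apply hx
        simp only [h, indicator_of_mem hxS, hz, zero_mul, ENNReal.ofReal_zero]
      refine hmain (h χ) (hhm χ hχ) ?_ ?_ (hae χ hχ)
      · intro p x hx
        exact ⟨Metric.ball_subset_ball (min_le_left _ _) (hsub p x hx).2, (hSf p x (hsub p x hx).1).2⟩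
      · refine ⟨ENNReal.ofReal (C * (φ (p0, x0) + 1)), ENNReal.ofReal_ne_top, ?_⟩
        filter_upwards [hpa] with p hp x
        by_cases hx : h χ p x = 0
        · rw [hx]; exact zero_le
        · obtain ⟨h1, h2⟩ := hsub p x hx
          have h3 := (hab hp (hrb x (Metric.ball_subset_ball (min_le_right _ _) h2))).le
          simp only [h, indicator_of_mem h1]
          exact ENNReal.ofReal_le_ofReal (mul_le_mul (hC x) h3 (hφ0 _) ((hχ0 x).trans (hC x)))
    · have hev : ∀ᶠ q in 𝓝 (p0, x0), f q.1 q.2 ≠ 0 := (hfc p0 x0 hx0).eventually_ne h0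
      rw [nhds_prod_eq, Filter.eventually_prod_iff] at hev
      obtain ⟨pa, hpa, pb, hpb, hab⟩ := hev
      obtain ⟨r, hr, hrb⟩ := Metric.eventually_nhds_iff_ball.1 hpb
      refine ⟨r, hr, fun χ hχ hχ0 _ hχs => ?_⟩
      have hz : ∀ᶠ p in 𝓝 p0, ∫⁻ x, h χ p x ∂μH[(d : ℝ) - 1] = 0 := by
        filter_upwards [hpa] with p hp
        have : h χ p = fun _ => 0 := by
          ext x
          by_cases hxS : x ∈ S p
          · have hxb : x ∉ Metric.ball x0 r := fun hxb => hab hp (hrb x hxb) (hSf p x hxS).2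
            have hχx : χ x = 0 := by
              by_contra hcon
              exact hxb (hχs hcon)
            simp only [h, indicator_of_mem hxS, hχx, zero_mul, ENNReal.ofReal_zero]
          · exact indicator_of_notMem hxS _
        rw [this, lintegral_zero]
      have hz0 := hz.self_of_nhds
      refine ⟨by rw [hz0]; exact ENNReal.zero_ne_top, ?_⟩
      rw [hz0]
      exact tendsto_const_nhds.congr' (hz.mono fun p hp => hp.symm)
  -- globalize
  choose! r hr hloc using hloc
  obtain ⟨t, htX, htc⟩ := hXc.elim_nhds_subcover (fun x => Metric.ball x (r x))
    (fun x hx => Metric.ball_mem_nhds x (hr x (hXΩ hx)))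
  let en := t.equivFin
  obtain ⟨χ, hχ1, hχ2, hχ3, -⟩ := exists_continuous_sum_one_of_isOpen_isCompact
    (s := fun k => Metric.ball ((en.symm k : E)) (r (en.symm k))) (fun _ => Metric.isOpen_ball) hXc (by
      intro x hx
      obtain ⟨z, hz, hxz⟩ := mem_iUnion₂.1 (htc hx)
      exact mem_iUnion.2 ⟨en ⟨z, hz⟩, by simpa using hxz⟩)
  have hρX : ∀ x, x ∉ X → ρ x = 0 := fun x hx => by
    by_contra hcon
    exact hx (hρsupp (subset_tsupport ρ hcon))
  have hρsum : ∀ x, ρ x = ∑ k, χ k x * ρ x := by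
    intro x
    by_cases hx : x ∈ X
    · have := hχ2 hx
      rw [Finset.sum_apply] at this
      rw [← Finset.sum_mul, this]; simp
    · simp [hρX x hx]
  have hρcs : HasCompactSupport ρ := HasCompactSupport.of_support_subset_isCompact hXc
    ((subset_tsupport ρ).trans hρsupp)
  obtain ⟨C, hC⟩ := hρcs.exists_bound_of_continuous hρc
  have hpiece : ∀ k, (∫⁻ x, h (fun x => χ k x * ρ x) p0 x ∂μH[(d : ℝ) - 1]) ≠ ∞ ∧
      Tendsto (fun p => ∫⁻ x, h (fun x => χ k x * ρ x) p x ∂μH[(d : ℝ) - 1]) (𝓝 p0)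
        (𝓝 (∫⁻ x, h (fun x => χ k x * ρ x) p0 x ∂μH[(d : ℝ) - 1])) := by
    intro k
    refine hloc (en.symm k) (hXΩ (htX _ (en.symm k).2)) _ ((χ k).continuous.mul hρc)
      (fun x => mul_nonneg (hχ3 k x).1 (hρ0 x)) ⟨C, fun x => ?_⟩ ?_
    · calc χ k x * ρ x ≤ 1 * ρ x := mul_le_mul_of_nonneg_right (hχ3 k x).2 (hρ0 x)
        _ ≤ C := by rw [one_mul]; exact (le_abs_self _).trans (hC x)
    · intro x hx
      exact hχ1 k (subset_tsupport _ (left_ne_zero_of_mul hx))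
  have hJ : ∀ p, ∫⁻ x, h ρ p x ∂μH[(d : ℝ) - 1] =
      ∑ k, ∫⁻ x, h (fun x => χ k x * ρ x) p x ∂μH[(d : ℝ) - 1] := by
    intro p
    rw [← lintegral_finsetSum _ (fun k _ => hhm (fun x => χ k x * ρ x) ((χ k).continuous.mul hρc) p)]
    congr 1
    ext x
    by_cases hxS : x ∈ S p
    · simp only [h, indicator_of_mem hxS]
      rw [← ENNReal.ofReal_sum_of_nonneg
        (fun k _ => mul_nonneg (mul_nonneg (hχ3 k x).1 (hρ0 x)) (hφ0 _)), ← Finset.sum_mul, ← hρsum x]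
    · simp only [h, indicator_of_notMem hxS, Finset.sum_const_zero]
  have hI : ∀ p, (∫ x in Lag Ω G p i ∩ Lag Ω G p j,
          ρ x * |Gv x i (p i)| / ‖Gx x j (p j) - Gx x i (p i)‖ ∂μH[(d : ℝ) - 1]) =
        (∫⁻ x, h ρ p x ∂μH[(d : ℝ) - 1]).toReal := by
    intro p
    have e1 : (fun x => ρ x * |Gv x i (p i)| / ‖Gx x j (p j) - Gx x i (p i)‖) = fun x => ρ x * φ (p, x) := by
      ext x; exact mul_div_assoc _ _ _
    rw [e1, integral_eq_lintegral_of_nonneg_ae (Eventually.of_forall fun x => mul_nonneg (hρ0 x) (hφ0 _))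
      ((hρc.continuousOn.mul (cφS p)).aestronglyMeasurable (hSm p))]
    rw [lintegral_indicator (hSm p)]
  have hfinal : Tendsto (fun p => (∫⁻ x, h ρ p x ∂μH[(d : ℝ) - 1]).toReal) (𝓝 p0)
      (𝓝 (∫⁻ x, h ρ p0 x ∂μH[(d : ℝ) - 1]).toReal) := by
    simp only [hJ]
    refine (ENNReal.tendsto_toReal (ENNReal.sum_ne_top.2 fun k _ => (hpiece k).1)).comp ?_
    exact tendsto_finsetSum _ fun k _ => (hpiece k).2
  unfold ContinuousAt
  simp only [hI]
  exact hfinal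
end
end

section
/- Let G ∈ C²(Ω × Y × ℝ) satisfy (Mono) and (Twist), fix ψ ∈ ℝ^N and two distinct indices i ≠ j, and set f(x,t) = G(x,y_j,ψ_j) − G(x,yᵢ,ψᵢ + t). Let V = {x ∈ Ω : ∃ t ∈ ℝ, f(x,t) = 0}. Then: (1) for each x ∈ Ω, the equation f(x,t) = 0 has at most one solution t ∈ ℝ; (2) V is open and the map u : V → ℝ defined by f(x, u(x)) = 0 is of class C¹; (3) for all x ∈ V, ∇u(x) = (∇ₓG(x,y_j,ψ_j) − ∇ₓG(x,yᵢ,ψᵢ + u(x))) / ∂ᵥG(x,yᵢ,ψᵢ + u(x)); and (4) ∇u(x) ≠ 0 for all x ∈ V. -/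
set_option autoImplicit false

open MeasureTheory Set

noncomputable section

variable {d N : ℕ}

/-- Step 1 in the proof of Proposition 3.2: the implicit function `u` with level sets
`Γᵢⱼ(ψ + t eᵢ)` is well defined and `C¹` on the open set `V`, with nonvanishing
explicit gradient. -/
theorem implicit_interface_function
    (hd : 1 ≤ d) (hN : 1 ≤ N)
    {Ω : Set (EuclideanSpace ℝ (Fin d))} (hΩo : IsOpen Ω) (hΩb : Bornology.IsBounded Ω)
    (y : Fin N → EuclideanSpace ℝ (Fin d)) (hy : Function.Injective y)
    (G : EuclideanSpace ℝ (Fin d) → Fin N → ℝ → ℝ)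
    (Gx : EuclideanSpace ℝ (Fin d) → Fin N → ℝ → EuclideanSpace ℝ (Fin d))
    (Gv : EuclideanSpace ℝ (Fin d) → Fin N → ℝ → ℝ)
    (hGx : ∀ x ∈ Ω, ∀ (i : Fin N) (v : ℝ), HasGradientAt (fun x' => G x' i v) (Gx x i v) x)
    (hGv : ∀ x ∈ Ω, ∀ (i : Fin N) (v : ℝ), HasDerivAt (fun v' => G x i v') (Gv x i v) v)
    (hGxc : ∀ i : Fin N, ContinuousOn (fun q : EuclideanSpace ℝ (Fin d) × ℝ => Gx q.1 i q.2) (Ω ×ˢ Set.univ))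
    (hGvc : ∀ i : Fin N, ContinuousOn (fun q : EuclideanSpace ℝ (Fin d) × ℝ => Gv q.1 i q.2) (Ω ×ˢ Set.univ))
    (hG2 : ∀ i : Fin N, ContDiffOn ℝ 2 (fun q : EuclideanSpace ℝ (Fin d) × ℝ => G q.1 i q.2) (Ω ×ˢ Set.univ))
    (hMono : ∀ x ∈ Ω, ∀ (i : Fin N) (v : ℝ), Gv x i v < 0)
    (hTwist : ∀ x ∈ Ω, Function.Injective fun q : Fin N × ℝ => (G x q.1 q.2, Gx x q.1 q.2))
    (ψ : Fin N → ℝ) (i j : Fin N) (hij : i ≠ j)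
    (V : Set (EuclideanSpace ℝ (Fin d)))
    (hV : V = {x ∈ Ω | ∃ t : ℝ, G x j (ψ j) - G x i (ψ i + t) = 0}) :
    (∀ x ∈ Ω, ∀ t t' : ℝ,
      G x j (ψ j) - G x i (ψ i + t) = 0 → G x j (ψ j) - G x i (ψ i + t') = 0 → t = t') ∧
    IsOpen V ∧
    ∃ u : EuclideanSpace ℝ (Fin d) → ℝ,
      (∀ x ∈ V, G x j (ψ j) - G x i (ψ i + u x) = 0) ∧
      ContDiffOn ℝ 1 u V ∧
      ∀ x ∈ V,
        HasGradientAt u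
          ((Gv x i (ψ i + u x))⁻¹ • (Gx x j (ψ j) - Gx x i (ψ i + u x))) x ∧
        (Gv x i (ψ i + u x))⁻¹ • (Gx x j (ψ j) - Gx x i (ψ i + u x)) ≠ 0 := by
  have h1 : ∀ x ∈ Ω, ∀ t t' : ℝ,
      G x j (ψ j) - G x i (ψ i + t) = 0 → G x j (ψ j) - G x i (ψ i + t') = 0 → t = t' := by
    intro x hx t t' h h'
    have hanti : StrictAnti (fun v => G x i v) :=
      strictAnti_of_hasDerivAt_neg (fun v => hGv x hx i v) (fun v => hMono x hx i v)
    have : ψ i + t = ψ i + t' := hanti.injective (show G x i (ψ i + t) = G x i (ψ i + t') by linarith)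
    linarith
  have key : ∀ x ∈ Ω, ∀ t : ℝ, G x j (ψ j) - G x i (ψ i + t) = 0 →
      ∃ w : EuclideanSpace ℝ (Fin d) → ℝ,
        (∀ᶠ z in nhds x, G z j (ψ j) - G z i (ψ i + w z) = 0) ∧
        ContDiffAt ℝ 1 w x ∧
        HasGradientAt w ((Gv x i (ψ i + t))⁻¹ • (Gx x j (ψ j) - Gx x i (ψ i + t))) x := by
    intro x hx t ht
    set F : EuclideanSpace ℝ (Fin d) × ℝ → ℝ :=
      fun q => G q.1 j (ψ j) - G q.1 i (ψ i + q.2) with hF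
    have hat : ∀ (k : Fin N) (v : ℝ), ContDiffAt ℝ 2
        (fun q : EuclideanSpace ℝ (Fin d) × ℝ => G q.1 k q.2) (x, v) := fun k v =>
      (hG2 k).contDiffAt ((hΩo.prod isOpen_univ).mem_nhds ⟨hx, mem_univ _⟩)
    have hFc : ContDiffAt ℝ 2 F (x, t) := by
      have a : ContDiffAt ℝ 2 (fun q : EuclideanSpace ℝ (Fin d) × ℝ => G q.1 j (ψ j)) (x, t) :=
        ContDiffAt.comp (x, t) (f := fun q : EuclideanSpace ℝ (Fin d) × ℝ => (q.1, ψ j))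
          (hat j (ψ j)) (by fun_prop)
      have b : ContDiffAt ℝ 2 (fun q : EuclideanSpace ℝ (Fin d) × ℝ => G q.1 i (ψ i + q.2)) (x, t) :=
        ContDiffAt.comp (x, t) (f := fun q : EuclideanSpace ℝ (Fin d) × ℝ => (q.1, ψ i + q.2))
          (hat i (ψ i + t)) (by fun_prop)
      exact a.sub b
    have hFd : HasFDerivAt F (fderiv ℝ F (x, t)) (x, t) :=
      (hFc.differentiableAt (by norm_num)).hasFDerivAt
    have hinl : fderiv ℝ F (x, t) ∘L .inl ℝ _ ℝ =
        InnerProductSpace.toDual ℝ _ (Gx x j (ψ j) - Gx x i (ψ i + t)) := by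
      have e1 : HasFDerivAt (fun z => F (z, t)) (fderiv ℝ F (x, t) ∘L .inl ℝ _ ℝ) x :=
        HasFDerivAt.comp (f := fun z => (z, t)) (g := F) x hFd
          (hasFDerivAt_prodMk_left (𝕜 := ℝ) x t)
      have e2 := (hGx x hx j (ψ j)).hasFDerivAt.sub (hGx x hx i (ψ i + t)).hasFDerivAt
      rw [← map_sub] at e2
      exact e1.unique e2
    have hinr : ∀ s : ℝ, (fderiv ℝ F (x, t) ∘L .inr ℝ _ ℝ) s = s * (- Gv x i (ψ i + t)) := by
      have e1 : HasFDerivAt (fun z => F (x, z)) (fderiv ℝ F (x, t) ∘L .inr ℝ _ ℝ) t :=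
        HasFDerivAt.comp t hFd (hasFDerivAt_prodMk_right x t)
      have e2 : HasDerivAt (fun z => F (x, z)) (- Gv x i (ψ i + t)) t :=
        ((hGv x hx i (ψ i + t)).comp_const_add (ψ i) t).const_sub (G x j (ψ j))
      intro s
      rw [e1.unique e2.hasFDerivAt]
      simp
    have hne : Gv x i (ψ i + t) ≠ 0 := (hMono x hx i _).ne
    have hinv : (fderiv ℝ F (x, t) ∘L .inr ℝ _ ℝ).IsInvertible := by
      refine ⟨ContinuousLinearEquiv.unitsEquivAut ℝ (Units.mk0 _ (neg_ne_zero.mpr hne)), ?_⟩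
      apply ContinuousLinearMap.ext
      intro s
      rw [hinr]
      simp
    have p2 : (2 : WithTop ℕ∞) ≠ 0 := by norm_num
    refine ⟨hFc.implicitFunction p2 hinv, ?_,
      (hFc.contDiffAt_implicitFunction p2 hinv).of_le (by norm_num), ?_⟩
    · filter_upwards [hFc.eventually_apply_implicitFunction p2 hinv] with z hz
      exact hz.trans ht
    · rw [hasGradientAt_iff_hasFDerivAt]
      have e := (hFc.hasStrictFDerivAt_implicitFunction p2 hinv).hasFDerivAt
      refine HasFDerivAt.congr_fderiv e ?_
      rw [hinl]
      apply ContinuousLinearMap.ext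
      intro s
      have hA : ∀ w : ℝ, (fderiv ℝ F (x, t) ∘L .inr ℝ _ ℝ).inverse w =
          - ((Gv x i (ψ i + t))⁻¹ * w) := by
        intro w
        apply hinv.injective
        rw [hinv.self_apply_inverse, hinr]
        field_simp
      simp only [ContinuousLinearMap.neg_comp, ContinuousLinearMap.neg_apply,
        ContinuousLinearMap.comp_apply, hA]
      simp [inner_smul_left]
  classical
  have hmem : ∀ x, x ∈ V ↔ x ∈ Ω ∧ ∃ t : ℝ, G x j (ψ j) - G x i (ψ i + t) = 0 := by
    intro x; rw [hV]; rfl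
  have hVo : IsOpen V := by
    rw [isOpen_iff_mem_nhds]
    intro x hxV
    obtain ⟨hx, t, ht⟩ := (hmem x).1 hxV
    obtain ⟨w, hw, -, -⟩ := key x hx t ht
    filter_upwards [hw, hΩo.mem_nhds hx] with z hz hzΩ
    exact (hmem z).2 ⟨hzΩ, w z, hz⟩
  have hu : ∀ x, ∃ t : ℝ, x ∈ V → G x j (ψ j) - G x i (ψ i + t) = 0 := by
    intro x
    by_cases hxV : x ∈ V
    · obtain ⟨hx, t, ht⟩ := (hmem x).1 hxV
      exact ⟨t, fun _ => ht⟩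
    · exact ⟨0, fun h => absurd h hxV⟩
  choose u hu using hu
  refine ⟨h1, hVo, u, hu, ?_, ?_⟩
  · intro x hxV
    have hx := ((hmem x).1 hxV).1
    obtain ⟨w, hw, hc, -⟩ := key x hx (u x) (hu x hxV)
    refine ContDiffAt.contDiffWithinAt (hc.congr_of_eventuallyEq ?_)
    filter_upwards [hw, hVo.mem_nhds hxV] with z hz hzV
    exact h1 z ((hmem z).1 hzV).1 _ _ (hu z hzV) hz
  · intro x hxV
    have hx := ((hmem x).1 hxV).1
    obtain ⟨w, hw, -, hg⟩ := key x hx (u x) (hu x hxV)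
    refine ⟨?_, ?_⟩
    · rw [hasGradientAt_iff_hasFDerivAt] at hg ⊢
      refine hg.congr_of_eventuallyEq ?_
      filter_upwards [hw, hVo.mem_nhds hxV] with z hz hzV
      exact h1 z ((hmem z).1 hzV).1 _ _ (hu z hzV) hz
    · refine smul_ne_zero (inv_ne_zero (hMono x hx i _).ne) ?_
      intro h0
      have := @hTwist x hx (j, ψ j) (i, ψ i + u x)
        (Prod.ext (sub_eq_zero.1 (hu x hxV)) (sub_eq_zero.1 h0))
      exact hij (congrArg Prod.fst this).symm
end
end

section
/- Let U ⊆ ℝ^d be a path-connected open set and S ⊆ ℝ^d a closed set with ℋ^{d−1}(S) = 0, where ℋ^{d−1} denotes the (d−1)-dimensional Hausdorff measure. Then U \ S is path-connected. -/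
set_option autoImplicit false

open MeasureTheory Set

noncomputable section

open Filter Topology in
lemma aux_line {d : ℕ} (hd : 1 ≤ d) (S : Set (EuclideanSpace ℝ (Fin d)))
    (hS : μH[(d : ℝ) - 1] S = 0) (v : EuclideanSpace ℝ (Fin d)) (hv : v ≠ 0)
    (O : Set (EuclideanSpace ℝ (Fin d))) (hO : IsOpen O) (hne : O.Nonempty) :
    ∃ x ∈ O, ∀ t : ℝ, x + t • v ∉ S := by
  have hfr : Module.finrank ℝ (EuclideanSpace ℝ (Fin d) ⧸ Submodule.span ℝ {v})
      = Module.finrank ℝ (Fin (d - 1) → ℝ) := by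
    have h1 := Submodule.finrank_quotient_add_finrank (Submodule.span ℝ {v})
    rw [finrank_span_singleton hv, finrank_euclideanSpace_fin] at h1
    rw [Module.finrank_fin_fun]
    omega
  let e := LinearEquiv.ofFinrankEq _ _ hfr
  let L0 : EuclideanSpace ℝ (Fin d) →ₗ[ℝ] (Fin (d - 1) → ℝ) :=
    e.toLinearMap ∘ₗ (Submodule.span ℝ {v}).mkQ
  let L : EuclideanSpace ℝ (Fin d) →L[ℝ] (Fin (d - 1) → ℝ) := LinearMap.toContinuousLinearMap L0
  have hLsurj : Function.Surjective L :=
    e.surjective.comp (Submodule.mkQ_surjective _)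
  have hLv : L v = 0 := by
    change e ((Submodule.span ℝ {v}).mkQ v) = 0
    have : (Submodule.span ℝ {v}).mkQ v = 0 := by
      rw [Submodule.mkQ_apply, Submodule.Quotient.mk_eq_zero]
      exact Submodule.mem_span_singleton_self v
    rw [this, map_zero]
  have hnull : volume (L '' S) = 0 := by
    have hcast : (d : ℝ) - 1 = ((d - 1 : ℕ) : ℝ) := by push_cast [hd]; ring
    have h0 : (0 : ℝ) ≤ (d : ℝ) - 1 := by rw [hcast]; positivity
    have h1 := L.lipschitz.hausdorffMeasure_image_le h0 S
    rw [hS, mul_zero] at h1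
    have h2 : (μH[(d : ℝ) - 1] : Measure (Fin (d - 1) → ℝ)) = volume := by
      rw [← hausdorffMeasure_pi_real, Fintype.card_fin, hcast]
    rw [h2] at h1
    exact le_antisymm h1 bot_le
  have hopen : IsOpen (L '' O) := L.isOpenMap hLsurj O hO
  have hpos := hopen.measure_pos volume (hne.image L)
  have hns : ¬ (L '' O ⊆ L '' S) := fun h => by
    have := measure_mono (μ := volume) h
    rw [hnull] at this
    exact absurd hpos (not_lt.mpr this)
  obtain ⟨_, ⟨x, hx, rfl⟩, hxS⟩ := Set.not_subset.mp hns
  refine ⟨x, hx, fun t ht => hxS ⟨_, ht, ?_⟩⟩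
  rw [map_add, map_smul, hLv, smul_zero, add_zero]

lemma aux_ball {d : ℕ} (hd : 1 ≤ d) (S B : Set (EuclideanSpace ℝ (Fin d)))
    (hSc : IsClosed S) (hS : μH[(d : ℝ) - 1] S = 0) (hBo : IsOpen B) (hBc : Convex ℝ B)
    (x y : EuclideanSpace ℝ (Fin d)) (hx : x ∈ B \ S) (hy : y ∈ B \ S) :
    JoinedIn (B \ S) x y := by
  rcases eq_or_ne x y with rfl | hne
  · exact JoinedIn.refl hx
  have hBS : IsOpen (B \ S) := hBo.sdiff hSc
  obtain ⟨e1, he1, hb1⟩ := Metric.isOpen_iff.mp hBS x hx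
  obtain ⟨e2, he2, hb2⟩ := Metric.isOpen_iff.mp hBS y hy
  obtain ⟨x', hx', ht⟩ := aux_line hd S hS (y - x) (sub_ne_zero.mpr hne.symm)
    (Metric.ball x (min e1 e2)) Metric.isOpen_ball ⟨x, Metric.mem_ball_self (lt_min he1 he2)⟩
  have hx1 : x' ∈ Metric.ball x e1 := Metric.ball_subset_ball (min_le_left _ _) hx'
  have hy1 : x' + (y - x) ∈ Metric.ball y e2 := by
    have := Metric.ball_subset_ball (min_le_right e1 e2) hx'
    rw [Metric.mem_ball, dist_eq_norm] at this ⊢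
    convert this using 2
    abel
  have j1 : JoinedIn (B \ S) x x' :=
    (((convex_ball x e1).isPathConnected ⟨x', hx1⟩).joinedIn x (Metric.mem_ball_self he1) x' hx1).mono hb1
  have j3 : JoinedIn (B \ S) (x' + (y - x)) y :=
    (((convex_ball y e2).isPathConnected ⟨_, hy1⟩).joinedIn _ hy1 y (Metric.mem_ball_self he2)).mono hb2
  have j2 : JoinedIn (B \ S) x' (x' + (y - x)) := by
    refine JoinedIn.mono (JoinedIn.of_segment_subset (s := segment ℝ x' (x' + (y - x))) subset_rfl) ?_
    intro z hz
    refine ⟨hBc.segment_subset (hb1 hx1).1 (hb2 hy1).1 hz, ?_⟩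
    rw [segment_eq_image'] at hz
    obtain ⟨t, -, rfl⟩ := hz
    simpa using ht t
  exact (j1.trans j2).trans j3

/-- Lemma 3.5: removing from a path-connected open subset of `ℝ^d` a closed set of zero
`(d−1)`-dimensional Hausdorff measure preserves path-connectedness. -/
theorem pathconnected_of_remove_small_set
    {d : ℕ} (hd : 1 ≤ d) (U S : Set (EuclideanSpace ℝ (Fin d)))
    (hUo : IsOpen U) (hUc : IsPathConnected U)
    (hSc : IsClosed S) (hS : μH[(d : ℝ) - 1] S = 0) :
    IsPathConnected (U \ S) := by
  have hdense : ∀ O : Set (EuclideanSpace ℝ (Fin d)), IsOpen O → O.Nonempty → ∃ x ∈ O, x ∉ S := by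
    intro O hO hne
    obtain ⟨x, hx, h⟩ := aux_line hd S hS (EuclideanSpace.single ⟨0, hd⟩ (1 : ℝ)) (by simp) O hO hne
    exact ⟨x, hx, by simpa using h 0⟩
  let P : EuclideanSpace ℝ (Fin d) → EuclideanSpace ℝ (Fin d) → Prop := fun a b =>
    ∃ A B : Set (EuclideanSpace ℝ (Fin d)), IsOpen A ∧ IsOpen B ∧ a ∈ A ∧ b ∈ B ∧
      ∀ x ∈ A, ∀ y ∈ B, x ∉ S → y ∉ S → JoinedIn (U \ S) x y
  have hP : ∀ x ∈ U, ∀ y ∈ U, P x y := by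
    intro x hx y hy
    refine hUc.isConnected.isPreconnected.induction₂ P ?_ ?_ ?_ hx hy
    · intro a ha
      obtain ⟨r, hr, hb⟩ := Metric.isOpen_iff.mp hUo a ha
      filter_upwards [mem_nhdsWithin_of_mem_nhds (Metric.ball_mem_nhds a hr)] with b hbm
      exact ⟨_, _, Metric.isOpen_ball, Metric.isOpen_ball, Metric.mem_ball_self hr, hbm,
        fun x hx y hy hxS hyS => (aux_ball hd S _ hSc hS Metric.isOpen_ball (convex_ball a r) x y
          ⟨hx, hxS⟩ ⟨hy, hyS⟩).mono (diff_subset_diff_left hb)⟩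
    · rintro a b c _ _ _ ⟨A, B, hA, hB, ha, hb, h1⟩ ⟨B', C, hB', hC, hb', hc, h2⟩
      obtain ⟨m, hm, hmS⟩ := hdense (B ∩ B') (hB.inter hB') ⟨b, hb, hb'⟩
      exact ⟨A, C, hA, hC, ha, hc, fun x hx y hy hxS hyS =>
        (h1 x hx m hm.1 hxS hmS).trans (h2 m hm.2 y hy hmS hyS)⟩
    · rintro a b _ _ ⟨A, B, hA, hB, ha, hb, h1⟩
      exact ⟨B, A, hB, hA, hb, ha, fun x hx y hy hxS hyS => (h1 y hy x hx hyS hxS).symm⟩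
  obtain ⟨p, hp, hpS⟩ := hdense U hUo hUc.nonempty
  refine ⟨p, ⟨hp, hpS⟩, fun {y} hy => ?_⟩
  obtain ⟨A, B, -, -, ha, hb, h⟩ := hP p hp y hy.1
  exact h p ha y hb hpS hy.2
end
end

section
/- Assume G ∈ C²(Ω × Y × ℝ) satisfies (Reg), (Mono), (Twist), (Gen_Ω) and (Gen_∂X), that X ⊆ Ω is compact, that ρ is a continuous probability density supported in X, and that int(X) ∩ {ρ > 0} is path-connected. Let ψ ∈ ℝ^N satisfy Hᵢ(ψ) > 0 for every i ∈ {1,…,N}. Then the graph 𝒢_ψ with vertex set {1,…,N} and edge set E = {(i,j) : ∂Hᵢ/∂ψ_j(ψ) > 0} is connected. -/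
set_option autoImplicit false

open MeasureTheory Set

noncomputable section

variable {d N : ℕ}

open Filter Topology

section aux

lemma aux_ind {E : Type*} {A B : Set E} {r : E → ℝ} {x : E} (h : x ∈ A ↔ x ∈ B) :
    A.indicator r x = B.indicator r x := by
  by_cases hx : x ∈ A
  · rw [indicator_of_mem hx, indicator_of_mem (h.1 hx)]
  · rw [indicator_of_notMem hx, indicator_of_notMem (fun h' => hx (h.2 h'))]

variable {P : Type*} [NormedAddCommGroup P] [NormedSpace ℝ P]

lemma aux_local_to_global {E : Type*} [TopologicalSpace E] [T2Space E] [LocallyCompactSpace E]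
    [MeasurableSpace E] [BorelSpace E] (μ : Measure E) [IsFiniteMeasureOnCompacts μ]
    (L : P → Set E) (hL : ∀ p, MeasurableSet (L p)) (p0 : P) (ρ : E → ℝ) (hρ : Continuous ρ)
    (hρc : HasCompactSupport ρ)
    (h : ∀ x ∈ tsupport ρ, ∃ U : Set E, IsOpen U ∧ x ∈ U ∧ ∀ r : E → ℝ, Continuous r →
      HasCompactSupport r → tsupport r ⊆ U →
      DifferentiableAt ℝ (fun p => ∫ x, (L p).indicator r x ∂μ) p0) :
    DifferentiableAt ℝ (fun p => ∫ x, (L p).indicator ρ x ∂μ) p0 := by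
  have hK : IsCompact (tsupport ρ) := hρc
  choose! U hUo hxU hU using h
  obtain ⟨t, ht, hcov⟩ := hK.elim_nhds_subcover U (fun x hx => (hUo x hx).mem_nhds (hxU x hx))
  let eq := t.equivFin.symm
  obtain ⟨f, hf1, hf2, -, hf4⟩ := exists_continuous_sum_one_of_isOpen_isCompact
    (s := fun i => U (eq i)) (t := tsupport ρ) (fun i => hUo _ (ht _ (eq i).2)) hK (by
      intro x hx
      obtain ⟨y, hy, hxy⟩ := mem_iUnion₂.1 (hcov hx)
      exact mem_iUnion.2 ⟨eq.symm ⟨y, hy⟩, by simpa using hxy⟩)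
  have key : ∀ p, ∫ x, (L p).indicator ρ x ∂μ
      = ∑ i, ∫ x, (L p).indicator (fun x => f i x * ρ x) x ∂μ := by
    intro p
    rw [← integral_finsetSum]
    · congr 1
      ext x
      by_cases hx : x ∈ L p
      · simp only [indicator_of_mem hx]
        rw [← Finset.sum_mul]
        by_cases hx' : x ∈ tsupport ρ
        · have := hf2 hx'
          simp only [Finset.sum_apply, Pi.one_apply] at this
          rw [this, one_mul]
        · rw [image_eq_zero_of_notMem_tsupport hx', mul_zero]
      · simp [indicator_of_notMem hx]
    · intro i _
      exact (Continuous.integrable_of_hasCompactSupport ((f i).continuous.mul hρ)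
        (hρc.mul_left)).indicator (hL p)
  simp_rw [key]
  apply DifferentiableAt.fun_sum
  intro i _
  apply hU (eq i) (ht _ (eq i).2) _ ((f i).continuous.mul hρ) hρc.mul_left
  exact (tsupport_mul_subset_left).trans (hf1 i)

lemma aux_const (L : P → Set ℝ) (p0 : P) (s0 : ℝ) (c : Prop)
    (h : ∀ᶠ q : P × ℝ in 𝓝 (p0, s0), (q.2 ∈ L q.1 ↔ c)) :
    ∃ V : Set ℝ, IsOpen V ∧ s0 ∈ V ∧ ∀ r : ℝ → ℝ, Continuous r →
      HasCompactSupport r → tsupport r ⊆ V →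
      DifferentiableAt ℝ (fun p => ∫ s, (L p).indicator r s) p0 := by
  rw [nhds_prod_eq, eventually_prod_iff] at h
  obtain ⟨pa, hpa, pb, hpb, h⟩ := h
  obtain ⟨V, hV, hVo, hs0⟩ := eventually_nhds_iff.1 hpb
  refine ⟨V, hVo, hs0, fun r hr hrc hrV => ?_⟩
  have : (fun p => ∫ s, (L p).indicator r s) =ᶠ[𝓝 p0]
      fun _ => ∫ s, {s : ℝ | c}.indicator r s := by
    filter_upwards [hpa] with p hp
    congr 1
    ext s
    by_cases hs : s ∈ V
    · have := h hp (hV s hs)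
      simp only at this
      by_cases hc : c <;> simp [indicator, this, hc]
    · have : r s = 0 := image_eq_zero_of_notMem_tsupport (fun h => hs (hrV h))
      simp [indicator, this]
  exact this.differentiableAt_iff.2 (differentiableAt_const _)

lemma aux_single [CompleteSpace P] (L : P → Set ℝ) (p0 : P) (s0 : ℝ) (f : P × ℝ → ℝ)
    (h : ∀ᶠ q : P × ℝ in 𝓝 (p0, s0), (q.2 ∈ L q.1 ↔ 0 ≤ f q))
    (f' : P × ℝ →L[ℝ] ℝ) (hf : HasStrictFDerivAt f f' (p0, s0)) (hf0 : f (p0, s0) = 0)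
    (ha : f' (0, 1) ≠ 0) :
    ∃ V : Set ℝ, IsOpen V ∧ s0 ∈ V ∧ ∀ r : ℝ → ℝ, Continuous r →
      HasCompactSupport r → tsupport r ⊆ V →
      DifferentiableAt ℝ (fun p => ∫ s, (L p).indicator r s) p0 := by
  have hinv : (f' ∘L .inr ℝ P ℝ).IsInvertible := by
    refine ⟨ContinuousLinearEquiv.unitsEquivAut ℝ (Units.mk0 _ ha), ?_⟩
    ext
    simp
  set τ := hf.implicitFunctionOfProdDomain hinv with hτ
  have hτd : DifferentiableAt ℝ τ p0 :=
    (hf.hasStrictFDerivAt_implicitFunctionOfProdDomain hinv).hasFDerivAt.differentiableAt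
  have hτ0 : Tendsto τ (𝓝 p0) (𝓝 s0) := hf.tendsto_implicitFunctionOfProdDomain hinv
  have hτz := hf.eventually_apply_implicitFunctionOfProdDomain hinv
  rw [hf0] at hτz
  have hτp0 : τ p0 = s0 := tendsto_nhds_unique (hτd.continuousAt.tendsto) hτ0
  -- slope
  have hslope : ∀ᶠ q : (P × ℝ) × (P × ℝ) in 𝓝 ((p0, s0), (p0, s0)),
      ‖f q.1 - f q.2 - f' (q.1 - q.2)‖ ≤ (|f' (0, 1)| / 2) * ‖q.1 - q.2‖ :=
    hf.isLittleO.def (by positivity)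
  rw [nhds_prod_eq] at hslope
  obtain ⟨t, ht, hslope⟩ := mem_prod_self_iff.1 hslope
  obtain ⟨pa, hpa, pb, hpb, hall⟩ := eventually_prod_iff.1 (nhds_prod_eq (X := P) (Y := ℝ) ▸ (h.and (eventually_mem_set.2 ht)))
  obtain ⟨V, hV, hVo, hs0⟩ := eventually_nhds_iff.1 hpb
  refine ⟨V, hVo, hs0, fun r hr hrc hrV => ?_⟩
  have hri : Integrable r := hr.integrable_of_hasCompactSupport hrc
  have hD : DifferentiableAt ℝ (fun p => ∫ s in Iic (τ p), r s) p0 := by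
    have e1 : (fun p => ∫ s in Iic (τ p), r s) =
        fun p => (∫ s in Iic s0, r s) + ∫ s in s0..(τ p), r s := by
      ext p
      rw [← intervalIntegral.integral_Iic_sub_Iic hri.integrableOn hri.integrableOn]
      ring
    rw [e1]
    apply DifferentiableAt.const_add
    have hd : DifferentiableAt ℝ (fun u => ∫ s in s0..u, r s) (τ p0) :=
      (hr.integral_hasStrictDerivAt s0 (τ p0)).hasDerivAt.differentiableAt
    exact hd.comp p0 hτd
  have hkey : ∀ᶠ p in 𝓝 p0, ∀ s ∈ V, (s ∈ L p ↔ 0 ≤ f' (0,1) * (s - τ p)) := by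
    filter_upwards [hpa, hτz, hτ0.eventually (hVo.mem_nhds hs0)] with p hp hz hpV s hs
    have h1 := (hall hp (hV s hs)).1
    have h2 := hslope (mk_mem_prod (hall hp (hV s hs)).2 (hall hp (hV _ hpV)).2)
    simp only [mem_ofPred_eq] at h1 h2
    rw [h1]
    have e2 : ((p, s) : P × ℝ) - (p, τ p) = (s - τ p) • ((0, 1) : P × ℝ) := by
      simp
    have hn : ‖((0, 1) : P × ℝ)‖ = 1 := by simp [Prod.norm_def]
    rw [hz, e2, map_smul, norm_smul, hn, sub_zero, smul_eq_mul, mul_one, Real.norm_eq_abs,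
      Real.norm_eq_abs, abs_le] at h2
    generalize f' (0, 1) = a at *
    generalize s - τ p = u at *
    generalize f (p, s) = z at *
    have h3 : |a| / 2 * |u| = |u * a| / 2 := by rw [abs_mul]; ring
    rw [h3] at h2
    rw [mul_comm a u]
    rcases abs_cases (u * a) with h | h <;> constructor <;> intro _ <;> linarith
  rcases lt_or_gt_of_ne ha with ha' | ha'
  · have : (fun p => ∫ s, (L p).indicator r s) =ᶠ[𝓝 p0] fun p => ∫ s in Iic (τ p), r s := by
      filter_upwards [hkey] with p hp
      rw [← integral_indicator measurableSet_Iic]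
      congr 1
      ext s
      by_cases hs : s ∈ V
      · have : s ∈ L p ↔ s ∈ Iic (τ p) := by
          rw [hp s hs, mem_Iic]
          constructor
          · intro h; nlinarith
          · intro h; nlinarith
        exact aux_ind this
      · have : r s = 0 := image_eq_zero_of_notMem_tsupport (fun h => hs (hrV h))
        simp [indicator, this]
    exact this.differentiableAt_iff.2 hD
  · have : (fun p => ∫ s, (L p).indicator r s) =ᶠ[𝓝 p0]
        fun p => (∫ s, r s) - ∫ s in Iic (τ p), r s := by
      filter_upwards [hkey] with p hp
      rw [← intervalIntegral.integral_Iic_add_Ioi (b := τ p) hri.integrableOn hri.integrableOn,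
        add_sub_cancel_left, ← integral_Ici_eq_integral_Ioi,
        ← integral_indicator measurableSet_Ici]
      congr 1
      ext s
      by_cases hs : s ∈ V
      · have : s ∈ L p ↔ s ∈ Ici (τ p) := by
          rw [hp s hs, mem_Ici]
          constructor
          · intro h; nlinarith
          · intro h; nlinarith
        exact aux_ind this
      · have : r s = 0 := image_eq_zero_of_notMem_tsupport (fun h => hs (hrV h))
        simp [indicator, this]
    exact this.differentiableAt_iff.2 (hD.const_sub _)

lemma aux_multi [CompleteSpace P] {ι : Type*} [Finite ι] (L : P → Set ℝ) (p0 : P) (s0 : ℝ)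
    (f : ι → P × ℝ → ℝ)
    (h : ∀ᶠ q : P × ℝ in 𝓝 (p0, s0), (q.2 ∈ L q.1 ↔ ∀ k, 0 ≤ f k q))
    (f' : ι → P × ℝ →L[ℝ] ℝ) (hf : ∀ k, HasStrictFDerivAt (f k) (f' k) (p0, s0))
    (huniq : ∀ k l, f k (p0, s0) = 0 → f l (p0, s0) = 0 → k = l)
    (ha : ∀ k, f k (p0, s0) = 0 → f' k (0, 1) ≠ 0) :
    ∃ V : Set ℝ, IsOpen V ∧ s0 ∈ V ∧ ∀ r : ℝ → ℝ, Continuous r →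
      HasCompactSupport r → tsupport r ⊆ V →
      DifferentiableAt ℝ (fun p => ∫ s, (L p).indicator r s) p0 := by
  by_cases hneg : ∃ k, f k (p0, s0) < 0
  · obtain ⟨k, hk⟩ := hneg
    apply aux_const L p0 s0 False
    filter_upwards [h, (hf k).hasFDerivAt.continuousAt.eventually (gt_mem_nhds hk)] with q h1 h2
    rw [h1]
    simp only [iff_false, not_forall, not_le]
    exact ⟨k, h2⟩
  push Not at hneg
  by_cases hz : ∃ k, f k (p0, s0) = 0
  · obtain ⟨k, hk⟩ := hz
    apply aux_single L p0 s0 (f k) _ (f' k) (hf k) hk (ha k hk)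
    have : ∀ᶠ q in 𝓝 (p0, s0), ∀ l, l ≠ k → 0 < f l q := by
      rw [eventually_all]
      intro l
      by_cases hl : l = k
      · simp [hl]
      have hpos : 0 < f l (p0, s0) := lt_of_le_of_ne (hneg l)
        (fun h0 => hl (huniq _ _ h0.symm hk))
      filter_upwards [(hf l).hasFDerivAt.continuousAt.eventually (lt_mem_nhds hpos)] with q hq _
      exact hq
    filter_upwards [h, this] with q h1 h2
    rw [h1]
    refine ⟨fun h => h k, fun h l => ?_⟩
    by_cases hl : l = k
    · rw [hl]; exact h
    · exact (h2 l hl).le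
  · push Not at hz
    apply aux_const L p0 s0 True
    have : ∀ᶠ q in 𝓝 (p0, s0), ∀ l, 0 < f l q := by
      rw [eventually_all]
      intro l
      have hpos : 0 < f l (p0, s0) := lt_of_le_of_ne (hneg l) (hz l).symm
      exact (hf l).hasFDerivAt.continuousAt.eventually (lt_mem_nhds hpos)
    filter_upwards [h, this] with q h1 h2
    rw [h1, iff_true]
    exact fun l => (h2 l).le

lemma aux_null_proj {d : ℕ} (hd : 1 ≤ d) (e : EuclideanSpace ℝ (Fin d)) (he : e ≠ 0)
    (Z : Set (EuclideanSpace ℝ (Fin d))) (hZ : μH[(d : ℝ) - 1] Z = 0) :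
    ∀ᵐ x : EuclideanSpace ℝ (Fin d), ∀ s : ℝ, x + s • e ∉ Z := by
  set K := (Submodule.span ℝ {e})ᗮ with hK
  let Lp : EuclideanSpace ℝ (Fin d) →L[ℝ] K := K.orthogonalProjectionOnto
  obtain ⟨n, rfl⟩ : ∃ n, d = n + 1 := ⟨d - 1, by omega⟩
  have hfr : Module.finrank ℝ K = n := by
    have : Fact (Module.finrank ℝ (EuclideanSpace ℝ (Fin (n+1))) = n + 1) := ⟨by simp⟩
    exact Submodule.finrank_orthogonal_span_singleton he
  have hs : Function.Surjective Lp := by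
    intro y
    exact ⟨y, Submodule.orthogonalProjectionOnto_mem_subspace_eq_self y⟩
  have hlip : LipschitzWith 1 Lp := by
    have := Lp.lipschitz
    refine this.weaken ?_
    exact Submodule.orthogonalProjectionOnto_norm_le K
  have h0 : μH[(Module.finrank ℝ K : ℝ)] (Lp '' Z) = 0 := by
    have := hlip.hausdorffMeasure_image_le (d := (Module.finrank ℝ K : ℝ)) (by positivity) Z
    rw [hfr] at this ⊢
    have e1 : ((n + 1 : ℕ) : ℝ) - 1 = n := by push_cast; ring
    rw [e1] at hZ
    rw [hZ, mul_zero] at this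
    exact le_antisymm this bot_le
  set T := toMeasurable μH[(Module.finrank ℝ K : ℝ)] (Lp '' Z) with hT
  have hT0 : μH[(Module.finrank ℝ K : ℝ)] T = 0 := by rw [hT, measure_toMeasurable, h0]
  have hae := (ae_comp_linearMap_mem_iff (Lp : EuclideanSpace ℝ (Fin (n+1)) →ₗ[ℝ] K) volume
    (μH[(Module.finrank ℝ K : ℝ)] : Measure K) hs (measurableSet_toMeasurable _ _).compl).2 (by
      rw [ae_iff]
      simpa using hT0)
  filter_upwards [hae] with x hx s hxs
  apply hx
  apply subset_toMeasurable
  refine ⟨_, hxs, ?_⟩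
  have : Lp e = 0 := by
    apply Submodule.orthogonalProjectionOnto_apply_of_mem_orthogonal
    rw [hK, Submodule.orthogonal_orthogonal]
    exact Submodule.mem_span_singleton_self e
  simp [this]

lemma aux_avg {d : ℕ} (e : EuclideanSpace ℝ (Fin d)) (w : ℝ → ℝ) (hw : Continuous w)
    (hwi : Integrable w) (hw1 : ∫ s, w s = 1) (g : EuclideanSpace ℝ (Fin d) → ℝ)
    (hgm : Measurable g) (hg : Integrable g) :
    ∫ x, g x = ∫ x, ∫ s, w s * g (x + s • e) := by
  have hint : Integrable (fun q : EuclideanSpace ℝ (Fin d) × ℝ => w q.2 * g (q.1 + q.2 • e))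
      (volume.prod volume) := by
    rw [integrable_prod_iff']
    · constructor
      · refine Eventually.of_forall fun s => ?_
        exact (hg.comp_add_right (s • e)).const_mul (w s)
      · simp only [norm_mul]
        simp_rw [integral_const_mul]
        have : ∀ s : ℝ, ∫ x, ‖g (x + s • e)‖ = ∫ x, ‖g x‖ := fun s =>
          integral_add_right_eq_self (fun x => ‖g x‖) (s • e)
        simp_rw [this]
        exact hwi.norm.mul_const _
    · apply Measurable.aestronglyMeasurable
      exact (hw.measurable.comp measurable_snd).mul (hgm.comp (by fun_prop))
  rw [integral_integral_swap hint]
  simp_rw [integral_const_mul]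
  have : ∀ s : ℝ, ∫ x, g (x + s • e) = ∫ x, g x := fun s =>
    integral_add_right_eq_self g (s • e)
  simp_rw [this, integral_mul_const, hw1, one_mul]

lemma aux_meas {α : Type*} [MeasurableSpace α] {μ : Measure α} {N : ℕ}
    (g : (Fin N → ℝ) → α → ℝ) (hg : ∀ p, AEStronglyMeasurable (g p) μ) (p0 : Fin N → ℝ)
    (hdiff : ∀ᵐ a ∂μ, DifferentiableAt ℝ (fun p => g p a) p0) :
    AEStronglyMeasurable (fun a => fderiv ℝ (fun p => g p a) p0) μ := by
  have h1 : ∀ j : Fin N, AEStronglyMeasurable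
      (fun a => fderiv ℝ (fun p => g p a) p0 (Pi.single j 1)) μ := by
    intro j
    have hn : Tendsto (fun n : ℕ => (n : ℝ)) atTop atTop := tendsto_natCast_atTop_atTop
    refine aestronglyMeasurable_of_tendsto_ae atTop
      (f := fun (n : ℕ) a => (n : ℝ) • (g (p0 + (n : ℝ)⁻¹ • Pi.single j 1) a - g p0 a)) ?_ ?_
    · intro n
      exact AEStronglyMeasurable.const_smul ((hg _).sub (hg _)) (n : ℝ)
    · filter_upwards [hdiff] with a ha
      exact (ha.hasFDerivAt.lim_real (Pi.single j 1)).comp hn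
  have h2 : (fun a => fderiv ℝ (fun p => g p a) p0) = fun a =>
      ∑ j : Fin N, (fderiv ℝ (fun p => g p a) p0 (Pi.single j 1)) •
        (ContinuousLinearMap.proj j : (Fin N → ℝ) →L[ℝ] ℝ) := by
    ext a v
    have : v = ∑ j, v j • (Pi.single j 1 : Fin N → ℝ) := by
      ext i; simp [Finset.sum_apply, Pi.single_apply]
    conv_lhs => rw [this]
    simp [mul_comm]
  rw [h2]
  apply Finset.aestronglyMeasurable_fun_sum
  intro j _
  exact (h1 j).smul_const _

lemma aux_k {E : Type*} [NormedAddCommGroup E] [NormedSpace ℝ E] (f : P × E → ℝ) (p0 : P)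
    (x0 e : E) (hf : ContDiffAt ℝ 1 f (p0, x0))
    (h : f (p0, x0) = 0 → fderiv ℝ f (p0, x0) (0, e) ≠ 0) :
    ∃ t ∈ 𝓝 (p0, x0), ∃ C : ℝ, 0 ≤ C ∧ (∀ q ∈ t, f q = 0 → fderiv ℝ f q (0, e) ≠ 0) ∧
      ∀ p x, volume {s : ℝ | (p, x + s • e) ∈ t ∧ (p0, x + s • e) ∈ t ∧
        ¬ (0 ≤ f (p, x + s • e) ↔ 0 ≤ f (p0, x + s • e))} ≤ ENNReal.ofReal (C * ‖p - p0‖) := by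
  rcases lt_trichotomy (f (p0, x0)) 0 with h0 | h0 | h0
  · refine ⟨{q | f q < 0}, hf.continuousAt.eventually (gt_mem_nhds h0), 0, le_rfl, ?_, ?_⟩
    · intro q hq hq'
      simp only [mem_ofPred_eq] at hq
      exact absurd hq' hq.ne
    · intro p x
      have : {s : ℝ | (p, x + s • e) ∈ {q | f q < 0} ∧ (p0, x + s • e) ∈ {q | f q < 0} ∧
        ¬ (0 ≤ f (p, x + s • e) ↔ 0 ≤ f (p0, x + s • e))} = ∅ := by
        ext s
        simp only [mem_ofPred_eq, mem_empty_iff_false, iff_false]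
        rintro ⟨h1, h2, h3⟩
        exact h3 ⟨fun h => by linarith, fun h => by linarith⟩
      rw [this]; simp
  · have ha := h h0
    set f' := fderiv ℝ f (p0, x0) with hf'
    have hs : HasStrictFDerivAt f f' (p0, x0) := hf.hasStrictFDerivAt (by norm_num)
    set a := f' (0, e) with hadef
    have hene : (0:ℝ) < ‖e‖ := by
      rw [norm_pos_iff]
      rintro rfl
      apply ha
      rw [hadef, ← Prod.zero_eq_mk, map_zero]
    have hslope : ∀ᶠ q : (P × E) × (P × E) in 𝓝 ((p0, x0), (p0, x0)),
        ‖f q.1 - f q.2 - f' (q.1 - q.2)‖ ≤ (|a| / 2 / ‖e‖) * ‖q.1 - q.2‖ :=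
      hs.isLittleO.def (by positivity)
    rw [nhds_prod_eq] at hslope
    obtain ⟨t1, ht1, hslope⟩ := mem_prod_self_iff.1 hslope
    obtain ⟨K, t2, ht2, hK⟩ := hs.exists_lipschitzOnWith
    have hcont : ContinuousAt (fun q => fderiv ℝ f q (0, e)) (p0, x0) := by
      have := (hf.fderiv_right (m := 0) (by norm_num)).continuousAt
      exact this.clm_apply continuousAt_const
    have ht3 := hcont.eventually_ne ha
    refine ⟨t1 ∩ t2 ∩ {q | fderiv ℝ f q (0, e) ≠ 0}, inter_mem (inter_mem ht1 ht2) ht3,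
      4 * K / |a|, by positivity, fun q hq _ => hq.2, fun p x => ?_⟩
    refine (Real.volume_le_diam _).trans ?_
    apply Metric.ediam_le
    rintro s ⟨⟨⟨hs1, hs2⟩, -⟩, ⟨⟨hs3, hs4⟩, -⟩, hs5⟩ s' ⟨⟨⟨hs1', hs2'⟩, -⟩, ⟨⟨hs3', hs4'⟩, -⟩, hs5'⟩
    have key : ∀ u : ℝ, (p, x + u • e) ∈ t2 → (p0, x + u • e) ∈ t2 →
        ¬ (0 ≤ f (p, x + u • e) ↔ 0 ≤ f (p0, x + u • e)) →
        |f (p0, x + u • e)| ≤ K * ‖p - p0‖ := by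
      intro u hu1 hu2 hu3
      have := hK.dist_le_mul _ hu1 _ hu2
      rw [Real.dist_eq, dist_eq_norm] at this
      have e1 : ‖((p, x + u • e) : P × E) - (p0, x + u • e)‖ = ‖p - p0‖ := by
        simp [Prod.norm_def]
      rw [e1] at this
      refine le_trans ?_ this
      by_cases h1 : 0 ≤ f (p, x + u • e)
      · have h2 : f (p0, x + u • e) < 0 := by
          by_contra h2; push Not at h2; exact hu3 ⟨fun _ => h2, fun _ => h1⟩
        rw [abs_of_neg h2, abs_of_nonneg] <;> linarith
      · push Not at h1
        have h2 : 0 ≤ f (p0, x + u • e) := by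
          by_contra h2; push Not at h2; exact hu3 ⟨fun h => by linarith, fun h => by linarith⟩
        rw [abs_of_nonneg h2, abs_of_nonpos] <;> linarith
    have k1 := key s hs2 hs4 hs5
    have k2 := key s' hs2' hs4' hs5'
    have k3 := hslope (mk_mem_prod hs3 hs3')
    simp only [mem_ofPred_eq] at k3
    have e2 : ((p0, x + s • e) : P × E) - (p0, x + s' • e) = (s - s') • ((0, e) : P × E) := by
      simp [sub_smul]
    have hn : ‖((0, e) : P × E)‖ = ‖e‖ := by simp [Prod.norm_def]
    rw [e2, map_smul, norm_smul, hn, smul_eq_mul, ← hadef, Real.norm_eq_abs,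
      Real.norm_eq_abs] at k3
    have e3 : |a| / 2 / ‖e‖ * (|s - s'| * ‖e‖) = |s - s'| * |a| / 2 := by
      field_simp
    rw [e3] at k3
    rw [edist_dist, Real.dist_eq]
    apply ENNReal.ofReal_le_ofReal
    have k4 : |s - s'| * |a| ≤ |f (p0, x + s • e)| + |f (p0, x + s' • e)| + |s - s'| * |a| / 2 := by
      rw [← abs_mul] at k3 ⊢
      rcases abs_cases (f (p0, x + s • e)) with h | h <;>
      rcases abs_cases (f (p0, x + s' • e)) with h' | h' <;>
      rcases abs_cases ((s - s') * a) with h'' | h'' <;> rw [abs_le] at k3 <;> linarith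
    have hapos : 0 < |a| := abs_pos.2 ha
    rw [div_mul_eq_mul_div, le_div_iff₀ hapos]
    linarith
  · refine ⟨{q | 0 < f q}, hf.continuousAt.eventually (lt_mem_nhds h0), 0, le_rfl, ?_, ?_⟩
    · intro q hq hq'
      simp only [mem_ofPred_eq] at hq
      exact absurd hq' hq.ne'
    · intro p x
      have : {s : ℝ | (p, x + s • e) ∈ {q | 0 < f q} ∧ (p0, x + s • e) ∈ {q | 0 < f q} ∧
        ¬ (0 ≤ f (p, x + s • e) ↔ 0 ≤ f (p0, x + s • e))} = ∅ := by
        ext s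
        simp only [mem_ofPred_eq, mem_empty_iff_false, iff_false]
        rintro ⟨h1, h2, h3⟩
        exact h3 ⟨fun h => by linarith, fun h => by linarith⟩
      rw [this]; simp

lemma aux_measSet {E : Type*} [TopologicalSpace E] [MeasurableSpace E] [BorelSpace E]
    {ι : Type*} [Finite ι] {Ω : Set E} (hΩ : IsOpen Ω) (f : ι → E → ℝ)
    (hf : ∀ k, ContinuousOn (f k) Ω) : MeasurableSet {x ∈ Ω | ∀ k, 0 ≤ f k x} := by
  have : {x ∈ Ω | ∀ k, 0 ≤ f k x} = Ω \ ⋃ k, (Ω ∩ (f k) ⁻¹' (Iio 0)) := by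
    ext x
    simp only [mem_ofPred_eq, Set.mem_sdiff, mem_iUnion, mem_inter_iff, mem_preimage, mem_Iio,
      not_exists, not_and, not_lt]
    exact ⟨fun h => ⟨h.1, fun k _ => h.2 k⟩, fun h => ⟨h.1, fun k => h.2 k h.1⟩⟩
  rw [this]
  exact hΩ.measurableSet.diff (isOpen_iUnion fun k => (hf k).isOpen_inter_preimage hΩ isOpen_Iio).measurableSet

lemma aux_local {d N : ℕ} (hd : 1 ≤ d) {ι : Type*} [Finite ι]
    {Ω : Set (EuclideanSpace ℝ (Fin d))} (hΩ : IsOpen Ω)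
    (F : ι → (Fin N → ℝ) × EuclideanSpace ℝ (Fin d) → ℝ)
    (hF : ∀ k p, ∀ x ∈ Ω, ContDiffAt ℝ 1 (F k) (p, x)) (p0 : Fin N → ℝ)
    (hgrad : ∀ k, ∀ x ∈ Ω, F k (p0, x) = 0 → ∃ v, fderiv ℝ (F k) (p0, x) (0, v) ≠ 0)
    (hZ : ∀ k l, k ≠ l → μH[(d : ℝ) - 1] {x ∈ Ω | F k (p0, x) = 0 ∧ F l (p0, x) = 0} = 0)
    (x0 : EuclideanSpace ℝ (Fin d)) (hx0 : x0 ∈ Ω) :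
    ∃ U : Set (EuclideanSpace ℝ (Fin d)), IsOpen U ∧ x0 ∈ U ∧
      ∀ ρ : EuclideanSpace ℝ (Fin d) → ℝ, Continuous ρ → HasCompactSupport ρ → tsupport ρ ⊆ U →
      DifferentiableAt ℝ (fun p => ∫ x, {x ∈ Ω | ∀ k, 0 ≤ F k (p, x)}.indicator ρ x) p0 := by
  have : Fintype ι := Fintype.ofFinite ι
  -- direction
  obtain ⟨e, he0, he⟩ : ∃ e : EuclideanSpace ℝ (Fin d), e ≠ 0 ∧
      ∀ k, F k (p0, x0) = 0 → fderiv ℝ (F k) (p0, x0) (0, e) ≠ 0 := by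
    have hne : ∃ u : EuclideanSpace ℝ (Fin d), u ≠ 0 := by
      have : Nonempty (Fin d) := ⟨⟨0, by omega⟩⟩
      exact exists_ne 0
    obtain ⟨u, hu⟩ := hne
    obtain ⟨e, he⟩ := Module.Dual.exists_forall_ne_zero_of_forall_exists
      (K := ℝ) (M := EuclideanSpace ℝ (Fin d))
      (ι := Option {k : ι // F k (p0, x0) = 0})
      (fun o => match o with
        | none => (innerSL ℝ u : EuclideanSpace ℝ (Fin d) →ₗ[ℝ] ℝ)
        | some k => ((fderiv ℝ (F k.1) (p0, x0)).comp
            (ContinuousLinearMap.inr ℝ (Fin N → ℝ) (EuclideanSpace ℝ (Fin d))) :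
              EuclideanSpace ℝ (Fin d) →ₗ[ℝ] ℝ)) (by
        rintro (_ | k)
        · exact ⟨u, by simpa using hu⟩
        · obtain ⟨v, hv⟩ := hgrad k.1 x0 hx0 k.2
          exact ⟨v, by simpa using hv⟩)
    refine ⟨e, ?_, fun k hk => ?_⟩
    · rintro rfl
      exact he none (by simp)
    · simpa using he (some ⟨k, hk⟩)
  choose t ht C hC0 htg htv using fun k => aux_k (F k) p0 x0 e (hF k p0 x0 hx0) (he k)
  have hT : (⋂ k, t k) ∈ 𝓝 (p0, x0) := by simpa using ht
  obtain ⟨A, hA, B, hB, hAB⟩ := mem_nhds_prod_iff.1 hT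
  set U := interior B ∩ Ω ∩ Metric.ball x0 1 with hU
  refine ⟨U, (isOpen_interior.inter hΩ).inter Metric.isOpen_ball,
    ⟨⟨mem_interior_iff_mem_nhds.2 hB, hx0⟩, Metric.mem_ball_self one_pos⟩, ?_⟩
  intro ρ hρ hρc hρU
  set L : (Fin N → ℝ) → Set (EuclideanSpace ℝ (Fin d)) :=
    fun p => {x ∈ Ω | ∀ k, 0 ≤ F k (p, x)} with hLdef
  have hLm : ∀ p, MeasurableSet (L p) := fun p => aux_measSet hΩ (fun k x => F k (p, x))
    (fun k x hx => (ContinuousAt.comp (f := fun x => (p, x)) (hF k p x hx).continuousAt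
      (by fun_prop)).continuousWithinAt)
  have hAmem : ∀ p ∈ A, ∀ x ∈ tsupport ρ, ∀ k, (p, x) ∈ t k := fun p hp x hx k =>
    mem_iInter.1 (hAB (mk_mem_prod hp (interior_subset (hρU hx).1.1))) k
  have hp0A : p0 ∈ A := mem_of_mem_nhds hA
  -- window
  let bmp : ContDiffBump (0 : ℝ) := ⟨1/2, 1, by norm_num, by norm_num⟩
  set w : ℝ → ℝ := bmp.normed volume with hwdef
  have hwc : Continuous w := bmp.continuous_normed
  have hwcs : HasCompactSupport w := bmp.hasCompactSupport_normed
  have hwsupp : ∀ s, w s ≠ 0 → |s| < 1 := by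
    intro s hs
    have h1 : s ∈ Function.support w := hs
    rw [hwdef, bmp.support_normed_eq] at h1
    simpa [bmp] using h1
  obtain ⟨Mw, hMw⟩ := hwcs.exists_bound_of_continuous hwc
  obtain ⟨Mρ, hMρ⟩ := hρc.exists_bound_of_continuous hρ
  have hMw0 : 0 ≤ Mw := (norm_nonneg _).trans (hMw 0)
  have hMρ0 : 0 ≤ Mρ := (norm_nonneg _).trans (hMρ 0)
  set Lx : EuclideanSpace ℝ (Fin d) → (Fin N → ℝ) → Set ℝ := fun x p => {s | x + s • e ∈ L p}
    with hLx
  set r : EuclideanSpace ℝ (Fin d) → ℝ → ℝ := fun x s => w s * ρ (x + s • e) with hr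
  have hrc : ∀ x, Continuous (r x) := fun x => hwc.mul (hρ.comp (by fun_prop))
  have hrcs : ∀ x, HasCompactSupport (r x) := fun x => hwcs.mul_right
  have hLxm : ∀ x p, MeasurableSet (Lx x p) := fun x p =>
    (by fun_prop : Measurable fun s : ℝ => x + s • e) (hLm p)
  set g : (Fin N → ℝ) → EuclideanSpace ℝ (Fin d) → ℝ :=
    fun p x => ∫ s, (Lx x p).indicator (r x) s with hg
  have hrew : ∀ p, ∫ x, (L p).indicator ρ x = ∫ x, g p x := by
    intro p
    rw [aux_avg e w hwc bmp.integrable_normed bmp.integral_normed _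
      (hρ.measurable.indicator (hLm p))
      ((hρ.integrable_of_hasCompactSupport hρc).indicator (hLm p))]
    congr 1
    ext x
    congr 1
    ext s
    by_cases hs : x + s • e ∈ L p
    · rw [indicator_of_mem hs, indicator_of_mem (show s ∈ Lx x p from hs)]
    · rw [indicator_of_notMem hs, indicator_of_notMem (show s ∉ Lx x p from hs), mul_zero]
  have hgm : ∀ p, AEStronglyMeasurable (g p) volume := by
    intro p
    apply StronglyMeasurable.aestronglyMeasurable
    have hm : Measurable (fun q : EuclideanSpace ℝ (Fin d) × ℝ =>
        ({q | q.1 + q.2 • e ∈ L p} : Set (EuclideanSpace ℝ (Fin d) × ℝ)).indicator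
          (fun q => w q.2 * ρ (q.1 + q.2 • e)) q) := by
      apply Measurable.indicator
      · exact ((hwc.comp continuous_snd).mul (hρ.comp (by fun_prop))).measurable
      · exact (by fun_prop : Measurable fun q : EuclideanSpace ℝ (Fin d) × ℝ => q.1 + q.2 • e)
          (hLm p)
    exact hm.stronglyMeasurable.integral_prod_right'
  have hgb : ∀ p x, x ∉ Metric.closedBall x0 (1 + ‖e‖) → g p x = 0 := by
    intro p x hx
    have : ∀ s, r x s = 0 := by
      intro s
      by_contra hne
      have h1 : w s ≠ 0 := left_ne_zero_of_mul hne
      have h2 : ρ (x + s • e) ≠ 0 := right_ne_zero_of_mul hne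
      have h3 := (hρU (subset_tsupport _ h2)).2
      apply hx
      rw [Metric.mem_ball, dist_eq_norm] at h3
      rw [Metric.mem_closedBall, dist_eq_norm]
      have h4 : ‖s • e‖ ≤ ‖e‖ := by
        rw [norm_smul, Real.norm_eq_abs]
        nlinarith [hwsupp s h1, norm_nonneg e]
      calc ‖x - x0‖ = ‖(x + s • e - x0) - s • e‖ := by congr 1; abel
        _ ≤ _ := norm_sub_le _ _
        _ ≤ _ := by linarith
    have h0 : r x = fun _ => 0 := funext this
    simp [hg, h0]
  -- Lipschitz
  have hlip : ∀ p ∈ A, ∀ x, ‖g p x - g p0 x‖ ≤ (Mw * Mρ * ∑ k, C k) * ‖p - p0‖ := by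
    intro p hp x
    have hri := (hrc x).integrable_of_hasCompactSupport (μ := volume) (hrcs x)
    rw [hg]
    simp only
    rw [← integral_sub (hri.indicator (hLxm x p)) (hri.indicator (hLxm x p0))]
    set D : Set ℝ := ⋃ k, {s : ℝ | (p, x + s • e) ∈ t k ∧ (p0, x + s • e) ∈ t k ∧
        ¬ (0 ≤ F k (p, x + s • e) ↔ 0 ≤ F k (p0, x + s • e))} with hD
    have hDv : volume D ≤ ENNReal.ofReal ((∑ k, C k) * ‖p - p0‖) := by
      rw [Finset.sum_mul, ENNReal.ofReal_sum_of_nonneg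
        (fun k _ => mul_nonneg (hC0 k) (norm_nonneg _))]
      refine (measure_iUnion_le _).trans ?_
      rw [tsum_fintype]
      exact Finset.sum_le_sum fun k _ => htv k p x
    have hpt : ∀ s, ‖(Lx x p).indicator (r x) s - (Lx x p0).indicator (r x) s‖ₑ ≤
        (toMeasurable volume D).indicator (fun _ => ENNReal.ofReal (Mw * Mρ)) s := by
      intro s
      have hrb : ‖r x s‖ ≤ Mw * Mρ := by
        rw [hr]; simp only [norm_mul]
        exact mul_le_mul (hMw s) (hMρ _) (norm_nonneg _) hMw0
      by_cases hs : s ∈ D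
      · rw [indicator_of_mem (subset_toMeasurable _ _ hs), ← ofReal_norm]
        apply ENNReal.ofReal_le_ofReal
        by_cases h1 : s ∈ Lx x p <;> by_cases h2 : s ∈ Lx x p0 <;>
          simp only [indicator_of_mem, indicator_of_notMem, h1, h2, not_false_eq_true,
            sub_self, sub_zero, zero_sub, norm_zero, norm_neg] <;>
          first | exact hrb | positivity
      · have : (Lx x p).indicator (r x) s = (Lx x p0).indicator (r x) s := by
          by_cases hrs : r x s = 0
          · simp [indicator, hrs]
          have hmem : x + s • e ∈ tsupport ρ := subset_tsupport _ (right_ne_zero_of_mul hrs)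
          apply aux_ind
          have hk : ∀ k, (0 ≤ F k (p, x + s • e) ↔ 0 ≤ F k (p0, x + s • e)) := by
            intro k
            by_contra hk
            exact hs (mem_iUnion.2 ⟨k, hAmem p hp _ hmem k, hAmem p0 hp0A _ hmem k, hk⟩)
          change (x + s • e ∈ Ω ∧ ∀ k, _) ↔ (x + s • e ∈ Ω ∧ ∀ k, _)
          exact and_congr_right fun _ => forall_congr' hk
        rw [this]
        simp
    have h1 : ‖∫ s, ((Lx x p).indicator (r x) s - (Lx x p0).indicator (r x) s)‖ₑ ≤
        ENNReal.ofReal ((Mw * Mρ * ∑ k, C k) * ‖p - p0‖) := by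
      refine (enorm_integral_le_lintegral_enorm _).trans ((lintegral_mono hpt).trans ?_)
      rw [lintegral_indicator_const (measurableSet_toMeasurable _ _), measure_toMeasurable,
        mul_assoc (Mw * Mρ), ENNReal.ofReal_mul (p := Mw * Mρ) (by positivity)]
      exact mul_le_mul' le_rfl hDv
    rw [← ofReal_norm] at h1
    refine (ENNReal.ofReal_le_ofReal_iff ?_).1 h1
    have : 0 ≤ ∑ k, C k := Finset.sum_nonneg fun k _ => hC0 k
    positivity
  -- a.e. differentiability
  have hdiff : ∀ᵐ x, DifferentiableAt ℝ (fun p => g p x) p0 := by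
    have hz : ∀ᵐ x : EuclideanSpace ℝ (Fin d), ∀ k l, k ≠ l → ∀ s : ℝ,
        x + s • e ∉ {x ∈ Ω | F k (p0, x) = 0 ∧ F l (p0, x) = 0} := by
      rw [ae_all_iff]; intro k
      rw [ae_all_iff]; intro l
      by_cases hkl : k = l
      · simp [hkl]
      filter_upwards [aux_null_proj hd e he0 _ (hZ k l hkl)] with x hx _ using hx
    filter_upwards [hz] with x hx
    apply aux_local_to_global volume (Lx x) (hLxm x) p0 (r x) (hrc x) (hrcs x)
    intro s0 hs0
    have hmem : x + s0 • e ∈ tsupport ρ := by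
      have : tsupport (r x) ⊆ (fun s : ℝ => x + s • e) ⁻¹' (tsupport ρ) := by
        apply closure_minimal
        · intro s hs
          exact subset_tsupport _ (right_ne_zero_of_mul hs)
        · exact (isClosed_tsupport ρ).preimage (by fun_prop)
      exact this hs0
    have hΩ0 : x + s0 • e ∈ Ω := (hρU hmem).1.2
    let ℓ : (Fin N → ℝ) × ℝ → (Fin N → ℝ) × EuclideanSpace ℝ (Fin d) :=
      fun q => (q.1, x + q.2 • e)
    let ℓ' : (Fin N → ℝ) × ℝ →L[ℝ] (Fin N → ℝ) × EuclideanSpace ℝ (Fin d) :=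
      (ContinuousLinearMap.fst ℝ _ _).prod
        ((ContinuousLinearMap.snd ℝ (Fin N → ℝ) ℝ).smulRight e)
    have hℓ : HasStrictFDerivAt ℓ ℓ' (p0, s0) := by
      apply HasStrictFDerivAt.prodMk
      · exact hasStrictFDerivAt_fst
      · exact (((ContinuousLinearMap.snd ℝ (Fin N → ℝ) ℝ).smulRight e).hasStrictFDerivAt).const_add x
    apply aux_multi (Lx x) p0 s0 (fun k q => F k (ℓ q)) _
      (fun k => (fderiv ℝ (F k) (p0, x + s0 • e)).comp ℓ')
    · intro k
      have h1 : HasStrictFDerivAt (F k) (fderiv ℝ (F k) (p0, x + s0 • e)) (ℓ (p0, s0)) :=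
        (hF k p0 _ hΩ0).hasStrictFDerivAt (by norm_num)
      exact h1.comp (p0, s0) hℓ
    · intro k l hk hl
      by_contra hkl
      exact hx k l hkl s0 ⟨hΩ0, hk, hl⟩
    · intro k hk
      have := htg k _ (hAmem p0 hp0A _ hmem k) hk
      simpa [ℓ'] using this
    · have hev : ∀ᶠ q : (Fin N → ℝ) × ℝ in 𝓝 (p0, s0), x + q.2 • e ∈ Ω :=
        (by fun_prop : Continuous fun q : (Fin N → ℝ) × ℝ => x + q.2 • e).continuousAt.eventually
          (hΩ.mem_nhds hΩ0)
      filter_upwards [hev] with q hq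
      change (x + q.2 • e ∈ Ω ∧ ∀ k, _) ↔ _
      exact and_iff_right hq
  have hbi : Integrable ((Metric.closedBall x0 (1 + ‖e‖)).indicator
      (fun _ => Mw * Mρ * ∑ k, C k)) (volume : Measure (EuclideanSpace ℝ (Fin d))) := by
    rw [integrable_indicator_iff Metric.isClosed_closedBall.measurableSet]
    exact integrableOn_const (isCompact_closedBall _ _).measure_lt_top.ne
  have hgi : Integrable (g p0) := by
    have hRi : Integrable ((Metric.closedBall x0 (1 + ‖e‖)).indicator
      (fun _ => Mρ)) (volume : Measure (EuclideanSpace ℝ (Fin d))) := by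
      rw [integrable_indicator_iff Metric.isClosed_closedBall.measurableSet]
      exact integrableOn_const (isCompact_closedBall _ _).measure_lt_top.ne
    refine hRi.mono' (hgm p0) (Eventually.of_forall fun x => ?_)
    by_cases hx : x ∈ Metric.closedBall x0 (1 + ‖e‖)
    · rw [indicator_of_mem hx]
      have h1 : ‖g p0 x‖ ≤ ∫ s, w s * Mρ := by
        refine norm_integral_le_of_norm_le (bmp.integrable_normed.mul_const _)
          (Eventually.of_forall fun s => ?_)
        refine (norm_indicator_le_norm_self _ _).trans ?_
        simp only [hr, norm_mul]
        have : ‖w s‖ = w s := Real.norm_of_nonneg (bmp.nonneg_normed s)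
        rw [this]
        exact mul_le_mul_of_nonneg_left (hMρ _) (bmp.nonneg_normed s)
      rwa [integral_mul_const, bmp.integral_normed, one_mul] at h1
    · rw [indicator_of_notMem hx, hgb p0 x hx, norm_zero]
  have hfin := hasFDerivAt_integral_of_dominated_loc_of_lip' (𝕜 := ℝ) (F := g) (x₀ := p0) (s := A)
    (F' := fun x => fderiv ℝ (fun p => g p x) p0) hA (fun p _ => hgm p) hgi
    (aux_meas g hgm p0 hdiff) (Eventually.of_forall fun x p hp => ?_) hbi
    (hdiff.mono fun x hx => hx.hasFDerivAt)
  · exact hfin.2.differentiableAt.congr_of_eventuallyEq (Eventually.of_forall hrew)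
  · by_cases hx : x ∈ Metric.closedBall x0 (1 + ‖e‖)
    · rw [indicator_of_mem hx]
      exact hlip p hp x
    · rw [indicator_of_notMem hx, hgb p x hx, hgb p0 x hx]
      simp

lemma aux_null {E : Type*} [NormedAddCommGroup E] [NormedSpace ℝ E] [MeasurableSpace E]
    [BorelSpace E] [FiniteDimensional ℝ E] (μ : Measure E) [μ.IsAddHaarMeasure]
    {Ω : Set E} (hΩ : IsOpen Ω) (f : E → ℝ)
    (hf : ∀ x ∈ Ω, ContDiffAt ℝ 1 f x)
    (hgrad : ∀ x ∈ Ω, f x = 0 → fderiv ℝ f x ≠ 0) : μ {x ∈ Ω | f x = 0} = 0 := by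
  apply measure_null_of_locally_null
  rintro x0 ⟨hx0, hfx0⟩
  obtain ⟨e, he⟩ : ∃ e, fderiv ℝ f x0 e ≠ 0 := by
    by_contra h
    push Not at h
    exact hgrad x0 hx0 hfx0 (ContinuousLinearMap.ext h)
  have hs : HasStrictFDerivAt f (fderiv ℝ f x0) x0 := (hf x0 hx0).hasStrictFDerivAt (by norm_num)
  have he0 : e ≠ 0 := by rintro rfl; simp at he
  have hc : 0 < |fderiv ℝ f x0 e| / (2 * ‖e‖) := by
    have := abs_pos.2 he
    have := norm_pos_iff.2 he0
    positivity
  have h1 := hs.isLittleO.def hc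
  obtain ⟨W, hW, hWx, hWs⟩ : ∃ W, IsOpen W ∧ x0 ∈ W ∧ ∀ x ∈ W, ∀ y ∈ W,
      ‖f x - f y - fderiv ℝ f x0 (x - y)‖ ≤ |fderiv ℝ f x0 e| / (2 * ‖e‖) * ‖x - y‖ := by
    obtain ⟨A, hA, B, hB, hAB⟩ := mem_nhds_prod_iff.1 h1
    obtain ⟨W, hWt, hW, hx⟩ := mem_nhds_iff.1 (inter_mem hA hB)
    exact ⟨W, hW, hx, fun x hx y hy => hAB (mk_mem_prod (hWt hx).1 (hWt hy).2)⟩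
  refine ⟨{x ∈ Ω | f x = 0} ∩ W, inter_mem self_mem_nhdsWithin
    (mem_nhdsWithin_of_mem_nhds (hW.mem_nhds hWx)), ?_⟩
  apply Measure.addHaar_eq_zero_of_disjoint_translates μ (fun n : ℕ => ((n : ℝ) + 1)⁻¹ • e)
  · refine (Metric.isBounded_closedBall (x := (0 : E)) (r := ‖e‖)).subset ?_
    rintro _ ⟨n, rfl⟩
    rw [mem_closedBall_zero_iff, norm_smul, Real.norm_of_nonneg (by positivity)]
    have : ((n : ℝ) + 1)⁻¹ ≤ 1 := inv_le_one_of_one_le₀ (by linarith [Nat.cast_nonneg (α := ℝ) n])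
    nlinarith [norm_nonneg e]
  · intro m n hmn
    simp only [Function.onFun, singleton_add]
    rw [Set.disjoint_left]
    rintro _ ⟨x, ⟨⟨hxΩ, hx⟩, hxW⟩, rfl⟩ ⟨y, ⟨⟨hyΩ, hy⟩, hyW⟩, hxy⟩
    have h2 := hWs x hxW y hyW
    have h3 : x - y = (((n : ℝ) + 1)⁻¹ - ((m : ℝ) + 1)⁻¹) • e := by
      rw [sub_smul]
      have : x = ((n : ℝ) + 1)⁻¹ • e + y - ((m : ℝ) + 1)⁻¹ • e := by
        have := hxy
        simp only at this
        rw [this]; abel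
      rw [this]; abel
    have h4 : (((n : ℝ) + 1)⁻¹ - ((m : ℝ) + 1)⁻¹) ≠ 0 := by
      intro h
      apply hmn
      have h5 := inv_injective (sub_eq_zero.1 h)
      have : (n : ℝ) = m := by linarith
      exact_mod_cast this.symm
    rw [h3, hx, hy, map_smul, norm_smul, smul_eq_mul] at h2
    rw [sub_zero, zero_sub, norm_neg, norm_mul, Real.norm_eq_abs (fderiv ℝ f x0 e)] at h2
    have h5 := norm_pos_iff.2 h4
    have h6 := norm_pos_iff.2 he0
    have h7 := abs_pos.2 he
    have h8 : |fderiv ℝ f x0 e| / (2 * ‖e‖) * (‖((n : ℝ) + 1)⁻¹ - ((m : ℝ) + 1)⁻¹‖ * ‖e‖)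
      = ‖((n : ℝ) + 1)⁻¹ - ((m : ℝ) + 1)⁻¹‖ * |fderiv ℝ f x0 e| / 2 := by
      field_simp
    rw [h8] at h2
    nlinarith [mul_pos h5 h7]
  · have hcf : ContinuousOn f (Ω ∩ W) := fun x hx => (hf x hx.1).continuousAt.continuousWithinAt
    have : {x ∈ Ω | f x = 0} ∩ W = (Ω ∩ W) \ ((Ω ∩ W) ∩ f ⁻¹' {0}ᶜ) := by
      ext x
      simp only [mem_inter_iff, Set.mem_sdiff, mem_preimage, mem_compl_iff, mem_singleton_iff,
        mem_ofPred_eq]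
      tauto
    rw [this]
    exact (hΩ.inter hW).measurableSet.diff
      (hcf.isOpen_inter_preimage (hΩ.inter hW) isOpen_compl_singleton).measurableSet

lemma aux_line_s8 (h : ℝ → ℝ) (K : NNReal) (hl : LipschitzOnWith K h (Icc 0 1)) (h0 : h 0 ≤ 0)
    (η : ℝ) (h1 : η ≤ h 1) :
    ENNReal.ofReal η ≤ K * volume {s ∈ Icc (0 : ℝ) 1 | 0 < h s ∧ h s ≤ η} := by
  have hsub : Ioc 0 η ⊆ h '' {s ∈ Icc (0 : ℝ) 1 | 0 < h s ∧ h s ≤ η} := by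
    rintro z ⟨hz0, hz1⟩
    obtain ⟨s, hs, rfl⟩ := intermediate_value_Icc zero_le_one hl.continuousOn
      (⟨h0.trans hz0.le, hz1.trans h1⟩ : z ∈ Icc (h 0) (h 1))
    exact ⟨s, ⟨hs, hz0, hz1⟩, rfl⟩
  calc ENNReal.ofReal η = volume (Ioc 0 η) := by simp
    _ ≤ volume (h '' {s ∈ Icc (0 : ℝ) 1 | 0 < h s ∧ h s ≤ η}) := measure_mono hsub
    _ ≤ _ := by
      have := (hl.mono (s := {s ∈ Icc (0 : ℝ) 1 | 0 < h s ∧ h s ≤ η})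
        (fun s hs => hs.1)).hausdorffMeasure_image_le (d := 1) zero_le_one
      simpa [hausdorffMeasure_real] using this

lemma aux_strip {d : ℕ} (g : EuclideanSpace ℝ (Fin d) → ℝ) (x0 a b : EuclideanSpace ℝ (Fin d))
    (R : ℝ) (K : NNReal) (hl : LipschitzOnWith K g (Metric.ball x0 R))
    (ha : a ∈ Metric.ball x0 R) (hb : b ∈ Metric.ball x0 R) (hga : g a < 0) (hgb : 0 < g b) :
    ∃ c > 0, ∃ η0 > 0, ∀ η, 0 < η → η ≤ η0 →
      ENNReal.ofReal (c * η) ≤ volume {x ∈ Metric.ball x0 R | 0 < g x ∧ g x ≤ η} := by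
  have hgc := hl.continuousOn
  have hBo : IsOpen (Metric.ball x0 R) := Metric.isOpen_ball
  have hna : ∀ᶠ x in 𝓝 a, x ∈ Metric.ball x0 R ∧ g x < 0 :=
    (hBo.eventually_mem ha).and ((hgc.continuousAt (hBo.mem_nhds ha)).eventually (gt_mem_nhds hga))
  have hnb : ∀ᶠ x in 𝓝 b, x ∈ Metric.ball x0 R ∧ g b / 2 < g x :=
    (hBo.eventually_mem hb).and ((hgc.continuousAt (hBo.mem_nhds hb)).eventually
      (lt_mem_nhds (by linarith)))
  have hnb' : ∀ᶠ x in 𝓝 a, x + (b - a) ∈ Metric.ball x0 R ∧ g b / 2 < g (x + (b - a)) := by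
    have : Tendsto (fun x => x + (b - a)) (𝓝 a) (𝓝 b) := by
      have : Continuous (fun x : EuclideanSpace ℝ (Fin d) => x + (b - a)) := by fun_prop
      simpa using this.tendsto a
    exact this.eventually hnb
  obtain ⟨r, hr, hball⟩ := Metric.eventually_nhds_iff_ball.1 (hna.and hnb')
  set v := b - a with hv
  set B := Metric.ball a r with hB
  have hVpos : 0 < volume B := Metric.measure_ball_pos _ _ hr
  have hVfin : volume B < ⊤ := measure_ball_lt_top
  set M : NNReal := K * ‖v‖₊ + 1 with hM
  have hMpos : (0 : ℝ) < M := by positivity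
  refine ⟨(volume B).toReal / M, div_pos (ENNReal.toReal_pos hVpos.ne' hVfin.ne) hMpos,
    g b / 2, by positivity, ?_⟩
  intro η hη hη0
  set T := {x ∈ Metric.ball x0 R | 0 < g x ∧ g x ≤ η} with hT
  have hTm : MeasurableSet T := by
    have : T = (Metric.ball x0 R ∩ g ⁻¹' (Ioi 0)) \ (Metric.ball x0 R ∩ g ⁻¹' (Ioi η)) := by
      ext x
      simp only [hT, mem_ofPred_eq, mem_inter_iff, Set.mem_sdiff, mem_preimage, mem_Ioi, not_and,
        not_lt]
      tauto
    rw [this]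
    exact (hgc.isOpen_inter_preimage hBo isOpen_Ioi).measurableSet.diff
      (hgc.isOpen_inter_preimage hBo isOpen_Ioi).measurableSet
  have hline : ∀ x ∈ B, ENNReal.ofReal η ≤ M * volume {s ∈ Icc (0 : ℝ) 1 | x + s • v ∈ T} := by
    intro x hx
    obtain ⟨⟨hx1, hx2⟩, hx3, hx4⟩ := hball x hx
    have hseg : ∀ s ∈ Icc (0 : ℝ) 1, x + s • v ∈ Metric.ball x0 R := by
      intro s hs
      have := (convex_ball x0 R) hx1 hx3 (by linarith [hs.2] : 0 ≤ 1 - s) hs.1 (by ring)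
      convert this using 1
      module
    have hlip : LipschitzOnWith (K * ‖v‖₊) (fun s : ℝ => g (x + s • v)) (Icc 0 1) := by
      have h1 : LipschitzOnWith ‖v‖₊ (fun s : ℝ => x + s • v) (Icc 0 1) := by
        apply LipschitzWith.lipschitzOnWith
        apply LipschitzWith.of_dist_le_mul
        intro s t
        rw [dist_add_left, dist_eq_norm, ← sub_smul, norm_smul, coe_nnnorm, mul_comm,
          Real.dist_eq, Real.norm_eq_abs]
      exact hl.comp h1 hseg
    refine (aux_line_s8 _ _ hlip (by simpa using hx2.le) η (by simpa using hη0.trans hx4.le)).trans ?_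
    refine mul_le_mul' ?_ (measure_mono ?_)
    · exact_mod_cast le_self_add
    · rintro s ⟨hs, h⟩
      exact ⟨hs, hseg s hs, h⟩
  have hfub : ∫⁻ x, volume {s ∈ Icc (0 : ℝ) 1 | x + s • v ∈ T} = volume T := by
    set Q : Set (EuclideanSpace ℝ (Fin d) × ℝ) := {q | q.2 ∈ Icc (0 : ℝ) 1 ∧ q.1 + q.2 • v ∈ T}
      with hQ
    have hQm : MeasurableSet Q :=
      (measurable_snd measurableSet_Icc).inter
        ((by fun_prop : Measurable fun q : EuclideanSpace ℝ (Fin d) × ℝ => q.1 + q.2 • v) hTm)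
    have h1 : (volume.prod volume) Q = ∫⁻ x, volume {s ∈ Icc (0 : ℝ) 1 | x + s • v ∈ T} :=
      Measure.prod_apply hQm
    have h2 : (volume.prod volume) Q = ∫⁻ s, (Icc (0 : ℝ) 1).indicator (fun _ => volume T) s := by
      rw [Measure.prod_apply_symm hQm]
      congr 1
      ext s
      by_cases hs : s ∈ Icc (0 : ℝ) 1
      · rw [indicator_of_mem hs]
        have : (fun x => (x, s)) ⁻¹' Q = (fun x => x + s • v) ⁻¹' T := by
          ext x; simp [hQ, hs.1, hs.2]
        rw [this, measure_preimage_add_right]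
      · rw [indicator_of_notMem hs]
        have : (fun x => (x, s)) ⁻¹' Q = ∅ := by
          ext x
          simp only [hQ, mem_preimage, mem_ofPred_eq, mem_empty_iff_false, iff_false]
          exact fun h => hs h.1
        rw [this, measure_empty]
    rw [← h1, h2, lintegral_indicator_const measurableSet_Icc]
    simp
  have hmain : volume B * ENNReal.ofReal η ≤ M * volume T := by
    calc volume B * ENNReal.ofReal η = ∫⁻ x in B, ENNReal.ofReal η := by
          rw [setLIntegral_const, mul_comm]
      _ ≤ ∫⁻ x in B, M * volume {s ∈ Icc (0 : ℝ) 1 | x + s • v ∈ T} :=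
          setLIntegral_mono' Metric.isOpen_ball.measurableSet hline
      _ ≤ ∫⁻ x, M * volume {s ∈ Icc (0 : ℝ) 1 | x + s • v ∈ T} := setLIntegral_le_lintegral _ _
      _ = _ := by rw [lintegral_const_mul' _ _ ENNReal.coe_ne_top, hfub]
  have h3 : ENNReal.ofReal ((volume B).toReal / M * η) = (volume B * ENNReal.ofReal η) / M := by
    rw [div_mul_eq_mul_div, ENNReal.ofReal_div_of_pos hMpos,
      ENNReal.ofReal_mul ENNReal.toReal_nonneg, ENNReal.ofReal_toReal hVfin.ne,
      ENNReal.ofReal_coe_nnreal]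
  rw [h3]
  exact ENNReal.div_le_of_le_mul' hmain

lemma aux_cut {E : Type*} [TopologicalSpace E] [MeasurableSpace E] (μ : Measure E)
    [μ.IsOpenPosMeasure] {U : Set E} (hU : IsOpen U) (hc : IsPreconnected U) (g : E → ℝ)
    (hg : ContinuousOn g U) (hZ : μ {x ∈ U | g x = 0} = 0) (ha : ∃ a ∈ U, g a < 0)
    (hb : ∃ b ∈ U, 0 < g b) :
    ∃ x ∈ U, (∃ᶠ y in 𝓝 x, g y < 0) ∧ ∃ᶠ y in 𝓝 x, 0 < g y := by
  by_contra hcon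
  push Not at hcon
  obtain ⟨a, haU, ha⟩ := ha
  obtain ⟨b, hbU, hb⟩ := hb
  obtain ⟨x, hxU, hxA, hxB⟩ := hc {x | ∀ᶠ y in 𝓝 x, 0 ≤ g y} {x | ∀ᶠ y in 𝓝 x, g y ≤ 0}
    isOpen_setOfPred_eventually_nhds isOpen_setOfPred_eventually_nhds (by
      intro x hx
      by_cases h : ∃ᶠ y in 𝓝 x, g y < 0
      · right
        have := hcon x hx h
        exact this
      · left
        rw [not_frequently] at h
        exact h.mono fun y hy => not_lt.1 hy)
    ⟨b, hbU, by
      filter_upwards [(hg.continuousAt (hU.mem_nhds hbU)).eventually (lt_mem_nhds hb)] with y hy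
      exact hy.le⟩
    ⟨a, haU, by
      filter_upwards [(hg.continuousAt (hU.mem_nhds haU)).eventually (gt_mem_nhds ha)] with y hy
      exact hy.le⟩
  have : {x ∈ U | g x = 0} ∈ 𝓝 x := by
    filter_upwards [hU.mem_nhds hxU, hxA, hxB] with y h1 h2 h3
    exact ⟨h1, le_antisymm h3 h2⟩
  exact (μ.measure_pos_of_mem_nhds this).ne' hZ

lemma aux_sup_lip {E : Type*} [PseudoMetricSpace E] {ι : Type*} (S : Finset ι) (hS : S.Nonempty)
    (f : ι → E → ℝ) (B : Set E) (K : NNReal) (hf : ∀ i, LipschitzOnWith K (f i) B) :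
    LipschitzOnWith K (fun x => S.sup' hS fun i => f i x) B := by
  apply LipschitzOnWith.of_le_add_mul
  intro x hx y hy
  apply Finset.sup'_le
  intro i hi
  have h1 := (hf i).le_add_mul hx hy
  have h2 : f i y ≤ S.sup' hS fun i => f i y := Finset.le_sup' (fun i => f i y) hi
  linarith
lemma aux_Lag_eq {d N : ℕ} (Ω : Set (EuclideanSpace ℝ (Fin d)))
    (G : EuclideanSpace ℝ (Fin d) → Fin N → ℝ → ℝ) (p : Fin N → ℝ) (i : Fin N) :
    Lag Ω G p i = {x ∈ Ω | ∀ k : {k : Fin N // k ≠ i}, 0 ≤ G x i (p i) - G x k (p k)} := by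
  ext x
  simp only [Lag, mem_ofPred_eq, sub_nonneg]
  refine and_congr_right fun _ => ⟨fun h k => h k, fun h j => ?_⟩
  by_cases hj : j = i
  · rw [hj]
  · exact h ⟨j, hj⟩

lemma aux_cd {d N : ℕ} {Ω : Set (EuclideanSpace ℝ (Fin d))} (hΩo : IsOpen Ω)
    (G : EuclideanSpace ℝ (Fin d) → Fin N → ℝ → ℝ)
    (hG2 : ∀ i : Fin N, ContDiffOn ℝ 2 (fun q : EuclideanSpace ℝ (Fin d) × ℝ => G q.1 i q.2)
      (Ω ×ˢ Set.univ)) (i : Fin N) (x : EuclideanSpace ℝ (Fin d)) (hx : x ∈ Ω) (v : ℝ) :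
    ContDiffAt ℝ 1 (fun q : EuclideanSpace ℝ (Fin d) × ℝ => G q.1 i q.2) (x, v) :=
  ((hG2 i).contDiffAt ((hΩo.prod isOpen_univ).mem_nhds ⟨hx, mem_univ _⟩)).of_le (by norm_num)

lemma aux_cont {d N : ℕ} {Ω : Set (EuclideanSpace ℝ (Fin d))} (hΩo : IsOpen Ω)
    (G : EuclideanSpace ℝ (Fin d) → Fin N → ℝ → ℝ)
    (hG2 : ∀ i : Fin N, ContDiffOn ℝ 2 (fun q : EuclideanSpace ℝ (Fin d) × ℝ => G q.1 i q.2)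
      (Ω ×ˢ Set.univ)) (i : Fin N) (v : ℝ) : ContinuousOn (fun x => G x i v) Ω := fun x hx =>
  (ContinuousAt.comp (f := fun x => (x, v)) (aux_cd hΩo G hG2 i x hx v).continuousAt
      (by fun_prop)).continuousWithinAt

lemma aux_LagM {d N : ℕ} {Ω : Set (EuclideanSpace ℝ (Fin d))} (hΩo : IsOpen Ω)
    (G : EuclideanSpace ℝ (Fin d) → Fin N → ℝ → ℝ)
    (hG2 : ∀ i : Fin N, ContDiffOn ℝ 2 (fun q : EuclideanSpace ℝ (Fin d) × ℝ => G q.1 i q.2)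
      (Ω ×ˢ Set.univ)) (p : Fin N → ℝ) (i : Fin N) : MeasurableSet (Lag Ω G p i) := by
  rw [aux_Lag_eq]
  exact aux_measSet hΩo (fun (k : {k : Fin N // k ≠ i}) x => G x i (p i) - G x k (p k))
    fun k => (aux_cont hΩo G hG2 i _).sub (aux_cont hΩo G hG2 k _)

lemma aux_Hdiff {d N : ℕ} (hd : 1 ≤ d) {Ω : Set (EuclideanSpace ℝ (Fin d))} (hΩo : IsOpen Ω)
    (G : EuclideanSpace ℝ (Fin d) → Fin N → ℝ → ℝ)
    (Gx : EuclideanSpace ℝ (Fin d) → Fin N → ℝ → EuclideanSpace ℝ (Fin d))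
    (hGx : ∀ x ∈ Ω, ∀ (i : Fin N) (v : ℝ), HasGradientAt (fun x' => G x' i v) (Gx x i v) x)
    (hG2 : ∀ i : Fin N, ContDiffOn ℝ 2 (fun q : EuclideanSpace ℝ (Fin d) × ℝ => G q.1 i q.2)
      (Ω ×ˢ Set.univ))
    (hTwist : ∀ x ∈ Ω, Function.Injective fun q : Fin N × ℝ => (G x q.1 q.2, Gx x q.1 q.2))
    {X : Set (EuclideanSpace ℝ (Fin d))} (hXc : IsCompact X) (hXΩ : X ⊆ Ω)
    (ρ : EuclideanSpace ℝ (Fin d) → ℝ) (hρc : Continuous ρ) (hρ0 : ∀ x, 0 ≤ ρ x)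
    (hρsupp : tsupport ρ ⊆ X)
    (hGenΩ : ∀ (ψ : Fin N → ℝ) (i j k : Fin N), i ≠ j → i ≠ k → j ≠ k →
      μH[(d : ℝ) - 1] (Gam Ω G ψ i j ∩ Gam Ω G ψ i k) = 0)
    (ψ : Fin N → ℝ) : DifferentiableAt ℝ (Hfun Ω G ρ) ψ := by
  have hcs : HasCompactSupport ρ := hXc.of_isClosed_subset (isClosed_tsupport _) hρsupp
  rw [differentiableAt_pi]
  intro i
  have hH : ∀ p, Hfun Ω G ρ p i = ∫ x, (Lag Ω G p i).indicator ρ x := by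
    intro p
    have hm := aux_LagM hΩo G hG2 p i
    rw [integral_indicator hm, integral_eq_lintegral_of_nonneg_ae
      (Eventually.of_forall hρ0) hρc.aestronglyMeasurable, Hfun, withDensity_apply _ hm]
  refine DifferentiableAt.congr_of_eventuallyEq ?_ (Eventually.of_forall hH)
  apply aux_local_to_global volume (fun p => Lag Ω G p i) (fun p => aux_LagM hΩo G hG2 p i) ψ ρ
    hρc hcs
  intro x0 hx0
  have hfst : ∀ (k : Fin N) (p : Fin N → ℝ), ∀ x ∈ Ω, ContDiffAt ℝ 1
      (fun q : (Fin N → ℝ) × EuclideanSpace ℝ (Fin d) => G q.2 k (q.1 k)) (p, x) := by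
    intro k p x hx
    exact ContDiffAt.comp (g := fun q : EuclideanSpace ℝ (Fin d) × ℝ => G q.1 k q.2)
      (f := fun q : (Fin N → ℝ) × EuclideanSpace ℝ (Fin d) => (q.2, q.1 k)) (p, x)
      (aux_cd hΩo G hG2 k x hx (p k)) (by fun_prop)
  have hF : ∀ (k : {k : Fin N // k ≠ i}) (p : Fin N → ℝ), ∀ x ∈ Ω, ContDiffAt ℝ 1
      (fun q : (Fin N → ℝ) × EuclideanSpace ℝ (Fin d) => G q.2 i (q.1 i) - G q.2 k (q.1 k))
      (p, x) := fun k p x hx => (hfst i p x hx).sub (hfst k p x hx)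
  have := aux_local hd hΩo (fun (k : {k : Fin N // k ≠ i}) q => G q.2 i (q.1 i) - G q.2 k (q.1 k))
    hF ψ ?_ ?_ x0 (hXΩ (hρsupp hx0))
  · simpa only [aux_Lag_eq] using this
  · intro k x hx h0
    refine ⟨Gx x i (ψ i) - Gx x k (ψ k), ?_⟩
    have h1 := ((hF k ψ x hx).differentiableAt (by norm_num)).hasFDerivAt
    have h2 : HasFDerivAt (fun x' : EuclideanSpace ℝ (Fin d) => (ψ, x'))
      (ContinuousLinearMap.inr ℝ (Fin N → ℝ) (EuclideanSpace ℝ (Fin d))) x :=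
      hasFDerivAt_prodMk_right _ _
    have h3 := HasFDerivAt.comp x h1 h2
    have h4 := (hGx x hx i (ψ i)).hasFDerivAt.sub (hGx x hx k (ψ k)).hasFDerivAt
    have h5 := h3.unique h4
    have h6 := congrArg (fun L => L (Gx x i (ψ i) - Gx x k (ψ k))) h5
    simp only [ContinuousLinearMap.comp_apply, ContinuousLinearMap.inr_apply] at h6
    rw [h6, ← map_sub, InnerProductSpace.toDual_apply_apply, inner_self_ne_zero, sub_ne_zero]
    intro h7
    have h8 := hTwist x hx (a₁ := (i, ψ i)) (a₂ := (k.1, ψ k)) (Prod.ext (sub_eq_zero.1 h0) h7)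
    exact k.2 (congrArg Prod.fst h8).symm
  · intro k l hkl
    refine measure_mono_null ?_ (hGenΩ ψ i k l k.2.symm l.2.symm (fun h => hkl (Subtype.ext h)))
    rintro x ⟨hx, h1, h2⟩
    exact ⟨⟨hx, sub_eq_zero.1 h1⟩, ⟨hx, sub_eq_zero.1 h2⟩⟩

lemma aux_Gam_null {d N : ℕ} {Ω : Set (EuclideanSpace ℝ (Fin d))} (hΩo : IsOpen Ω)
    (G : EuclideanSpace ℝ (Fin d) → Fin N → ℝ → ℝ)
    (Gx : EuclideanSpace ℝ (Fin d) → Fin N → ℝ → EuclideanSpace ℝ (Fin d))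
    (hGx : ∀ x ∈ Ω, ∀ (i : Fin N) (v : ℝ), HasGradientAt (fun x' => G x' i v) (Gx x i v) x)
    (hG2 : ∀ i : Fin N, ContDiffOn ℝ 2 (fun q : EuclideanSpace ℝ (Fin d) × ℝ => G q.1 i q.2)
      (Ω ×ˢ Set.univ))
    (hTwist : ∀ x ∈ Ω, Function.Injective fun q : Fin N × ℝ => (G x q.1 q.2, Gx x q.1 q.2))
    (ψ : Fin N → ℝ) (i j : Fin N) (hij : i ≠ j) : volume (Gam Ω G ψ i j) = 0 := by
  have hc : ∀ (k : Fin N), ∀ x ∈ Ω, ContDiffAt ℝ 1 (fun x => G x k (ψ k)) x := fun k x hx =>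
    ContDiffAt.comp (g := fun q : EuclideanSpace ℝ (Fin d) × ℝ => G q.1 k q.2)
      (f := fun x => (x, ψ k)) x (aux_cd hΩo G hG2 k x hx (ψ k)) (by fun_prop)
  have := aux_null volume hΩo (fun x => G x i (ψ i) - G x j (ψ j))
    (fun x hx => (hc i x hx).sub (hc j x hx)) ?_
  · simpa only [sub_eq_zero, Gam] using this
  · intro x hx h0 h1
    have h4 := (hGx x hx i (ψ i)).hasFDerivAt.sub (hGx x hx j (ψ j)).hasFDerivAt
    have h5 := h4.fderiv
    have h6 := h5.symm.trans h1
    rw [sub_eq_zero] at h6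
    have h7 := (InnerProductSpace.toDual ℝ (EuclideanSpace ℝ (Fin d))).injective h6
    have h8 := hTwist x hx (a₁ := (i, ψ i)) (a₂ := (j, ψ j)) (Prod.ext (sub_eq_zero.1 h0) h7)
    exact hij (congrArg Prod.fst h8)
lemma aux_deriv_pos {N : ℕ} (H : (Fin N → ℝ) → Fin N → ℝ) (ψ : Fin N → ℝ)
    (hH : DifferentiableAt ℝ H ψ) (S : Finset (Fin N)) (κ ε0 : ℝ) (hκ : 0 < κ) (hε0 : 0 < ε0)
    (h : ∀ ε, 0 < ε → ε ≤ ε0 → ∑ i ∈ S, H ψ i + κ * ε ≤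
      ∑ i ∈ S, H (ψ + ε • ∑ j ∈ Sᶜ, Pi.single j 1) i) :
    ∃ i ∈ S, ∃ j ∈ Sᶜ, 0 < fderiv ℝ H ψ (Pi.single j 1) i := by
  set w : Fin N → ℝ := ∑ j ∈ Sᶜ, Pi.single j 1 with hw
  have h1 : HasDerivAt (fun ε : ℝ => H (ψ + ε • w)) (fderiv ℝ H ψ w) 0 := by
    have h2 : HasDerivAt (fun ε : ℝ => ψ + ε • w) w 0 := by
      simpa using ((hasDerivAt_id (0 : ℝ)).smul_const w).const_add ψ
    have h3 : HasFDerivAt H (fderiv ℝ H ψ) (ψ + (0 : ℝ) • w) := by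
      simpa using hH.hasFDerivAt
    exact h3.comp_hasDerivAt (0 : ℝ) h2
  have h2 : HasDerivAt (fun ε : ℝ => ∑ i ∈ S, H (ψ + ε • w) i) (∑ i ∈ S, fderiv ℝ H ψ w i) 0 :=
    HasDerivAt.fun_sum fun i _ => (hasDerivAt_pi.1 h1) i
  have h3 : κ ≤ ∑ i ∈ S, fderiv ℝ H ψ w i := by
    have h4 := (hasDerivAt_iff_tendsto_slope.1 h2).mono_left
      (nhdsWithin_mono 0 (fun x (hx : 0 < x) => hx.ne') : 𝓝[>] (0 : ℝ) ≤ _)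
    apply ge_of_tendsto h4
    filter_upwards [Ioc_mem_nhdsGT hε0] with ε hε
    have h5 := h ε hε.1 hε.2
    rw [slope_def_field, sub_zero, le_div_iff₀ hε.1]
    simp only [zero_smul, add_zero]
    linarith
  by_contra hcon
  push Not at hcon
  have h4 : ∑ i ∈ S, fderiv ℝ H ψ w i ≤ 0 := by
    apply Finset.sum_nonpos
    intro i hi
    rw [hw, map_sum, Finset.sum_apply]
    exact Finset.sum_nonpos fun j hj => hcon i hi j hj
  linarith

lemma aux_Gvbound {d N : ℕ} {Ω : Set (EuclideanSpace ℝ (Fin d))}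
    (G : EuclideanSpace ℝ (Fin d) → Fin N → ℝ → ℝ)
    (Gv : EuclideanSpace ℝ (Fin d) → Fin N → ℝ → ℝ)
    (hGv : ∀ x ∈ Ω, ∀ (i : Fin N) (v : ℝ), HasDerivAt (fun v' => G x i v') (Gv x i v) v)
    (hGvc : ∀ i : Fin N, ContinuousOn (fun q : EuclideanSpace ℝ (Fin d) × ℝ => Gv q.1 i q.2)
      (Ω ×ˢ Set.univ))
    (hMono : ∀ x ∈ Ω, ∀ (i : Fin N) (v : ℝ), Gv x i v < 0)
    (K : Set (EuclideanSpace ℝ (Fin d))) (hK : IsCompact K) (hKΩ : K ⊆ Ω) (ψ : Fin N → ℝ) :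
    ∃ c > 0, ∀ x ∈ K, ∀ j, ∀ ε, 0 ≤ ε → ε ≤ 1 → G x j (ψ j + ε) ≤ G x j (ψ j) - c * ε := by
  have h1 : ∀ j : Fin N, ∃ c > 0, ∀ x ∈ K, ∀ v ∈ Icc (ψ j) (ψ j + 1), Gv x j v ≤ -c := by
    intro j
    have hcomp : IsCompact (K ×ˢ Icc (ψ j) (ψ j + 1)) := hK.prod isCompact_Icc
    have hcont : ContinuousOn (fun q : EuclideanSpace ℝ (Fin d) × ℝ => -Gv q.1 j q.2)
        (K ×ˢ Icc (ψ j) (ψ j + 1)) :=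
      ((hGvc j).mono (prod_mono hKΩ (subset_univ _))).neg
    obtain ⟨c, hc, h⟩ := hcomp.exists_forall_le' hcont (a := 0)
      (fun q hq => neg_pos.2 (hMono _ (hKΩ hq.1) _ _))
    exact ⟨c, hc, fun x hx v hv => by linarith [h (x, v) ⟨hx, hv⟩]⟩
  choose c hc hcb using h1
  obtain ⟨c0, hc0, hcm⟩ : ∃ c0 > 0, ∀ j, c0 ≤ c j := by
    rcases isEmpty_or_nonempty (Fin N) with he | he
    · exact ⟨1, one_pos, fun j => he.elim j⟩
    · obtain ⟨j, hj⟩ := Finite.exists_min c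
      exact ⟨c j, hc j, hj⟩
  refine ⟨c0, hc0, fun x hx j ε h0 h1 => ?_⟩
  have hd : ∀ v, HasDerivAt (fun v' => G x j v') (Gv x j v) v := hGv x (hKΩ hx) j
  have := Convex.image_sub_le_mul_sub_of_deriv_le (convex_Icc (ψ j) (ψ j + 1))
    (f := fun v' => G x j v') (fun v _ => (hd v).continuousAt.continuousWithinAt)
    (fun v _ => (hd v).differentiableAt.differentiableWithinAt) (C := -c0) (fun v hv => by
      rw [(hd v).deriv]
      linarith [hcb j x hx v (interior_subset hv), hcm j]) (ψ j) ⟨le_rfl, by linarith⟩ (ψ j + ε)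
      ⟨by linarith, by linarith⟩ (by linarith)
  linarith

lemma aux_main {d N : ℕ} (hd : 1 ≤ d)
    {Ω : Set (EuclideanSpace ℝ (Fin d))} (hΩo : IsOpen Ω)
    (G : EuclideanSpace ℝ (Fin d) → Fin N → ℝ → ℝ)
    (Gx : EuclideanSpace ℝ (Fin d) → Fin N → ℝ → EuclideanSpace ℝ (Fin d))
    (Gv : EuclideanSpace ℝ (Fin d) → Fin N → ℝ → ℝ)
    (hGx : ∀ x ∈ Ω, ∀ (i : Fin N) (v : ℝ), HasGradientAt (fun x' => G x' i v) (Gx x i v) x)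
    (hGv : ∀ x ∈ Ω, ∀ (i : Fin N) (v : ℝ), HasDerivAt (fun v' => G x i v') (Gv x i v) v)
    (hGvc : ∀ i : Fin N, ContinuousOn (fun q : EuclideanSpace ℝ (Fin d) × ℝ => Gv q.1 i q.2)
      (Ω ×ˢ Set.univ))
    (hG2 : ∀ i : Fin N, ContDiffOn ℝ 2 (fun q : EuclideanSpace ℝ (Fin d) × ℝ => G q.1 i q.2)
      (Ω ×ˢ Set.univ))
    (hReg : ∀ α β : ℝ, α < β → ∃ C : ℝ, ∀ x ∈ Ω, ∀ i : Fin N, ∀ v ∈ Set.Icc α β, ‖Gx x i v‖ ≤ C)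
    (hMono : ∀ x ∈ Ω, ∀ (i : Fin N) (v : ℝ), Gv x i v < 0)
    (hTwist : ∀ x ∈ Ω, Function.Injective fun q : Fin N × ℝ => (G x q.1 q.2, Gx x q.1 q.2))
    {X : Set (EuclideanSpace ℝ (Fin d))} (hXc : IsCompact X) (hXΩ : X ⊆ Ω)
    (ρ : EuclideanSpace ℝ (Fin d) → ℝ) (hρc : Continuous ρ) (hρ0 : ∀ x, 0 ≤ ρ x)
    (hρsupp : tsupport ρ ⊆ X)
    (hGenΩ : ∀ (ψ : Fin N → ℝ) (i j k : Fin N), i ≠ j → i ≠ k → j ≠ k →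
      μH[(d : ℝ) - 1] (Gam Ω G ψ i j ∩ Gam Ω G ψ i k) = 0)
    (hpc : IsPathConnected (interior X ∩ {x | 0 < ρ x}))
    (ψ : Fin N → ℝ) (hψ : ∀ i : Fin N, 0 < Hfun Ω G ρ ψ i)
    (S : Finset (Fin N)) (hS : S.Nonempty) (hSc : Sᶜ.Nonempty) :
    ∃ i ∈ S, ∃ j ∈ Sᶜ, 0 < fderiv ℝ (Hfun Ω G ρ) ψ (Pi.single j 1) i := by
  have hcs : HasCompactSupport ρ := hXc.of_isClosed_subset (isClosed_tsupport _) hρsupp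
  have hdiff := aux_Hdiff hd hΩo G Gx hGx hG2 hTwist hXc hXΩ ρ hρc hρ0 hρsupp hGenΩ ψ
  have hnull := aux_Gam_null hΩo G Gx hGx hG2 hTwist ψ
  have hLm := aux_LagM hΩo G hG2
  set f : Fin N → EuclideanSpace ℝ (Fin d) → ℝ := fun i x => G x i (ψ i) with hf
  have hfc : ∀ i, ContinuousOn (f i) Ω := fun i => aux_cont hΩo G hG2 i (ψ i)
  set gS : EuclideanSpace ℝ (Fin d) → ℝ := fun x => S.sup' hS fun i => f i x with hgS
  set gT : EuclideanSpace ℝ (Fin d) → ℝ := fun x => Sᶜ.sup' hSc fun i => f i x with hgT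
  set g : EuclideanSpace ℝ (Fin d) → ℝ := fun x => gT x - gS x with hg
  have hgc : ContinuousOn g Ω :=
    (ContinuousOn.finset_sup'_apply hSc fun i _ => hfc i).sub
      (ContinuousOn.finset_sup'_apply hS fun i _ => hfc i)
  have hSle : ∀ x, ∀ i ∈ S, f i x ≤ gS x := fun x i hi => Finset.le_sup' (fun i => f i x) hi
  have hTle : ∀ x, ∀ i ∈ Sᶜ, f i x ≤ gT x := fun x i hi => Finset.le_sup' (fun i => f i x) hi
  have hSex : ∀ x, ∃ i ∈ S, gS x = f i x := fun x => Finset.exists_mem_eq_sup' hS _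
  have hTex : ∀ x, ∃ i ∈ Sᶜ, gT x = f i x := fun x => Finset.exists_mem_eq_sup' hSc _
  set μ : Measure (EuclideanSpace ℝ (Fin d)) :=
    volume.withDensity fun x => ENNReal.ofReal (ρ x) with hμ
  have hρm : Measurable fun x => ENNReal.ofReal (ρ x) := by fun_prop
  have hac : μ ≪ volume := withDensity_absolutelyContinuous _ _
  have hfin : IsFiniteMeasure μ := by
    have := (hρc.integrable_of_hasCompactSupport (μ := volume) hcs)
    exact isFiniteMeasure_withDensity_ofReal this.2
  have hZ : volume {x ∈ Ω | g x = 0} = 0 := by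
    refine measure_mono_null (t := ⋃ i ∈ S, ⋃ j ∈ Sᶜ, Gam Ω G ψ i j) ?_ ?_
    · rintro x ⟨hx, h0⟩
      obtain ⟨i, hi, h1⟩ := hSex x
      obtain ⟨j, hj, h2⟩ := hTex x
      simp only [mem_iUnion]
      refine ⟨i, hi, j, hj, hx, ?_⟩
      have : gT x - gS x = 0 := h0
      change f i x = f j x
      linarith
    · refine measure_iUnion_null fun i => measure_iUnion_null fun hi => measure_iUnion_null fun j =>
        measure_iUnion_null fun hj => hnull i j ?_
      rintro rfl
      exact Finset.mem_compl.1 hj hi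
  set U : Set (EuclideanSpace ℝ (Fin d)) := interior X ∩ {x | 0 < ρ x} with hU
  have hUo : IsOpen U := isOpen_interior.inter (isOpen_lt continuous_const hρc)
  have hUΩ : U ⊆ Ω := fun x hx => hXΩ (interior_subset hx.1)
  have hρU : ∀ x, 0 < ρ x → x ∈ U := by
    intro x hx
    refine ⟨?_, hx⟩
    refine mem_interior.2 ⟨{x | 0 < ρ x}, ?_, isOpen_lt continuous_const hρc, hx⟩
    intro z hz
    exact hρsupp (subset_tsupport _ (ne_of_gt hz))
  have hpt : ∀ i, ∃ x ∈ U, x ∈ Lag Ω G ψ i ∧ g x ≠ 0 := by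
    intro i
    have h1 : μ (Lag Ω G ψ i) ≠ 0 := by
      intro h
      have := hψ i
      simp only [Hfun] at this
      rw [← hμ, h] at this
      simp at this
    rw [hμ, Ne, withDensity_apply_eq_zero hρm] at h1
    by_contra hcon
    push Not at hcon
    apply h1
    refine measure_mono_null ?_ hZ
    rintro x ⟨hx1, hx2⟩
    have hx3 : 0 < ρ x := by
      by_contra h
      exact hx1 (ENNReal.ofReal_of_nonpos (not_lt.1 h))
    exact ⟨hx2.1, hcon x (hρU x hx3) hx2⟩
  have hLagS : ∀ i ∈ S, ∀ x ∈ Lag Ω G ψ i, g x ≤ 0 := by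
    intro i hi x hx
    obtain ⟨j, hj, h⟩ := hTex x
    have h1 : f j x ≤ f i x := hx.2 j
    have h2 := hSle x i hi
    change gT x - gS x ≤ 0
    linarith
  have hLagT : ∀ i ∈ Sᶜ, ∀ x ∈ Lag Ω G ψ i, 0 ≤ g x := by
    intro i hi x hx
    obtain ⟨j, hj, h⟩ := hSex x
    have h1 : f j x ≤ f i x := hx.2 j
    have h2 := hTle x i hi
    change 0 ≤ gT x - gS x
    linarith
  obtain ⟨x0, hx0, hfa, hfb⟩ := aux_cut volume hUo hpc.isConnected.isPreconnected g
    (hgc.mono hUΩ) (measure_mono_null (t := {x ∈ Ω | g x = 0}) (fun x hx => ⟨hUΩ hx.1, hx.2⟩) hZ)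
    (by
      obtain ⟨i, hi⟩ := hS
      obtain ⟨x, hxU, hxL, hx⟩ := hpt i
      exact ⟨x, hxU, lt_of_le_of_ne (hLagS i hi x hxL) hx⟩)
    (by
      obtain ⟨i, hi⟩ := hSc
      obtain ⟨x, hxU, hxL, hx⟩ := hpt i
      exact ⟨x, hxU, lt_of_le_of_ne (hLagT i hi x hxL) hx.symm⟩)
  obtain ⟨R, hR, hRU⟩ := Metric.nhds_basis_closedBall.mem_iff.1 (hUo.mem_nhds hx0)
  have hKc : IsCompact (Metric.closedBall x0 R) := isCompact_closedBall _ _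
  have hBK : Metric.ball x0 R ⊆ Metric.closedBall x0 R := Metric.ball_subset_closedBall
  have hBΩ : Metric.ball x0 R ⊆ Ω := (hBK.trans hRU).trans hUΩ
  obtain ⟨a, hga, ha⟩ := (hfa.and_eventually (Metric.ball_mem_nhds x0 hR)).exists
  obtain ⟨b, hgb, hb⟩ := (hfb.and_eventually (Metric.ball_mem_nhds x0 hR)).exists
  obtain ⟨m, hm, hmρ⟩ := hKc.exists_forall_le' hρc.continuousOn (a := 0)
    (fun x hx => (hRU hx).2)
  obtain ⟨c, hc, hcG⟩ := aux_Gvbound G Gv hGv hGvc hMono _ hKc (hRU.trans hUΩ) ψ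
  -- Lipschitz bound
  obtain ⟨C, hC⟩ : ∃ C : ℝ, ∀ x ∈ Ω, ∀ i : Fin N, ‖Gx x i (ψ i)‖ ≤ C := by
    obtain ⟨C, hC⟩ := hReg (-(∑ i, |ψ i|) - 1) ((∑ i, |ψ i|) + 1) (by
      have : 0 ≤ ∑ i, |ψ i| := Finset.sum_nonneg fun i _ => abs_nonneg _
      linarith)
    refine ⟨C, fun x hx i => hC x hx i _ ?_⟩
    have h1 : |ψ i| ≤ ∑ i, |ψ i| :=
      Finset.single_le_sum (f := fun i => |ψ i|) (fun i _ => abs_nonneg _) (Finset.mem_univ i)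
    have h2 := abs_le.1 h1
    constructor <;> linarith [h2.1, h2.2]
  have hflip : ∀ i, LipschitzOnWith C.toNNReal (f i) (Metric.ball x0 R) := by
    intro i
    refine Convex.lipschitzOnWith_of_nnnorm_hasFDerivWithin_le (𝕜 := ℝ)
      (f' := fun x => InnerProductSpace.toDual ℝ _ (Gx x i (ψ i)))
      (fun x hx => (hGx x (hBΩ hx) i (ψ i)).hasFDerivAt.hasFDerivWithinAt) ?_ (convex_ball _ _)
    intro x hx
    rw [← NNReal.coe_le_coe, coe_nnnorm, LinearIsometryEquiv.norm_map]
    exact (hC x (hBΩ hx) i).trans (Real.le_coe_toNNReal C)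
  have hglip : LipschitzOnWith (C.toNNReal + C.toNNReal) g (Metric.ball x0 R) :=
    (aux_sup_lip Sᶜ hSc f _ _ hflip).sub (aux_sup_lip S hS f _ _ hflip)
  obtain ⟨c1, hc1, η0, hη0, hstrip⟩ := aux_strip g x0 a b R _ hglip ha hb hga hgb
  set w : Fin N → ℝ := ∑ j ∈ Sᶜ, Pi.single j 1 with hw
  have hwS : ∀ i ∈ S, w i = 0 := by
    intro i hi
    rw [hw, Finset.sum_apply]
    refine Finset.sum_eq_zero fun j hj => ?_
    refine Pi.single_eq_of_ne ?_ _
    rintro rfl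
    exact Finset.mem_compl.1 hj hi
  have hwT : ∀ i ∈ Sᶜ, w i = 1 := by
    intro i hi
    rw [hw, Finset.sum_apply, Finset.sum_eq_single i]
    · simp
    · intro j _ hj
      exact Pi.single_eq_of_ne hj.symm _
    · exact fun h => absurd hi h
  have hanti : ∀ x ∈ Ω, ∀ j, ∀ ε, 0 ≤ ε → G x j (ψ j + ε) ≤ G x j (ψ j) := by
    intro x hx j ε hε
    have : Antitone (fun v => G x j v) := antitone_of_hasDerivAt_nonpos
      (fun v => hGv x hx j v) (fun v => (hMono x hx j v).le)
    exact this (by linarith)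
  refine aux_deriv_pos (Hfun Ω G ρ) ψ hdiff S (m * (c1 * c)) (min 1 (η0 / c)) (by positivity)
    (by positivity) ?_
  intro ε hε hεm
  have hε1 : ε ≤ 1 := hεm.trans (min_le_left _ _)
  have hε2 : c * ε ≤ η0 := by
    have := hεm.trans (min_le_right _ _)
    rw [le_div_iff₀ hc] at this
    linarith
  set A0 : Set (EuclideanSpace ℝ (Fin d)) := {x ∈ Ω | g x ≤ 0} with hA0
  set T : Set (EuclideanSpace ℝ (Fin d)) := {x ∈ Metric.ball x0 R | 0 < g x ∧ g x ≤ c * ε}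
    with hT
  have hA0m : MeasurableSet A0 := by
    have := aux_measSet hΩo (fun (_ : Unit) x => - g x) (fun _ => hgc.neg)
    have h2 : A0 = {x ∈ Ω | ∀ _ : Unit, 0 ≤ - g x} := by
      ext x
      simp [hA0]
    rw [h2]
    exact this
  have hdisj : Disjoint T A0 := by
    rw [Set.disjoint_left]
    rintro x hx hx'
    exact absurd hx'.2 (not_le.2 hx.2.1)
  have hpS : ∀ i ∈ S, (ψ + ε • w) i = ψ i := by
    intro i hi
    simp [hwS i hi]
  have hpT : ∀ i ∈ Sᶜ, (ψ + ε • w) i = ψ i + ε := by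
    intro i hi
    simp [hwT i hi]
  have hsub : T ∪ A0 ⊆ ⋃ i ∈ S, Lag Ω G (ψ + ε • w) i := by
    have key : ∀ x ∈ Ω, (∀ j ∈ Sᶜ, G x j (ψ j + ε) ≤ gS x) →
        x ∈ ⋃ i ∈ S, Lag Ω G (ψ + ε • w) i := by
      intro x hx h
      obtain ⟨i, hi, h1⟩ := hSex x
      simp only [mem_iUnion]
      refine ⟨i, hi, hx, fun j => ?_⟩
      rw [hpS i hi]
      change _ ≤ f i x
      rw [← h1]
      by_cases hj : j ∈ S
      · rw [hpS j hj]
        exact hSle x j hj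
      · rw [hpT j (Finset.mem_compl.2 hj)]
        exact h j (Finset.mem_compl.2 hj)
    rintro x (⟨hx, h0, h1⟩ | ⟨hx, h0⟩)
    · apply key x (hBΩ hx)
      intro j hj
      have h2 := hcG x (hBK hx) j ε hε.le hε1
      have h3 : G x j (ψ j) ≤ gT x := hTle x j hj
      have h4 : gT x - gS x ≤ c * ε := h1
      linarith
    · apply key x hx
      intro j hj
      have h2 := hanti x hx j ε hε.le
      have h3 : G x j (ψ j) ≤ gT x := hTle x j hj
      have h4 : gT x - gS x ≤ 0 := h0
      linarith
  have hμT : ENNReal.ofReal (m * (c1 * c) * ε) ≤ μ T := by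
    have h1 := hstrip (c * ε) (by positivity) hε2
    have h2 : ENNReal.ofReal m * volume T ≤ μ T := by
      calc ENNReal.ofReal m * volume T = ∫⁻ x in T, ENNReal.ofReal m := by
            rw [setLIntegral_const]
        _ ≤ ∫⁻ x in T, ENNReal.ofReal (ρ x) := by
            refine setLIntegral_mono hρm fun x hx => ?_
            exact ENNReal.ofReal_le_ofReal (hmρ x (hBK hx.1))
        _ ≤ μ T := withDensity_apply_le _ _
    refine le_trans ?_ h2
    have h3 : m * (c1 * c) * ε = m * (c1 * (c * ε)) := by ring
    rw [h3, ENNReal.ofReal_mul hm.le]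
    exact mul_le_mul' le_rfl h1
  have hsum0 : ∑ i ∈ S, μ (Lag Ω G ψ i) ≤ μ A0 := by
    rw [← measure_biUnion_finset₀]
    · refine measure_mono ?_
      intro x hx
      simp only [mem_iUnion] at hx
      obtain ⟨i, hi, hx⟩ := hx
      exact ⟨hx.1, hLagS i hi x hx⟩
    · intro i _ j _ hij
      refine measure_mono_null ?_ (hac (hnull i j hij))
      rintro x ⟨hx1, hx2⟩
      exact ⟨hx1.1, le_antisymm (hx2.2 i) (hx1.2 j)⟩
    · exact fun i _ => (hLm ψ i).nullMeasurableSet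
  have htot : ∑ i ∈ S, μ (Lag Ω G ψ i) + ENNReal.ofReal (m * (c1 * c) * ε) ≤
      ∑ i ∈ S, μ (Lag Ω G (ψ + ε • w) i) := by
    calc _ ≤ μ A0 + μ T := add_le_add hsum0 hμT
      _ = μ (T ∪ A0) := by rw [measure_union hdisj hA0m, add_comm]
      _ ≤ _ := (measure_mono hsub).trans (measure_biUnion_finset_le _ _)
  have h5 := ENNReal.toReal_mono (ENNReal.sum_ne_top.2 fun i _ => measure_ne_top μ _) htot
  rw [ENNReal.toReal_add (ENNReal.sum_ne_top.2 fun i _ => measure_ne_top μ _)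
    ENNReal.ofReal_ne_top, ENNReal.toReal_sum (fun i _ => measure_ne_top μ _),
    ENNReal.toReal_sum (fun i _ => measure_ne_top μ _), ENNReal.toReal_ofReal (by positivity)] at h5
  exact h5
end aux

/-- Lemma 3.6: for `ψ` with all cells of positive mass, the graph whose edges link `i`
and `j` when `∂Hᵢ/∂ψⱼ(ψ) > 0` is connected. -/
theorem graph_connected
    (hd : 1 ≤ d) (hN : 1 ≤ N)
    {Ω : Set (EuclideanSpace ℝ (Fin d))} (hΩo : IsOpen Ω) (hΩb : Bornology.IsBounded Ω)
    (y : Fin N → EuclideanSpace ℝ (Fin d)) (hy : Function.Injective y)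
    (G : EuclideanSpace ℝ (Fin d) → Fin N → ℝ → ℝ)
    (Gx : EuclideanSpace ℝ (Fin d) → Fin N → ℝ → EuclideanSpace ℝ (Fin d))
    (Gv : EuclideanSpace ℝ (Fin d) → Fin N → ℝ → ℝ)
    (hGx : ∀ x ∈ Ω, ∀ (i : Fin N) (v : ℝ), HasGradientAt (fun x' => G x' i v) (Gx x i v) x)
    (hGv : ∀ x ∈ Ω, ∀ (i : Fin N) (v : ℝ), HasDerivAt (fun v' => G x i v') (Gv x i v) v)
    (hGxc : ∀ i : Fin N, ContinuousOn (fun q : EuclideanSpace ℝ (Fin d) × ℝ => Gx q.1 i q.2) (Ω ×ˢ Set.univ))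
    (hGvc : ∀ i : Fin N, ContinuousOn (fun q : EuclideanSpace ℝ (Fin d) × ℝ => Gv q.1 i q.2) (Ω ×ˢ Set.univ))
    (hG2 : ∀ i : Fin N, ContDiffOn ℝ 2 (fun q : EuclideanSpace ℝ (Fin d) × ℝ => G q.1 i q.2) (Ω ×ˢ Set.univ))
    (hReg : ∀ α β : ℝ, α < β → ∃ C : ℝ, ∀ x ∈ Ω, ∀ i : Fin N, ∀ v ∈ Set.Icc α β, ‖Gx x i v‖ ≤ C)
    (hMono : ∀ x ∈ Ω, ∀ (i : Fin N) (v : ℝ), Gv x i v < 0)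
    (hTwist : ∀ x ∈ Ω, Function.Injective fun q : Fin N × ℝ => (G x q.1 q.2, Gx x q.1 q.2))
    {X : Set (EuclideanSpace ℝ (Fin d))} (hXc : IsCompact X) (hXΩ : X ⊆ Ω)
    (ρ : EuclideanSpace ℝ (Fin d) → ℝ) (hρc : Continuous ρ) (hρ0 : ∀ x, 0 ≤ ρ x)
    (hρsupp : tsupport ρ ⊆ X) (hρ1 : (∫ x, ρ x) = 1)
    (hGenΩ : ∀ (ψ : Fin N → ℝ) (i j k : Fin N), i ≠ j → i ≠ k → j ≠ k →
      μH[(d : ℝ) - 1] (Gam Ω G ψ i j ∩ Gam Ω G ψ i k) = 0)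
    (hGenX : ∀ (ψ : Fin N → ℝ) (i j : Fin N), i ≠ j →
      μH[(d : ℝ) - 1] (Gam Ω G ψ i j ∩ frontier X) = 0)
    (hpc : IsPathConnected (interior X ∩ {x | 0 < ρ x}))
    (ψ : Fin N → ℝ) (hψ : ∀ i : Fin N, 0 < Hfun Ω G ρ ψ i) :
    (SimpleGraph.fromRel fun i j : Fin N =>
      0 < fderiv ℝ (Hfun Ω G ρ) ψ (Pi.single j 1) i).Connected := by
  classical
  have hne : Nonempty (Fin N) := ⟨⟨0, by omega⟩⟩
  rw [SimpleGraph.connected_iff]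
  refine ⟨?_, hne⟩
  intro i0 j0
  by_contra hcon
  set Gr := SimpleGraph.fromRel fun i j : Fin N =>
      0 < fderiv ℝ (Hfun Ω G ρ) ψ (Pi.single j 1) i with hGr
  let S : Finset (Fin N) := Finset.univ.filter fun j => Gr.Reachable i0 j
  obtain ⟨i, hi, j, hj, hij⟩ := aux_main hd hΩo G Gx Gv hGx hGv hGvc hG2 hReg hMono hTwist hXc hXΩ
    ρ hρc hρ0 hρsupp hGenΩ hpc ψ hψ S ⟨i0, by simp [S]⟩ ⟨j0, by simpa [S] using hcon⟩
  have hi' : Gr.Reachable i0 i := by simpa [S] using hi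
  have hj' : ¬ Gr.Reachable i0 j := by simpa [S] using hj
  apply hj'
  refine hi'.trans (SimpleGraph.Adj.reachable ?_)
  rw [hGr, SimpleGraph.fromRel_adj]
  refine ⟨?_, Or.inl hij⟩
  rintro rfl
  exact hj' hi'
end
end
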